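/- arXiv:2202.06392 — 2 statements merged into one kernel-verified Lean document; each statement's English description precedes it below -/
import Mathlib

section
/- Let d ≥ 3 be an integer, r > 0, n > 0, P ∈ Π_n^d, and let ν be a quadrature measure of order 2(d+2)n on S^d. Then σ_{d;n,r}(ν, P) = P and σ̃_{d;n,r}(ν, P) = P identically on S^d. -/
noncomputable section

open MeasureTheory Real Set
open scoped RealInnerProductSpace

/-- Value at `x` of the orthonormalized Jacobi polynomial `p_n^{(α,β)}`. -/
def jacobiP (α β : ℝ) (n : ℕ) (x : ℝ) : ℝ :=
  Real.sqrt ((2 * (n : ℝ) + α + β + 1) / 2 ^ (α + β + 1) *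
      (Real.Gamma ((n : ℝ) + α + β + 1) * (n.factorial : ℝ) /
        (Real.Gamma ((n : ℝ) + α + 1) * Real.Gamma ((n : ℝ) + β + 1)))) *
    (Real.Gamma (α + n + 1) / ((n.factorial : ℝ) * Real.Gamma (α + β + n + 1))) *
    ∑ m ∈ Finset.range (n + 1),
      (n.choose m : ℝ) * (Real.Gamma (α + β + n + m + 1) / Real.Gamma (α + m + 1)) *
        ((x - 1) / 2) ^ m

/-- The kernel `K_n^{(α,β)}(x) = Σ_{ℓ<n} p_ℓ^{(α,β)}(1) p_ℓ^{(α,β)}(x)`. -/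
def jacobiK (α β : ℝ) (n : ℕ) (x : ℝ) : ℝ :=
  ∑ ℓ ∈ Finset.range n, jacobiP α β ℓ 1 * jacobiP α β ℓ x

/-- The unit sphere `S^d ⊂ ℝ^{d+1}`. -/
abbrev Sph (d : ℕ) := Metric.sphere (0 : EuclideanSpace ℝ (Fin (d + 1))) 1

/-- The rotation invariant Riemannian volume probability measure `μ_d^*` on `S^d`. -/
def sphMeasure (d : ℕ) : Measure (Sph d) :=
  ((volume : Measure (EuclideanSpace ℝ (Fin (d + 1)))).toSphere Set.univ)⁻¹ •
    (volume : Measure (EuclideanSpace ℝ (Fin (d + 1)))).toSphere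

/-- `f : S^d → ℝ` is the restriction to the sphere of an algebraic polynomial in `d+1`
variables of total degree `< n`, i.e. `f ∈ Π_n^d`. -/
def IsSphPoly (d : ℕ) (n : ℝ) (f : Sph d → ℝ) : Prop :=
  ∃ p : MvPolynomial (Fin (d + 1)) ℝ, (p.totalDegree : ℝ) < n ∧
    ∀ y : Sph d, f y = MvPolynomial.eval (fun i => (y : EuclideanSpace ℝ (Fin (d + 1))) i) p

/-- Integral of `f` with respect to a signed measure (via the Jordan decomposition). -/
def sInt {X : Type*} [MeasurableSpace X] (ν : SignedMeasure X) (f : X → ℝ) : ℝ :=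
  (∫ x, f x ∂ν.toJordanDecomposition.posPart) - ∫ x, f x ∂ν.toJordanDecomposition.negPart

/-- Integral of `f` over a set `s` with respect to a signed measure. -/
def sIntOn {X : Type*} [MeasurableSpace X] (ν : SignedMeasure X) (s : Set X) (f : X → ℝ) : ℝ :=
  (∫ x in s, f x ∂ν.toJordanDecomposition.posPart) -
    ∫ x in s, f x ∂ν.toJordanDecomposition.negPart

/-- `ν` is a quadrature measure of order `n` on `S^d`. -/
def IsQuadrature (d : ℕ) (n : ℝ) (ν : SignedMeasure (Sph d)) : Prop :=
  ∀ f : Sph d → ℝ, IsSphPoly d n f → sInt ν f = ∫ y, f y ∂sphMeasure d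

/-- `ν` satisfies the Marcinkiewicz-Zygmund inequality of order `n` with constant `c`;
`ν ∈ MZ(d;n)` means this holds for some `c`, and `|||ν|||_{d;n}` is the least such `c`. -/
def IsMZ (d : ℕ) (n : ℝ) (ν : SignedMeasure (Sph d)) (c : ℝ) : Prop :=
  ∀ f : Sph d → ℝ, IsSphPoly d (n / 2) f →
    (∫ y, (f y) ^ 2 ∂ν.totalVariation) ≤ c * ∫ y, (f y) ^ 2 ∂sphMeasure d

/-- `ω_d`, the volume of `S^d`. -/
def omegaS (d : ℕ) : ℝ := 2 * Real.pi ^ (((d : ℝ) + 1) / 2) / Real.Gamma (((d : ℝ) + 1) / 2)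

/-- The reproducing kernel `K_{d;n}` of `Π_n^d`. -/
def sphK (d n : ℕ) (x : ℝ) : ℝ :=
  (omegaS d / omegaS (d - 1)) * jacobiK ((d : ℝ) / 2 - 1) ((d : ℝ) / 2 - 1) n x

/-- The kernel `Φ̃_{d;n,r}`. -/
def PhiTilde (d n : ℕ) (r : ℝ) (x : ℝ) : ℝ :=
  sphK d ((d + 2) * n) x *
    (jacobiP ((d : ℝ) / 2 + r) ((d : ℝ) / 2 - 2) (d * n) x /
      jacobiP ((d : ℝ) / 2 + r) ((d : ℝ) / 2 - 2) (d * n) 1)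

/-- The kernel `Φ_{d;n,r}`. -/
def Phi (d n : ℕ) (r : ℝ) (x : ℝ) : ℝ := PhiTilde d n r x * ((1 + x) / 2) ^ n

/-- The inner product `x·y` of two points of `S^d`. -/
def ip {d : ℕ} (x y : Sph d) : ℝ :=
  ⟪(x : EuclideanSpace ℝ (Fin (d + 1))), (y : EuclideanSpace ℝ (Fin (d + 1)))⟫

/-- The operator `σ_{d;n,r}(ν, f)`. -/
def sigmaOp (d n : ℕ) (r : ℝ) (ν : SignedMeasure (Sph d)) (f : Sph d → ℝ) (x : Sph d) : ℝ :=
  sInt ν (fun y => f y * Phi d n r (ip x y))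

/-- The operator `σ̃_{d;n,r}(ν, f)`. -/
def sigmaTildeOp (d n : ℕ) (r : ℝ) (ν : SignedMeasure (Sph d)) (f : Sph d → ℝ) (x : Sph d) : ℝ :=
  sInt ν (fun y => f y * PhiTilde d n r (ip x y))

/-- The uniform (supremum) norm `‖f‖_∞`. -/
def supNorm {X : Type*} (f : X → ℝ) : ℝ := sSup (Set.range fun x => |f x|)

/-- `E_{d;n}(f)`, the degree of approximation of `f` from `Π_n^d` in the uniform norm. -/
def bestApprox (d : ℕ) (n : ℝ) (f : Sph d → ℝ) : ℝ :=
  sInf {t | ∃ g, IsSphPoly d n g ∧ ∀ y, |f y - g y| ≤ t}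

/-- `dim Π_n^d = (2n+d−2)·Γ(n+d−1)/(Γ(n)·Γ(d+1))` (for `n ≥ 2`). -/
def dimPi (d n : ℕ) : ℝ :=
  (2 * (n : ℝ) + d - 2) * Real.Gamma ((n : ℝ) + d - 1) /
    (Real.Gamma n * Real.Gamma ((d : ℝ) + 1))

section SRalg

open Polynomial

/-- Alternating binomial sums kill polynomials of low degree. -/
lemma SR_alt (L : ℕ) (q : ℝ[X]) (hq : q.natDegree < L) :
    ∑ m ∈ Finset.range (L + 1), (-1 : ℝ) ^ m * (L.choose m : ℝ) * q.eval (m : ℝ) = 0 := by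
  have h := congrFun (Polynomial.fwdDiff_iter_eq_zero_of_degree_lt hq) 0
  rw [fwdDiff_iter_eq_sum_shift] at h
  simp only [zero_add, nsmul_eq_mul, mul_one, Pi.zero_apply, zsmul_eq_mul] at h
  have h2 : (-1 : ℝ) ^ L * ∑ m ∈ Finset.range (L + 1),
      (((-1 : ℤ) ^ (L - m) * (L.choose m : ℤ) : ℤ) : ℝ) * q.eval (m : ℝ) = 0 := by
    rw [h, mul_zero]
  rw [Finset.mul_sum] at h2
  rw [← h2]
  refine Finset.sum_congr rfl fun m hm => ?_
  have hm' : m ≤ L := by simpa [Nat.lt_succ_iff] using hm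
  obtain ⟨k, rfl⟩ := Nat.exists_eq_add_of_le hm'
  push_cast
  rw [Nat.add_sub_cancel_left, pow_add]
  have : ((-1 : ℝ) ^ k) * (-1) ^ k = 1 := by rw [← mul_pow]; norm_num
  linear_combination (-(-1 : ℝ) ^ m * ((m + k).choose m : ℝ) * q.eval (m : ℝ)) * this

lemma SR_alt_fact (L a k : ℕ) (hk : k < L) :
    ∑ m ∈ Finset.range (L + 1), (-1 : ℝ) ^ m * (L.choose m : ℝ) *
      (((a + k + m).factorial : ℝ) / ((a + m).factorial : ℝ)) = 0 := by
  have h := SR_alt L ((ascPochhammer ℝ k).comp (X + C ((a : ℝ) + 1))) (by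
    rw [natDegree_comp, ascPochhammer_natDegree, natDegree_X_add_C]; omega)
  rw [← h]
  refine Finset.sum_congr rfl fun m _ => ?_
  congr 1
  have h1 : ((a + m + 1 : ℕ) : ℝ) = (m : ℝ) + ((a : ℝ) + 1) := by push_cast; ring
  rw [eval_comp, eval_add, eval_X, eval_C, ← h1, ascPochhammer_nat_eq_natCast_ascFactorial]
  rw [div_eq_iff (by positivity)]
  have := Nat.factorial_mul_ascFactorial (a + m) k
  rw [show a + k + m = a + m + k by ring, ← this]
  push_cast; ring

variable (M : ℝ[X] →ₗ[ℝ] ℝ) (lam : ℝ)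

lemma SR_rec_aux
    (hM : ∀ g : ℝ[X], M ((1 - X ^ 2) * derivative g - C lam * (X * g)) = 0) (i j : ℕ) :
    M ((1 - X) ^ i * (1 + X) ^ (j + 1)) * (i + lam / 2) =
      M ((1 - X) ^ (i + 1) * (1 + X) ^ j) * (j + lam / 2) := by
  have h := hM ((1 - X) ^ i * (1 + X) ^ j)
  have e : (1 - X ^ 2) * derivative ((1 - X : ℝ[X]) ^ i * (1 + X) ^ j)
      - C lam * (X * ((1 - X) ^ i * (1 + X) ^ j)) =
      ((j : ℝ) + lam / 2) • ((1 - X) ^ (i + 1) * (1 + X) ^ j) -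
      ((i : ℝ) + lam / 2) • ((1 - X) ^ i * (1 + X) ^ (j + 1)) := by
    have hi : (1 - X : ℝ[X]) * derivative ((1 - X : ℝ[X]) ^ i) = - C (i : ℝ) * (1 - X) ^ i := by
      cases i with
      | zero => simp
      | succ i => rw [derivative_pow]; simp; ring
    have hj : (1 + X : ℝ[X]) * derivative ((1 + X : ℝ[X]) ^ j) = C (j : ℝ) * (1 + X) ^ j := by
      cases j with
      | zero => simp
      | succ j => rw [derivative_pow]; simp; ring
    have hl : C lam = C (lam / 2) + C (lam / 2) := by rw [← C_add]; congr 1; ring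
    rw [derivative_mul]
    simp only [smul_eq_C_mul, C_add, hl]
    linear_combination (1 + X) * (1 + X) ^ j * hi + (1 - X) * (1 - X) ^ i * hj
  rw [e, map_sub, map_smul, map_smul] at h
  simp only [smul_eq_mul] at h
  linarith

lemma SR_rec_left
    (hM : ∀ g : ℝ[X], M ((1 - X ^ 2) * derivative g - C lam * (X * g)) = 0) (i j : ℕ) :
    M ((1 - X) ^ (i + 1) * (1 + X) ^ j) * (i + j + lam) =
      2 * (i + lam / 2) * M ((1 - X) ^ i * (1 + X) ^ j) := by
  have h := SR_rec_aux M lam hM i j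
  have e : (1 - X : ℝ[X]) ^ (i + 1) * (1 + X) ^ j + (1 - X) ^ i * (1 + X) ^ (j + 1) =
      (2 : ℝ) • ((1 - X) ^ i * (1 + X) ^ j) := by
    rw [smul_eq_C_mul]; simp only [map_ofNat]; ring
  have h2 := congrArg M e
  rw [map_add, map_smul, smul_eq_mul] at h2
  linear_combination (i + lam / 2) * h2 - h

lemma SR_rec_right
    (hM : ∀ g : ℝ[X], M ((1 - X ^ 2) * derivative g - C lam * (X * g)) = 0) (i j : ℕ) :
    M ((1 - X) ^ i * (1 + X) ^ (j + 1)) * (i + j + lam) =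
      2 * (j + lam / 2) * M ((1 - X) ^ i * (1 + X) ^ j) := by
  have h := SR_rec_aux M lam hM i j
  have e : (1 - X : ℝ[X]) ^ (i + 1) * (1 + X) ^ j + (1 - X) ^ i * (1 + X) ^ (j + 1) =
      (2 : ℝ) • ((1 - X) ^ i * (1 + X) ^ j) := by
    rw [smul_eq_C_mul]; simp only [map_ofNat]; ring
  have h2 := congrArg M e
  rw [map_add, map_smul, smul_eq_mul] at h2
  linear_combination (j + lam / 2) * h2 + h

/-- The Jacobi-type moments of the functional. -/
lemma SR_moment (d : ℕ) (hd : 0 < d)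
    (hM : ∀ g : ℝ[X], M ((1 - X ^ 2) * derivative g - C (d : ℝ) * (X * g)) = 0) (i j : ℕ) :
    M ((1 - X) ^ i * (1 + X) ^ j) =
      2 ^ (i + j) * (Gamma ((d : ℝ) / 2 + i) * Gamma ((d : ℝ) / 2 + j)) /
        (Gamma ((d : ℝ) / 2) ^ 2 * ((d - 1 + i + j).factorial : ℝ)) *
        ((d - 1).factorial * M 1) := by
  have hd' : (0 : ℝ) < d := by exact_mod_cast hd
  have hG : 0 < Gamma ((d : ℝ) / 2) := Gamma_pos_of_pos (by positivity)
  induction i with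
  | zero =>
    induction j with
    | zero => simp; field_simp
    | succ j ih =>
      have h := SR_rec_right M d hM 0 j
      rw [ih] at h
      have hpos : (0 : ℝ) < ((0 : ℕ) : ℝ) + j + d := by positivity
      rw [← eq_div_iff hpos.ne'] at h
      rw [h]
      have e1 : Gamma ((d : ℝ) / 2 + (j + 1 : ℕ)) = ((d : ℝ) / 2 + j) * Gamma ((d : ℝ) / 2 + j) := by
        rw [← Gamma_add_one (by positivity)]; congr 1; push_cast; ring
      have e2 : ((d - 1 + 0 + (j + 1)).factorial : ℝ) =
          ((j : ℝ) + d) * ((d - 1 + 0 + j).factorial : ℝ) := by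
        rw [← add_assoc, Nat.factorial_succ]
        have : ((d - 1 + 0 + j + 1 : ℕ) : ℝ) = (j : ℝ) + d := by
          rw [show d - 1 + 0 + j + 1 = j + d by omega]; push_cast; ring
        rw [Nat.cast_mul, this]
      rw [e1, e2, ← add_assoc, pow_succ]
      have : (0:ℝ) < (j : ℝ) + d := by positivity
      simp only [Nat.cast_zero, zero_add]
      field_simp
      ring
  | succ i ih =>
      have h := SR_rec_left M d hM i j
      rw [ih] at h
      have hpos : (0 : ℝ) < (i : ℝ) + j + d := by positivity
      rw [← eq_div_iff hpos.ne'] at h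
      rw [h]
      have e1 : Gamma ((d : ℝ) / 2 + (i + 1 : ℕ)) = ((d : ℝ) / 2 + i) * Gamma ((d : ℝ) / 2 + i) := by
        rw [← Gamma_add_one (by positivity)]; congr 1; push_cast; ring
      have e2 : ((d - 1 + (i + 1) + j).factorial : ℝ) =
          ((i : ℝ) + j + d) * ((d - 1 + i + j).factorial : ℝ) := by
        rw [show d - 1 + (i + 1) + j = d - 1 + i + j + 1 by ring, Nat.factorial_succ]
        have : ((d - 1 + i + j + 1 : ℕ) : ℝ) = (i : ℝ) + j + d := by
          rw [show d - 1 + i + j + 1 = i + j + d by omega]; push_cast; ring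
        rw [Nat.cast_mul, this]
      rw [e1, e2, show i + 1 + j = i + j + 1 by ring, pow_succ]
      field_simp
      ring

/-- A functional satisfying the first order relation is determined by its value at `1`. -/
lemma SR_unique (hl : 0 < lam)
    (hM : ∀ g : ℝ[X], M ((1 - X ^ 2) * derivative g - C lam * (X * g)) = 0) (h1 : M 1 = 0) :
    M = 0 := by
  have key : ∀ k : ℕ, M (X ^ k) = 0 ∧ M (X ^ (k + 1)) = 0 := by
    intro k
    induction k with
    | zero =>
      refine ⟨by simpa using h1, ?_⟩
      have h := hM 1
      have e : (1 - X ^ 2) * derivative (1 : ℝ[X]) - C lam * (X * 1) = (-lam) • X := by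
        rw [smul_eq_C_mul]; simp
      rw [e, map_smul, smul_eq_mul] at h
      simpa [hl.ne'] using h
    | succ k ih =>
      refine ⟨ih.2, ?_⟩
      have h := hM (X ^ (k + 1))
      have e : (1 - X ^ 2) * derivative ((X : ℝ[X]) ^ (k + 1)) - C lam * (X * X ^ (k + 1)) =
          ((k : ℝ) + 1) • X ^ k - ((k : ℝ) + 1 + lam) • X ^ (k + 2) := by
        rw [derivative_X_pow]
        simp only [smul_eq_C_mul, C_add, Nat.cast_add, Nat.cast_one, C_1, map_natCast,
          Nat.add_sub_cancel]
        ring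
      rw [e, map_sub, map_smul, map_smul, ih.1, smul_zero, zero_sub, neg_eq_zero,
        smul_eq_mul] at h
      have : (k : ℝ) + 1 + lam ≠ 0 := by positivity
      exact (mul_eq_zero.mp h).resolve_left this
  ext k
  simpa [monomial_one_right_eq_X_pow] using (key k).1

/-- coefficients of the (renormalized) Gegenbauer polynomial -/
def SRq (d l : ℕ) : ℝ[X] :=
  ∑ m ∈ Finset.range (l + 1),
    C ((l.choose m : ℝ) * ((d - 2 + l + m).factorial : ℝ) /
      ((l.factorial : ℝ) * Gamma ((d : ℝ) / 2 + m))) * (C (1 / 2) * (X - 1)) ^ m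

/-- reproducing kernel as a polynomial -/
def SRK (d N : ℕ) : ℝ[X] :=
  ∑ l ∈ Finset.range N, C (Gamma ((d : ℝ) / 2) / ((d - 1).factorial : ℝ) *
    (2 * (l : ℝ) + d - 1)) * SRq d l

lemma SR_CD (d : ℕ) (hd : 2 ≤ d) (L : ℕ) :
    ∑ l ∈ Finset.range (L + 1), C (2 * (l : ℝ) + d - 1) * SRq d l =
    ∑ m ∈ Finset.range (L + 1),
      C (((d : ℝ) / 2 + L) * (L.choose m : ℝ) * ((d - 1 + L + m).factorial : ℝ) /
      ((L.factorial : ℝ) * Gamma ((d : ℝ) / 2 + m + 1))) * (C (1 / 2) * (X - 1)) ^ m := by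
  have hd' : (2 : ℝ) ≤ d := by exact_mod_cast hd
  have hG : ∀ m : ℕ, 0 < Gamma ((d : ℝ) / 2 + m) := fun m => Gamma_pos_of_pos (by positivity)
  have hG1 : ∀ m : ℕ, Gamma ((d : ℝ) / 2 + m + 1) = ((d : ℝ) / 2 + m) * Gamma ((d : ℝ) / 2 + m) :=
    fun m => Gamma_add_one (by positivity)
  have hf : ∀ k : ℕ, ((d - 1 + k).factorial : ℝ) = ((d : ℝ) - 1 + k) * ((d - 2 + k).factorial : ℝ) := by
    intro k
    have : ((d - 2 + k + 1 : ℕ) : ℝ) = (d : ℝ) - 1 + k := by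
      rw [show d - 2 + k + 1 = d - 1 + k by omega]; push_cast [Nat.cast_sub (show 1 ≤ d by omega)]; ring
    rw [show d - 1 + k = d - 2 + k + 1 by omega, Nat.factorial_succ, Nat.cast_mul, this]
  induction L with
  | zero =>
    simp only [zero_add, Finset.range_one, Finset.sum_singleton, SRq]
    simp only [pow_zero, mul_one, ← C_mul]
    congr 1
    rw [hG1 0]
    have := hG 0
    have h2 := hf 0
    simp only [add_zero, Nat.choose_self, Nat.factorial_zero, Nat.cast_one, Nat.cast_zero, one_mul, mul_one, mul_zero, zero_add] at *
    rw [h2]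
    field_simp
  | succ L ih =>
    rw [Finset.sum_range_succ, ih, SRq]
    have e : ∑ m ∈ Finset.range (L + 1),
      C (((d : ℝ) / 2 + L) * (L.choose m : ℝ) * ((d - 1 + L + m).factorial : ℝ) /
        ((L.factorial : ℝ) * Gamma ((d : ℝ) / 2 + m + 1))) * (C (1 / 2) * (X - 1)) ^ m =
      ∑ m ∈ Finset.range (L + 1 + 1),
      C (((d : ℝ) / 2 + L) * (L.choose m : ℝ) * ((d - 1 + L + m).factorial : ℝ) /
        ((L.factorial : ℝ) * Gamma ((d : ℝ) / 2 + m + 1))) * (C (1 / 2) * (X - 1)) ^ m := by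
      rw [Finset.sum_range_succ _ (L + 1)]
      simp [Nat.choose_succ_self]
    rw [e, Finset.mul_sum, ← Finset.sum_add_distrib]
    refine Finset.sum_congr rfl fun m hm => ?_
    have hm' : m ≤ L + 1 := by simpa [Nat.lt_succ_iff] using hm
    rw [← mul_assoc, ← C_mul, ← add_mul, ← C_add]
    congr 2
    have hch : (L.choose m : ℝ) * (L + 1) = ((L + 1).choose m : ℝ) * ((L : ℝ) + 1 - m) := by
      have := Nat.choose_mul_succ_eq L m
      have h2 := congrArg (Nat.cast : ℕ → ℝ) this
      push_cast [Nat.cast_sub hm'] at h2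
      exact h2
    have hch' : (L.choose m : ℝ) = ((L + 1).choose m : ℝ) * ((L : ℝ) + 1 - m) / (L + 1) := by
      rw [← hch]; field_simp
    rw [hG1, hch']
    rw [show d - 1 + (L + 1) + m = d - 1 + (L + 1 + m) by ring, hf,
      show d - 2 + (L + 1 + m) = d - 1 + L + m by omega,
      show d - 2 + (L + 1) + m = d - 1 + L + m by omega, Nat.factorial_succ]
    have := hG m
    have : (0:ℝ) < L + 1 := by positivity
    have : (0:ℝ) < (d : ℝ) / 2 + m := by positivity
    push_cast
    field_simp
    ring

lemma SR_U (m : ℕ) : (C (1 / 2 : ℝ) * (X - 1)) ^ m = C ((-1) ^ m / 2 ^ m : ℝ) * (1 - X) ^ m := by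
  rw [show (C (1 / 2 : ℝ) * (X - 1)) = C (-1 / 2 : ℝ) * (1 - X) by
    rw [neg_div, C_neg]; ring, mul_pow, ← C_pow, div_pow]

variable {M}

lemma SR_q_zero (d : ℕ) (hd : 2 ≤ d)
    (hM : ∀ g : ℝ[X], M ((1 - X ^ 2) * derivative g - C (d : ℝ) * (X * g)) = 0)
    (l : ℕ) (hl : 0 < l) : M (SRq d l) = 0 := by
  have hG : ∀ m : ℕ, 0 < Gamma ((d : ℝ) / 2 + m) := fun m => Gamma_pos_of_pos (by positivity)
  have h := SR_alt_fact l (d - 1) (l - 1) (by omega)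
  rw [SRq, map_sum]
  have h2 : (Gamma ((d : ℝ) / 2) / Gamma ((d : ℝ) / 2) ^ 2 * ((d - 1).factorial * M 1) / l.factorial) *
      ∑ m ∈ Finset.range (l + 1), (-1 : ℝ) ^ m * (l.choose m : ℝ) *
      (((d - 1 + (l - 1) + m).factorial : ℝ) / ((d - 1 + m).factorial : ℝ)) = 0 := by
    rw [h, mul_zero]
  rw [← h2, Finset.mul_sum]
  refine Finset.sum_congr rfl fun m _ => ?_
  rw [SR_U, ← mul_assoc, ← C_mul, ← smul_eq_C_mul, map_smul, smul_eq_mul]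
  have h3 := SR_moment M d (by omega) hM m 0
  simp only [pow_zero, mul_one, add_zero, Nat.cast_zero] at h3
  rw [h3, show d - 1 + (l - 1) + m = d - 2 + l + m by omega]
  have := hG m
  have := hG 0
  simp only [Nat.cast_zero, add_zero] at this
  field_simp

lemma SR_CD_zero (d : ℕ) (hd : 2 ≤ d)
    (hM : ∀ g : ℝ[X], M ((1 - X ^ 2) * derivative g - C (d : ℝ) * (X * g)) = 0)
    (L j : ℕ) (hj : j < L) :
    M ((∑ l ∈ Finset.range (L + 1), C (2 * (l : ℝ) + d - 1) * SRq d l) *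
      ((1 - X) * (1 + X) ^ j)) = 0 := by
  have hG : ∀ m : ℕ, 0 < Gamma ((d : ℝ) / 2 + m) := fun m => Gamma_pos_of_pos (by positivity)
  have h := SR_alt_fact L (d + j) (L - 1 - j) (by omega)
  rw [SR_CD d hd, Finset.sum_mul, map_sum]
  have h2 : (((d : ℝ) / 2 + L) * 2 ^ (1 + j) * Gamma ((d : ℝ) / 2 + j) / Gamma ((d : ℝ) / 2) ^ 2 *
        ((d - 1).factorial * M 1) / L.factorial) *
      ∑ m ∈ Finset.range (L + 1), (-1 : ℝ) ^ m * (L.choose m : ℝ) *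
      (((d + j + (L - 1 - j) + m).factorial : ℝ) / ((d + j + m).factorial : ℝ)) = 0 := by
    rw [h, mul_zero]
  rw [← h2, Finset.mul_sum]
  refine Finset.sum_congr rfl fun m _ => ?_
  rw [SR_U, ← mul_assoc (C _) (C _), ← C_mul, mul_assoc, ← smul_eq_C_mul, map_smul, smul_eq_mul,
    ← mul_assoc ((1 - X) ^ m), ← pow_succ]
  rw [SR_moment M d (by omega) hM (m + 1) j,
    show d + j + (L - 1 - j) + m = d - 1 + L + m by omega,
    show d - 1 + (m + 1) + j = d + j + m by omega,
    show (d : ℝ) / 2 + (m + 1 : ℕ) = (d : ℝ) / 2 + m + 1 by push_cast; ring]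
  have h5 : 0 < Gamma ((d : ℝ) / 2 + m + 1) := by
    have := hG (m + 1)
    rwa [show (d : ℝ) / 2 + (m + 1 : ℕ) = (d : ℝ) / 2 + m + 1 by push_cast; ring] at this
  have := hG 0
  simp only [Nat.cast_zero, add_zero] at this
  rw [show m + 1 + j = m + (1 + j) by ring, pow_add 2 m]
  field_simp

lemma SRK_eq (d N : ℕ) : SRK d N = C (Gamma ((d : ℝ) / 2) / ((d - 1).factorial : ℝ)) *
    ∑ l ∈ Finset.range N, C (2 * (l : ℝ) + d - 1) * SRq d l := by
  rw [SRK, Finset.mul_sum]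
  refine Finset.sum_congr rfl fun l _ => ?_
  rw [C_mul, mul_assoc]

lemma SR_K_one (d : ℕ) (hd : 2 ≤ d)
    (hM : ∀ g : ℝ[X], M ((1 - X ^ 2) * derivative g - C (d : ℝ) * (X * g)) = 0)
    (N : ℕ) : M (SRK d (N + 1)) = M 1 := by
  induction N with
  | zero =>
    have hG : 0 < Gamma ((d : ℝ) / 2) := Gamma_pos_of_pos (by positivity)
    have e : SRK d (0 + 1) = 1 := by
      simp only [SRK, SRq, zero_add, Finset.range_one, Finset.sum_singleton, pow_zero, mul_one,
        ← C_mul]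
      rw [← C_1]
      congr 1
      obtain ⟨k, rfl⟩ := Nat.exists_eq_add_of_le hd
      simp only [Nat.choose_self, Nat.factorial_zero, Nat.cast_one, add_zero, Nat.cast_zero] at *
      rw [show 2 + k - 1 = k + 1 by omega, show 2 + k - 2 = k by omega, Nat.factorial_succ]
      push_cast at *
      field_simp
      ring
    rw [e]
  | succ N ih =>
    rw [SRK, Finset.sum_range_succ, map_add, ← SRK, ih, ← smul_eq_C_mul, map_smul,
      SR_q_zero d hd hM _ (by omega), smul_zero, add_zero]

/-- Reproducing property in one variable. -/
lemma SR_repr (d : ℕ) (hd : 2 ≤ d)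
    (hM : ∀ g : ℝ[X], M ((1 - X ^ 2) * derivative g - C (d : ℝ) * (X * g)) = 0)
    (N : ℕ) (g : ℝ[X]) (hg : g.natDegree < N) : M (SRK d N * g) = g.eval 1 * M 1 := by
  obtain ⟨L, rfl⟩ : ∃ L, N = L + 1 := ⟨N - 1, by omega⟩
  -- vanishing on multiples of `1 - X`
  have key : ∀ h : ℝ[X], h.natDegree < L → M (SRK d (L + 1) * ((1 - X) * h)) = 0 := by
    intro h hh
    rw [← sum_taylor_eq h (-1), Polynomial.sum_def, Finset.mul_sum, Finset.mul_sum, map_sum]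
    refine Finset.sum_eq_zero fun j hj => ?_
    have hj' : j < L := by
      have := le_natDegree_of_mem_supp j hj
      rw [natDegree_taylor] at this
      omega
    rw [SRK_eq]
    have := SR_CD_zero d hd hM L j hj'
    set S := ∑ l ∈ Finset.range (L + 1), C (2 * (l : ℝ) + d - 1) * SRq d l
    set a := Gamma ((d : ℝ) / 2) / ((d - 1).factorial : ℝ)
    set b := ((taylor (-1)) h).coeff j
    have e : C a * S * ((1 - X) * (C b * (X - C (-1)) ^ j)) =
        (a * b) • (S * ((1 - X) * (1 + X) ^ j)) := by
      rw [smul_eq_C_mul, C_mul, C_neg, C_1, sub_neg_eq_add, add_comm X 1]; ring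
    rw [e, map_smul, this, smul_zero]
  have hdvd : (X - C 1) ∣ g - C (g.eval 1) := by
    rw [dvd_iff_isRoot]; simp
  obtain ⟨h, hh⟩ := hdvd
  have hg' : g = C (g.eval 1) + (X - C 1) * h := by rw [← hh]; ring
  have h0 : M (SRK d (L + 1) * ((1 - X) * h)) = 0 := by
    by_cases hz : h = 0
    · simp [hz]
    · apply key
      have h1 : ((X - C 1) * h).natDegree = 1 + h.natDegree := by
        rw [natDegree_mul (X_sub_C_ne_zero 1) hz, natDegree_X_sub_C]
      rw [← hh, natDegree_sub_C] at h1
      omega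
  have e : SRK d (L + 1) * g = g.eval 1 • SRK d (L + 1) - SRK d (L + 1) * ((1 - X) * h) := by
    conv_lhs => rw [hg']
    rw [smul_eq_C_mul, C_1]; ring
  rw [e, map_sub, map_smul, h0, SR_K_one d hd hM, smul_eq_mul, sub_zero]

/-- The functionals coming from nontrivial transversal monomials annihilate the kernel. -/
lemma SR_vanish (d : ℕ) (hd : 2 ≤ d) (hM1 : M 1 = 1)
    (hM : ∀ g : ℝ[X], M ((1 - X ^ 2) * derivative g - C (d : ℝ) * (X * g)) = 0)
    (s : ℕ) (hs : 0 < s) (T : ℝ[X] →ₗ[ℝ] ℝ)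
    (hT : ∀ g : ℝ[X], T ((1 - X ^ 2) * derivative g - C ((d : ℝ) + 2 * s) * (X * g)) = 0)
    (N : ℕ) (g : ℝ[X]) (hg : g.natDegree + 2 * s < N) : T (SRK d N * g) = 0 := by
  let W : ℝ[X] →ₗ[ℝ] ℝ := M ∘ₗ LinearMap.mulLeft ℝ ((1 - X ^ 2) ^ s)
  have hW : ∀ g, W g = M ((1 - X ^ 2) ^ s * g) := fun g => rfl
  have hWr : ∀ g : ℝ[X], W ((1 - X ^ 2) * derivative g - C ((d : ℝ) + 2 * s) * (X * g)) = 0 := by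
    intro g
    rw [hW, ← hM ((1 - X ^ 2) ^ s * g)]
    congr 1
    obtain ⟨k, rfl⟩ : ∃ k, s = k + 1 := ⟨s - 1, by omega⟩
    rw [derivative_mul, derivative_pow]
    simp [show (C 2 : ℝ[X]) = 2 from rfl]
    ring
  have hW1 : W 1 ≠ 0 := by
    rw [hW, mul_one, show (1 - X ^ 2 : ℝ[X]) = (1 - X) * (1 + X) by ring, mul_pow,
      SR_moment M d (by omega) hM, hM1]
    have hG : ∀ m : ℕ, 0 < Gamma ((d : ℝ) / 2 + m) := fun m => Gamma_pos_of_pos (by positivity)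
    have := hG s
    have := hG 0
    simp only [Nat.cast_zero, add_zero] at this
    positivity
  have hz := SR_unique (W 1 • T - T 1 • W) ((d : ℝ) + 2 * s) (by positivity) (by
    intro g
    rw [LinearMap.sub_apply, LinearMap.smul_apply, LinearMap.smul_apply, hT, hWr]; simp) (by
    simp [mul_comm])
  have h1 := LinearMap.congr_fun hz (SRK d N * g)
  rw [LinearMap.sub_apply, LinearMap.smul_apply, LinearMap.smul_apply, LinearMap.zero_apply,
    hW (SRK d N * g), show (1 - X ^ 2) ^ s * (SRK d N * g) = SRK d N * ((1 - X ^ 2) ^ s * g) by ring,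
    SR_repr d hd hM N _ (by
      refine lt_of_le_of_lt natDegree_mul_le ?_
      have h3 : ((1 - X ^ 2 : ℝ[X]) ^ s).natDegree ≤ s * 2 := by
        refine natDegree_pow_le_of_le s ?_
        compute_degree
      omega)] at h1
  have h4 : ((1 - X ^ 2) ^ s * g : ℝ[X]).eval 1 = 0 := by
    simp [hs.ne']
  rw [h4] at h1
  simpa [hW1] using h1

end SRalg

section SRjac

open Polynomial

lemma SR_jac_prod (d : ℕ) (hd : 3 ≤ d) (l : ℕ) (t : ℝ) :
    jacobiP ((d : ℝ) / 2 - 1) ((d : ℝ) / 2 - 1) l 1 * jacobiP ((d : ℝ) / 2 - 1) ((d : ℝ) / 2 - 1) l t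
      = (2 * (l : ℝ) + d - 1) / (2 ^ (d - 1) * Gamma ((d : ℝ) / 2)) * (SRq d l).eval t := by
  have hd' : (3 : ℝ) ≤ d := by exact_mod_cast hd
  have hG : ∀ m : ℕ, 0 < Gamma ((d : ℝ) / 2 + m) := fun m => Gamma_pos_of_pos (by positivity)
  have hG0 := hG 0
  have hfac : ∀ k : ℕ, Gamma ((d : ℝ) / 2 - 1 + ((d : ℝ) / 2 - 1) + k + 1) =
      ((d - 2 + k).factorial : ℝ) := by
    intro k
    rw [← Real.Gamma_nat_eq_factorial]
    congr 1
    push_cast [Nat.cast_sub (show 2 ≤ d by omega)]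
    ring
  have hfac2 : ∀ k m : ℕ, Gamma ((d : ℝ) / 2 - 1 + ((d : ℝ) / 2 - 1) + k + m + 1) =
      ((d - 2 + k + m).factorial : ℝ) := by
    intro k m
    have := hfac (k + m)
    rw [← add_assoc (d - 2)] at this
    rw [← this]
    congr 1; push_cast; ring
  have hg : ∀ m : ℕ, Gamma ((d : ℝ) / 2 - 1 + m + 1) = Gamma ((d : ℝ) / 2 + m) := by
    intro m; congr 1; ring
  have h1 : ((l : ℝ) + ((d : ℝ) / 2 - 1) + ((d : ℝ) / 2 - 1) + 1) =
      (d : ℝ) / 2 - 1 + ((d : ℝ) / 2 - 1) + l + 1 := by ring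
  have h2 : ((l : ℝ) + ((d : ℝ) / 2 - 1) + 1) = (d : ℝ) / 2 - 1 + l + 1 := by ring
  have h3 : (2 : ℝ) ^ ((d : ℝ) / 2 - 1 + ((d : ℝ) / 2 - 1) + 1) = 2 ^ (d - 1) := by
    rw [← Real.rpow_natCast]; congr 1; push_cast [Nat.cast_sub (show 1 ≤ d by omega)]; ring
  have hev : (SRq d l).eval t = 1 / (l.factorial : ℝ) * ∑ m ∈ Finset.range (l + 1),
      (l.choose m : ℝ) * (((d - 2 + l + m).factorial : ℝ) / Gamma ((d : ℝ) / 2 + m)) *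
        ((t - 1) / 2) ^ m := by
    rw [SRq, eval_finsetSum, Finset.mul_sum]
    refine Finset.sum_congr rfl fun m _ => ?_
    have := hG m
    simp only [eval_mul, eval_C, eval_pow, eval_sub, eval_X, eval_one]
    rw [show 1 / 2 * (t - 1) = (t - 1) / 2 by ring]
    field_simp
  unfold jacobiP
  simp only [hfac2, h1, h2, h3, hfac, hg]
  rw [hev]
  set S := ∑ m ∈ Finset.range (l + 1),
      (l.choose m : ℝ) * (((d - 2 + l + m).factorial : ℝ) / Gamma ((d : ℝ) / 2 + m)) *
        ((t - 1) / 2) ^ m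
  have hS1 : ∑ m ∈ Finset.range (l + 1),
      (l.choose m : ℝ) * (((d - 2 + l + m).factorial : ℝ) / Gamma ((d : ℝ) / 2 + m)) *
        (((1 : ℝ) - 1) / 2) ^ m = ((d - 2 + l).factorial : ℝ) / Gamma ((d : ℝ) / 2) := by
    rw [Finset.sum_eq_single 0]
    · simp
    · intro m _ hm; simp [hm]
    · simp
  rw [hS1]
  set V := (2 * (l : ℝ) + ((d : ℝ) / 2 - 1) + ((d : ℝ) / 2 - 1) + 1) / 2 ^ (d - 1) *
    (((d - 2 + l).factorial : ℝ) * (l.factorial : ℝ) /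
      (Gamma ((d : ℝ) / 2 + l) * Gamma ((d : ℝ) / 2 + l))) with hV
  have hl := hG l
  simp only [Nat.cast_zero, add_zero] at hG0
  have hVn : 0 ≤ V := by
    rw [hV]
    have : 0 ≤ 2 * (l : ℝ) + ((d : ℝ) / 2 - 1) + ((d : ℝ) / 2 - 1) + 1 := by
      have : (0:ℝ) ≤ l := by positivity
      linarith
    positivity
  have hsq := Real.mul_self_sqrt hVn
  have hre : ∀ q c a b : ℝ, q * c * a * (q * c * b) = (q * q) * (c * c * a * b) := by
    intros; ring
  rw [hre, hsq, hV]
  field_simp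
  ring

lemma SR_sphK (d : ℕ) (hd : 3 ≤ d) (N : ℕ) (t : ℝ) : sphK d N t = (SRK d N).eval t := by
  have hG0 : 0 < Gamma ((d : ℝ) / 2) := Gamma_pos_of_pos (by positivity)
  have hG1 : 0 < Gamma (((d : ℝ) + 1) / 2) := Gamma_pos_of_pos (by positivity)
  have hA : omegaS d / omegaS (d - 1) / (2 ^ (d - 1) * Gamma ((d : ℝ) / 2)) =
      Gamma ((d : ℝ) / 2) / ((d - 1).factorial : ℝ) := by
    have hdup := Real.Gamma_mul_Gamma_add_half ((d : ℝ) / 2)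
    rw [show 2 * ((d : ℝ) / 2) = ((d - 1 : ℕ) : ℝ) + 1 by
        push_cast [Nat.cast_sub (show 1 ≤ d by omega)]; ring, Real.Gamma_nat_eq_factorial,
      show (d : ℝ) / 2 + 1 / 2 = ((d : ℝ) + 1) / 2 by ring,
      show 1 - (((d - 1 : ℕ) : ℝ) + 1) = -((d - 1 : ℕ) : ℝ) by ring,
      Real.rpow_neg (by norm_num), Real.rpow_natCast] at hdup
    unfold omegaS
    rw [show ((d - 1 : ℕ) : ℝ) + 1 = (d : ℝ) by
        push_cast [Nat.cast_sub (show 1 ≤ d by omega)]; ring]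
    rw [show ((d : ℝ) + 1) / 2 = (d : ℝ) / 2 + 1 / 2 by ring, Real.rpow_add Real.pi_pos,
      ← Real.sqrt_eq_rpow, show (d : ℝ) / 2 + 1 / 2 = ((d : ℝ) + 1) / 2 by ring]
    have hp : 0 < π ^ ((d : ℝ) / 2) := by positivity
    have hs : 0 < √π := Real.sqrt_pos.mpr Real.pi_pos
    have h2 : (0 : ℝ) < 2 ^ (d - 1) := by positivity
    field_simp
    field_simp at hdup
    linarith
  unfold sphK jacobiK
  rw [SRK, eval_finsetSum, Finset.mul_sum]
  refine Finset.sum_congr rfl fun l _ => ?_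
  rw [SR_jac_prod d hd, eval_mul, eval_C, ← hA]
  field_simp

lemma SR_natDegree_U (m : ℕ) : ((C (1 / 2 : ℝ) * (X - 1)) ^ m).natDegree ≤ m := by
  compute_degree

lemma SR_q_natDegree (d l : ℕ) : (SRq d l).natDegree ≤ l := by
  rw [SRq]
  refine natDegree_sum_le_of_forall_le _ _ fun m hm => ?_
  have hm' : m ≤ l := by simpa [Nat.lt_succ_iff] using hm
  refine le_trans (natDegree_C_mul_le _ _) (le_trans (SR_natDegree_U m) (by omega))

lemma SR_K_natDegree (d N : ℕ) : (SRK d N).natDegree ≤ N - 1 := by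
  rw [SRK]
  refine natDegree_sum_le_of_forall_le _ _ fun l hl => ?_
  have hl' : l < N := by simpa using hl
  exact le_trans (natDegree_C_mul_le _ _) (le_trans (SR_q_natDegree d l) (by omega))

lemma SR_jac_poly (α β : ℝ) (n : ℕ) : ∃ J : ℝ[X], J.natDegree ≤ n ∧ ∀ t, jacobiP α β n t = J.eval t := by
  refine ⟨C (Real.sqrt ((2 * (n : ℝ) + α + β + 1) / 2 ^ (α + β + 1) *
      (Real.Gamma ((n : ℝ) + α + β + 1) * (n.factorial : ℝ) /
        (Real.Gamma ((n : ℝ) + α + 1) * Real.Gamma ((n : ℝ) + β + 1)))) *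
    (Real.Gamma (α + n + 1) / ((n.factorial : ℝ) * Real.Gamma (α + β + n + 1)))) *
    ∑ m ∈ Finset.range (n + 1),
      C ((n.choose m : ℝ) * (Real.Gamma (α + β + n + m + 1) / Real.Gamma (α + m + 1))) *
        (C (1 / 2) * (X - 1)) ^ m, ?_, ?_⟩
  · refine le_trans (natDegree_C_mul_le _ _) ?_
    refine natDegree_sum_le_of_forall_le _ _ fun m hm => ?_
    have hm' : m ≤ n := by simpa [Nat.lt_succ_iff] using hm
    refine le_trans (natDegree_C_mul_le _ _)
      (le_trans (SR_natDegree_U m) (by omega))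
  · intro t
    rw [jacobiP, eval_mul, eval_C, eval_finsetSum]
    congr 1
    refine Finset.sum_congr rfl fun m _ => ?_
    simp only [eval_mul, eval_C, eval_pow, eval_sub, eval_X, eval_one]
    rw [show 1 / 2 * (t - 1) = (t - 1) / 2 by ring]

lemma SR_jac_one_ne (α β : ℝ) (hα : 0 < α) (hβ : -1 < β) (hab : 0 < α + β) (n : ℕ) :
    jacobiP α β n 1 ≠ 0 := by
  have hn : (0 : ℝ) ≤ n := by positivity
  have hS1 : ∑ m ∈ Finset.range (n + 1),
      (n.choose m : ℝ) * (Real.Gamma (α + β + n + m + 1) / Real.Gamma (α + m + 1)) *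
        (((1 : ℝ) - 1) / 2) ^ m = Real.Gamma (α + β + n + 1) / Real.Gamma (α + 1) := by
    rw [Finset.sum_eq_single 0]
    · simp
    · intro m _ hm; simp [hm]
    · simp
  rw [jacobiP, hS1]
  have g1 : 0 < Gamma ((n : ℝ) + α + β + 1) := Gamma_pos_of_pos (by linarith)
  have g2 : 0 < Gamma ((n : ℝ) + α + 1) := Gamma_pos_of_pos (by linarith)
  have g3 : 0 < Gamma ((n : ℝ) + β + 1) := Gamma_pos_of_pos (by linarith)
  have g4 : 0 < Gamma (α + n + 1) := Gamma_pos_of_pos (by linarith)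
  have g5 : 0 < Gamma (α + β + n + 1) := Gamma_pos_of_pos (by linarith)
  have g6 : 0 < Gamma (α + 1) := Gamma_pos_of_pos (by linarith)
  have g7 : 0 < 2 * (n : ℝ) + α + β + 1 := by linarith
  positivity

end SRjac

section SRmeas

/-- Gaussian moments. -/
def SRG (k : ℕ) : ℝ := ∫ x : ℝ, x ^ k * Real.exp (-x ^ 2)

/-- Radial moments. -/
def SRR (k : ℕ) : ℝ := ∫ x in Ioi (0 : ℝ), x ^ k * Real.exp (-x ^ 2)

lemma SRR_eq (k : ℕ) : SRR k = 1 / 2 * Gamma (((k : ℝ) + 1) / 2) := by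
  have h := integral_rpow_mul_exp_neg_rpow (p := 2) (q := k) (by norm_num)
    (by have : (0:ℝ) ≤ k := by positivity
        linarith)
  rw [← h, SRR]
  simp only [Real.rpow_natCast, Real.rpow_ofNat]

lemma SRR_pos (k : ℕ) : 0 < SRR k := by
  rw [SRR_eq]
  have := Gamma_pos_of_pos (show 0 < ((k : ℝ) + 1) / 2 by positivity)
  positivity

lemma SRR_rec (k : ℕ) : SRR (k + 2) = ((k : ℝ) + 1) / 2 * SRR k := by
  rw [SRR_eq, SRR_eq, show (((k + 2 : ℕ) : ℝ) + 1) / 2 = ((k : ℝ) + 1) / 2 + 1 by push_cast; ring,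
    Gamma_add_one (by positivity)]
  ring

lemma SRG_odd (k : ℕ) (hk : Odd k) : SRG k = 0 := by
  have h := integral_neg_eq_self (fun x : ℝ => x ^ k * Real.exp (-x ^ 2)) volume
  simp only [hk.neg_pow, even_two.neg_pow] at h
  have h2 : ∫ x : ℝ, -x ^ k * Real.exp (-x ^ 2) = - SRG k := by
    rw [SRG, ← integral_neg]; congr 1; ext x; ring
  rw [h2] at h
  change - SRG k = SRG k at h
  linarith

lemma SRG_even (k : ℕ) (hk : Even k) : SRG k = 2 * SRR k := by
  have h := integral_comp_abs (f := fun x : ℝ => x ^ k * Real.exp (-x ^ 2))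
  simp only [hk.pow_abs, sq_abs] at h
  exact h

lemma SRG_rec (k : ℕ) : SRG (k + 2) = ((k : ℝ) + 1) / 2 * SRG k := by
  rcases Nat.even_or_odd k with hk | hk
  · rw [SRG_even _ (hk.add even_two), SRG_even _ hk, SRR_rec]; ring
  · rw [SRG_odd _ (hk.add_even even_two), SRG_odd _ hk, mul_zero]

variable {d : ℕ} (b : OrthonormalBasis (Fin (d + 1)) ℝ (EuclideanSpace ℝ (Fin (d + 1))))

/-- monomials in the coordinates of `b` -/
def SRmon (a : Fin (d + 1) → ℕ) (y : EuclideanSpace ℝ (Fin (d + 1))) : ℝ :=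
  ∏ i, (b.repr y i) ^ (a i)

lemma SR_gauss (a : Fin (d + 1) → ℕ) :
    ∫ y, SRmon b a y * Real.exp (-‖y‖ ^ 2) = ∏ i, SRG (a i) := by
  have h1 := b.measurePreserving_repr.integral_comp
    b.repr.toHomeomorph.measurableEmbedding
    (fun z : EuclideanSpace ℝ (Fin (d + 1)) => (∏ i, (z i) ^ (a i)) * Real.exp (-‖z‖ ^ 2))
  have h2 := (EuclideanSpace.volume_preserving_symm_measurableEquiv_toLp (Fin (d + 1))).integral_comp
    (MeasurableEquiv.measurableEmbedding _)
    (fun z : Fin (d + 1) → ℝ => ∏ i, ((z i) ^ (a i) * Real.exp (-(z i) ^ 2)))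
  rw [integral_fintype_prod_volume_eq_prod
    (f := fun i (t : ℝ) => t ^ (a i) * Real.exp (-t ^ 2))] at h2
  simp only [SRG]
  rw [← h2]
  simp only [LinearIsometryEquiv.norm_map] at h1
  simp only [SRmon]
  rw [h1]
  congr 1
  ext z
  rw [Finset.prod_mul_distrib, ← Real.exp_sum, EuclideanSpace.norm_sq_eq]
  simp

lemma SRmon_smul (a : Fin (d + 1) → ℕ) (r : ℝ) (y : EuclideanSpace ℝ (Fin (d + 1))) :
    SRmon b a (r • y) = r ^ (∑ i, a i) * SRmon b a y := by
  simp only [SRmon, map_smul, PiLp.smul_apply, smul_eq_mul, mul_pow, Finset.prod_mul_distrib]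
  rw [Finset.prod_pow_eq_pow_sum]

lemma SR_polar (a : Fin (d + 1) → ℕ) :
    ∫ y, SRmon b a y * Real.exp (-‖y‖ ^ 2) =
      (∫ s : Sph d, SRmon b a s ∂(volume : Measure (EuclideanSpace ℝ (Fin (d + 1)))).toSphere) *
        SRR (d + ∑ i, a i) := by
  set E := EuclideanSpace ℝ (Fin (d + 1))
  set μ : Measure E := volume
  have hdim : Module.finrank ℝ E - 1 = d := by simp [E]
  calc
    ∫ y, SRmon b a y * Real.exp (-‖y‖ ^ 2) ∂μ =
        ∫ x : ({(0)}ᶜ : Set E), SRmon b a x.1 * Real.exp (-‖x.1‖ ^ 2) ∂(μ.comap (↑)) := by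
      rw [integral_subtype_comap (measurableSet_singleton _).compl
        fun y ↦ SRmon b a y * Real.exp (-‖y‖ ^ 2), restrict_compl_singleton]
    _ = ∫ x : Sph d × Ioi (0 : ℝ), SRmon b a x.1 * ((x.2 : ℝ) ^ (∑ i, a i) * Real.exp (-(x.2 : ℝ) ^ 2))
          ∂μ.toSphere.prod (.volumeIoiPow (Module.finrank ℝ E - 1)) := by
      rw [← μ.measurePreserving_homeomorphUnitSphereProd.integral_comp
        (Homeomorph.measurableEmbedding _)]
      congr 1
      ext x
      have hx : (0 : ℝ) < ‖(x : E)‖ := norm_pos_iff.mpr x.2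
      simp only [homeomorphUnitSphereProd_apply_snd_coe, homeomorphUnitSphereProd_apply_fst_coe]
      rw [SRmon_smul]
      rw [inv_pow]
      field_simp
    _ = _ := by
      rw [integral_prod_mul (fun s : Sph d => SRmon b a s)
        (fun r : Ioi (0 : ℝ) => ((r : ℝ) ^ (∑ i, a i) * Real.exp (-(r : ℝ) ^ 2))), hdim]
      congr 1
      simp only [Measure.volumeIoiPow, ENNReal.ofReal]
      rw [integral_withDensity_eq_integral_smul,
        integral_subtype_comap measurableSet_Ioi fun r ↦ Real.toNNReal (r ^ d) •
          ((r : ℝ) ^ (∑ i, a i) * Real.exp (-(r : ℝ) ^ 2)), SRR]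
      · refine setIntegral_congr_fun measurableSet_Ioi fun x hx ↦ ?_
        rw [NNReal.smul_def, Real.coe_toNNReal _ (pow_nonneg hx.out.le _), smul_eq_mul, pow_add]
        ring
      · exact (measurable_subtype_coe.pow_const _).real_toNNReal

instance SR_prob (d : ℕ) : IsProbabilityMeasure (sphMeasure d) := by
  constructor
  rw [sphMeasure, Measure.smul_apply, smul_eq_mul]
  refine ENNReal.inv_mul_cancel ?_ (measure_ne_top _ _)
  rw [Ne, Measure.measure_univ_eq_zero]
  exact Measure.toSphere_ne_zero _

/-- Spherical moments. -/
def SRI (a : Fin (d + 1) → ℕ) : ℝ := ∫ s : Sph d, SRmon b a s ∂sphMeasure d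

lemma SR_moment_sph : ∃ c : ℝ, ∀ a : Fin (d + 1) → ℕ,
    SRI b a * SRR (d + ∑ i, a i) = c * ∏ i, SRG (a i) := by
  refine ⟨(((volume : Measure (EuclideanSpace ℝ (Fin (d + 1)))).toSphere Set.univ)⁻¹).toReal, ?_⟩
  intro a
  rw [← SR_gauss b a, SR_polar, SRI, sphMeasure, integral_smul_measure, smul_eq_mul]
  ring

end SRmeas

section SRmain

variable {d : ℕ} (b : OrthonormalBasis (Fin (d + 1)) ℝ (EuclideanSpace ℝ (Fin (d + 1))))

lemma SR_cont_mon (a : Fin (d + 1) → ℕ) : Continuous (fun s : Sph d => SRmon b a s) := by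
  unfold SRmon
  refine continuous_finsetProd _ fun i _ => Continuous.pow ?_ _
  exact (EuclideanSpace.proj i : EuclideanSpace ℝ (Fin (d + 1)) →L[ℝ] ℝ).continuous.comp
    (b.repr.continuous.comp continuous_subtype_val)

lemma SR_cont_coord (i : Fin (d + 1)) : Continuous (fun s : Sph d => b.repr s i) :=
  (EuclideanSpace.proj i : EuclideanSpace ℝ (Fin (d + 1)) →L[ℝ] ℝ).continuous.comp
    (b.repr.continuous.comp continuous_subtype_val)

lemma SR_integrable (f : Sph d → ℝ) (hf : Continuous f) : Integrable f (sphMeasure d) := by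
  have : CompactSpace (Sph d) := isCompact_iff_compactSpace.mp (isCompact_sphere _ _)
  exact hf.integrable_of_hasCompactSupport (HasCompactSupport.of_compactSpace f)

lemma SR_integrable' (a : Fin (d + 1) → ℕ) (g : Polynomial ℝ) :
    Integrable (fun s : Sph d => g.eval (b.repr s 0) * SRmon b a s) (sphMeasure d) :=
  SR_integrable _ ((g.continuous.comp (SR_cont_coord b 0)).mul (SR_cont_mon b a))

/-- The functional attached to a transversal monomial. -/
def SRT (a : Fin (d + 1) → ℕ) : Polynomial ℝ →ₗ[ℝ] ℝ where
  toFun g := ∫ s : Sph d, g.eval (b.repr s 0) * SRmon b a s ∂sphMeasure d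
  map_add' g h := by
    rw [← integral_add (SR_integrable' b a g) (SR_integrable' b a h)]
    congr 1; ext s; rw [Polynomial.eval_add]; ring
  map_smul' c g := by
    simp only [RingHom.id_apply, smul_eq_mul]
    rw [← integral_const_mul]
    congr 1; ext s; rw [Polynomial.eval_smul, smul_eq_mul]; ring

lemma SRmon_update (a : Fin (d + 1) → ℕ) (ha : a 0 = 0) (k : ℕ)
    (y : EuclideanSpace ℝ (Fin (d + 1))) :
    SRmon b (Function.update a 0 k) y = (b.repr y 0) ^ k * SRmon b a y := by
  simp only [SRmon, Fin.prod_univ_succ]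
  simp [ha, Fin.succ_ne_zero]

lemma SRT_pow (a : Fin (d + 1) → ℕ) (ha : a 0 = 0) (k : ℕ) :
    SRT b a (Polynomial.X ^ k) = SRI b (Function.update a 0 k) := by
  change ∫ s : Sph d, (Polynomial.X ^ k : Polynomial ℝ).eval (b.repr s 0) * SRmon b a s
    ∂sphMeasure d = _
  rw [SRI]
  congr 1; ext s
  rw [SRmon_update b a ha]; simp

lemma SR_update_sum (a : Fin (d + 1) → ℕ) (ha : a 0 = 0) (k : ℕ) :
    ∑ i, Function.update a 0 k i = k + ∑ i, a i := by
  simp [Fin.sum_univ_succ, ha, Fin.succ_ne_zero]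

lemma SR_update_prod (a : Fin (d + 1) → ℕ) (k : ℕ) :
    ∏ i, SRG (Function.update a 0 k i) = SRG k * ∏ i : Fin d, SRG (a i.succ) := by
  simp [Fin.prod_univ_succ, Fin.succ_ne_zero]

lemma SRT_rel (hd : 0 < d) (a : Fin (d + 1) → ℕ) (ha : a 0 = 0) (g : Polynomial ℝ) :
    SRT b a ((1 - Polynomial.X ^ 2) * Polynomial.derivative g -
      Polynomial.C ((d : ℝ) + ((∑ i, a i : ℕ) : ℝ)) * (Polynomial.X * g)) = 0 := by
  obtain ⟨c, hc⟩ := SR_moment_sph b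
  set A := ∑ i, a i with hA
  have hI : ∀ k, SRT b a (Polynomial.X ^ k) * SRR (d + (k + A)) =
      c * (SRG k * ∏ i : Fin d, SRG (a i.succ)) := by
    intro k
    rw [SRT_pow b a ha, ← SR_update_prod, ← hc, SR_update_sum a ha]
  induction g using Polynomial.induction_on' with
  | add p q hp hq =>
    have e : (1 - Polynomial.X ^ 2) * Polynomial.derivative (p + q) -
        Polynomial.C ((d : ℝ) + (A : ℝ)) * (Polynomial.X * (p + q)) =
        ((1 - Polynomial.X ^ 2) * Polynomial.derivative p -
          Polynomial.C ((d : ℝ) + (A : ℝ)) * (Polynomial.X * p)) +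
        ((1 - Polynomial.X ^ 2) * Polynomial.derivative q -
          Polynomial.C ((d : ℝ) + (A : ℝ)) * (Polynomial.X * q)) := by
      rw [Polynomial.derivative_add]; ring
    rw [e, map_add, hp, hq, add_zero]
  | monomial k t =>
    rw [← Polynomial.C_mul_X_pow_eq_monomial]
    cases k with
    | zero =>
      have e : (1 - Polynomial.X ^ 2) * Polynomial.derivative (Polynomial.C t * Polynomial.X ^ 0) -
          Polynomial.C ((d : ℝ) + (A : ℝ)) * (Polynomial.X * (Polynomial.C t * Polynomial.X ^ 0)) =
          (-(((d : ℝ) + A) * t)) • Polynomial.X ^ 1 := by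
        rw [Polynomial.smul_eq_C_mul, Polynomial.C_neg, Polynomial.C_mul]
        simp; ring
      have h1 := hI 1
      rw [SRG_odd 1 odd_one, zero_mul, mul_zero] at h1
      rw [e, map_smul, (mul_eq_zero.mp h1).resolve_right (SRR_pos _).ne', smul_zero]
    | succ k =>
      have e : (1 - Polynomial.X ^ 2) *
          Polynomial.derivative (Polynomial.C t * Polynomial.X ^ (k + 1)) -
          Polynomial.C ((d : ℝ) + (A : ℝ)) *
            (Polynomial.X * (Polynomial.C t * Polynomial.X ^ (k + 1))) =
          (t * ((k : ℝ) + 1)) • Polynomial.X ^ k -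
          (t * ((k : ℝ) + 1 + d + A)) • Polynomial.X ^ (k + 2) := by
        simp only [Polynomial.smul_eq_C_mul, Polynomial.C_mul, Polynomial.C_add,
          Polynomial.derivative_C_mul, Polynomial.derivative_X_pow]
        simp; ring
      rw [e, map_sub, map_smul, map_smul, smul_eq_mul, smul_eq_mul]
      have h1 := hI k
      have h2 := hI (k + 2)
      rw [SRG_rec, show d + (k + 2 + A) = d + (k + A) + 2 by ring, SRR_rec] at h2
      have hp := SRR_pos (d + (k + A))
      push_cast at h2
      have h3 : SRR (d + (k + A)) * (t * ((k : ℝ) + 1) * SRT b a (Polynomial.X ^ k) -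
          t * ((k : ℝ) + 1 + d + A) * SRT b a (Polynomial.X ^ (k + 2))) = 0 := by
        linear_combination t * ((k : ℝ) + 1) * h1 - 2 * t * h2
      exact (mul_eq_zero.mp h3).resolve_left hp.ne'

lemma SRT_odd (a : Fin (d + 1) → ℕ) (ha : a 0 = 0) (i : Fin d) (hi : Odd (a i.succ)) :
    SRT b a = 0 := by
  obtain ⟨c, hc⟩ := SR_moment_sph b
  ext k
  have h := hc (Function.update a 0 k)
  rw [SR_update_prod, Finset.prod_eq_zero (Finset.mem_univ i) (SRG_odd _ hi), mul_zero, mul_zero,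
    ← SRT_pow b a ha] at h
  simpa [Polynomial.monomial_one_right_eq_X_pow] using
    (mul_eq_zero.mp h).resolve_right (SRR_pos _).ne'

lemma SRT_zero_one : SRT b 0 1 = 1 := by
  change ∫ s : Sph d, (1 : Polynomial ℝ).eval (b.repr s 0) * SRmon b 0 s ∂sphMeasure d = 1
  simp [SRmon]

/-- Reproducing property on monomials adapted to the pole. -/
lemma SR_repr_mon (hd : 3 ≤ d) (x : Sph d) (hx : b 0 = (x : EuclideanSpace ℝ (Fin (d + 1))))
    (a : Fin (d + 1) → ℕ) (N : ℕ) (Q : Polynomial ℝ) (hQ : Q.natDegree + ∑ i, a i < N) :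
    ∫ s : Sph d, SRmon b a s * (SRK d N * Q).eval (b.repr s 0) ∂sphMeasure d =
      SRmon b a x * Q.eval 1 := by
  set a' := Function.update a 0 0 with ha'
  have ha0 : a' 0 = 0 := by simp [ha']
  have haa : a = Function.update a' 0 (a 0) := by simp [ha']
  have hsum : ∑ i, a i = a 0 + ∑ i, a' i := by
    conv_lhs => rw [haa]
    rw [SR_update_sum a' ha0]
  have hL : ∫ s : Sph d, SRmon b a s * (SRK d N * Q).eval (b.repr s 0) ∂sphMeasure d =
      SRT b a' (SRK d N * (Polynomial.X ^ (a 0) * Q)) := by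
    change _ = ∫ s : Sph d, (SRK d N * (Polynomial.X ^ (a 0) * Q)).eval (b.repr s 0) *
      SRmon b a' s ∂sphMeasure d
    congr 1; ext s
    conv_lhs => rw [haa]
    rw [SRmon_update b a' ha0]
    simp
    ring
  have hxr : ∀ i, b.repr x i = if i = 0 then 1 else 0 := by
    intro i
    rw [← hx, OrthonormalBasis.repr_self]
    simp [eq_comm]
  have hM : ∀ g : Polynomial ℝ, SRT b 0 ((1 - Polynomial.X ^ 2) * Polynomial.derivative g -
      Polynomial.C (d : ℝ) * (Polynomial.X * g)) = 0 := by
    intro g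
    simpa using SRT_rel b (by omega) 0 rfl g
  have hdeg : (Polynomial.X ^ (a 0) * Q).natDegree ≤ a 0 + Q.natDegree := by
    refine le_trans Polynomial.natDegree_mul_le ?_
    simp
  rw [hL]
  by_cases hz : a' = 0
  · rw [hz, SR_repr d (by omega) hM N _ (by omega), SRT_zero_one, mul_one]
    rw [haa, SRmon_update b a' ha0, hz, hxr 0]
    simp [SRmon]
  · have hex : ∃ i : Fin d, a' i.succ ≠ 0 := by
      by_contra hcon
      push Not at hcon
      apply hz
      ext i
      refine Fin.cases ha0 (fun j => hcon j) i
    obtain ⟨i, hi⟩ := hex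
    have hmx : SRmon b a x = 0 := by
      rw [haa, SRmon_update b a' ha0]
      apply mul_eq_zero_of_right
      rw [SRmon]
      refine Finset.prod_eq_zero (Finset.mem_univ i.succ) ?_
      rw [hxr, if_neg (Fin.succ_ne_zero i), zero_pow hi]
    rw [hmx, zero_mul]
    by_cases hodd : ∃ j : Fin d, Odd (a' j.succ)
    · obtain ⟨j, hj⟩ := hodd
      rw [SRT_odd b a' ha0 j hj, LinearMap.zero_apply]
    · push Not at hodd
      have hev : Even (∑ i, a' i) := by
        refine Finset.even_sum _ fun j _ => ?_
        refine Fin.cases (by simp [ha0]) (fun j => ?_) j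
        exact Nat.not_odd_iff_even.mp (hodd j)
      obtain ⟨s, hs⟩ := hev
      have hpos : 0 < ∑ i, a' i :=
        lt_of_lt_of_le (Nat.pos_of_ne_zero hi)
          (Finset.single_le_sum (f := a') (fun _ _ => Nat.zero_le _) (Finset.mem_univ i.succ))
      refine SR_vanish d (by omega) (SRT_zero_one b) hM s (by omega) (SRT b a') ?_ N _ (by omega)
      intro g
      have := SRT_rel b (by omega) a' ha0 g
      rw [hs] at this
      rw [← this]
      congr 5
      push_cast; ring

lemma SR_totalDegree_aeval {σ τ : Type*} [Fintype σ] (f : σ → MvPolynomial τ ℝ)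
    (hf : ∀ i, (f i).totalDegree ≤ 1) (p : MvPolynomial σ ℝ) :
    (MvPolynomial.aeval f p).totalDegree ≤ p.totalDegree := by
  rw [MvPolynomial.aeval_def, MvPolynomial.eval₂_eq']
  refine MvPolynomial.totalDegree_finsetSum_le fun a ha => ?_
  refine le_trans (MvPolynomial.totalDegree_mul _ _) ?_
  rw [MvPolynomial.algebraMap_eq, MvPolynomial.totalDegree_C, zero_add]
  refine le_trans (MvPolynomial.totalDegree_finsetProd _ _) ?_
  refine le_trans (Finset.sum_le_sum (g := fun i => a i) fun i _ => ?_) ?_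
  · refine le_trans (MvPolynomial.totalDegree_pow _ _) ?_
    calc a i * (f i).totalDegree ≤ a i * 1 := Nat.mul_le_mul_left _ (hf i)
      _ = a i := mul_one _
  · have := MvPolynomial.le_totalDegree ha
    rwa [Finsupp.sum_fintype _ _ (fun _ => rfl)] at this

lemma SR_totalDegree_paeval {τ : Type*} (f : MvPolynomial τ ℝ)
    (hf : f.totalDegree ≤ 1) (p : Polynomial ℝ) :
    (Polynomial.aeval f p).totalDegree ≤ p.natDegree := by
  rw [Polynomial.aeval_eq_sum_range]
  refine MvPolynomial.totalDegree_finsetSum_le fun i hi => ?_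
  refine le_trans (MvPolynomial.totalDegree_smul_le _ _) ?_
  refine le_trans (MvPolynomial.totalDegree_pow _ _) ?_
  have : i ≤ p.natDegree := by simpa [Nat.lt_succ_iff] using hi
  nlinarith

lemma SR_linform {τ : Type*} [Fintype τ] (c : τ → ℝ) :
    (∑ i, MvPolynomial.C (c i) * MvPolynomial.X i : MvPolynomial τ ℝ).totalDegree ≤ 1 := by
  refine MvPolynomial.totalDegree_finsetSum_le fun i _ => ?_
  refine le_trans (MvPolynomial.totalDegree_mul _ _) ?_
  simp

/-- The reproducing property of the kernel for the rotation invariant measure. -/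
lemma SR_reproduce (hd : 3 ≤ d) (P : Sph d → ℝ) (n : ℕ) (hP : IsSphPoly d n P) (x : Sph d)
    (N : ℕ) (Q : Polynomial ℝ) (hQ : Q.natDegree + n ≤ N) :
    ∫ y, P y * (SRK d N * Q).eval (ip x y) ∂sphMeasure d = P x * Q.eval 1 := by
  obtain ⟨p, hp, hPp⟩ := hP
  have hp' : p.totalDegree < n := by exact_mod_cast hp
  obtain ⟨b, hb⟩ := Orthonormal.exists_orthonormalBasis_extension_of_card_eq (𝕜 := ℝ)
    (E := EuclideanSpace ℝ (Fin (d + 1))) (ι := Fin (d + 1)) (by simp)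
    (v := fun _ => (x : EuclideanSpace ℝ (Fin (d + 1)))) (s := {0}) (by
      constructor
      · intro i; simp
      · intro i j hij
        exact absurd (Subsingleton.elim i j) hij)
  have hx : b 0 = (x : EuclideanSpace ℝ (Fin (d + 1))) := hb 0 rfl
  let f : Fin (d + 1) → MvPolynomial (Fin (d + 1)) ℝ := fun j =>
    ∑ i, MvPolynomial.C (b i j) * MvPolynomial.X i
  set q := MvPolynomial.aeval f p with hq
  have hqd : q.totalDegree ≤ p.totalDegree :=
    SR_totalDegree_aeval f (fun j => SR_linform _) p
  have hPq : ∀ y : Sph d, P y = ∑ a ∈ q.support, q.coeff a * SRmon b a y := by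
    intro y
    have h1 : MvPolynomial.eval (fun i => b.repr (y : EuclideanSpace ℝ (Fin (d + 1))) i) q =
        ∑ a ∈ q.support, q.coeff a * SRmon b a y := by
      rw [MvPolynomial.eval_eq']; rfl
    have hc : ∀ j, MvPolynomial.eval
        (fun i => b.repr (y : EuclideanSpace ℝ (Fin (d + 1))) i) (f j) =
        (y : EuclideanSpace ℝ (Fin (d + 1))) j := by
      intro j
      have h2 := congrArg (fun z : EuclideanSpace ℝ (Fin (d + 1)) => z j)
        (b.sum_repr (y : EuclideanSpace ℝ (Fin (d + 1))))
      simp only [f, map_sum]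
      simp at h2
      simp [← h2, mul_comm]
    rw [← h1, hPp, hq]
    clear_value f
    clear h1 hqd hq hPp hp hp' q
    induction p using MvPolynomial.induction_on with
    | C r => simp
    | add p q hp hq => rw [map_add, map_add, map_add, hp, hq]
    | mul_X p j hp => 
      rw [map_mul, map_mul, map_mul, hp, MvPolynomial.aeval_X, hc, MvPolynomial.eval_X]
  have hip : ∀ y : Sph d, ip x y = b.repr y 0 := by
    intro y
    rw [OrthonormalBasis.repr_apply_apply, hx]; rfl
  simp only [hPq, hip, Finset.sum_mul]
  rw [integral_finsetSum]
  · refine Finset.sum_congr rfl fun a ha => ?_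
    simp only [mul_assoc]
    rw [integral_const_mul, SR_repr_mon b hd x hx a N Q]
    have := MvPolynomial.le_totalDegree ha
    rw [Finsupp.sum_fintype _ _ (fun _ => rfl)] at this
    omega
  · intro a _
    refine SR_integrable _ ?_
    exact (continuous_const.mul (SR_cont_mon b a)).mul
      ((SRK d N * Q).continuous.comp (SR_cont_coord b 0))

lemma SR_isSphPoly (P : Sph d → ℝ) (n m : ℕ) (hP : IsSphPoly d n P) (x : Sph d)
    (Q : Polynomial ℝ) (hQ : Q.natDegree + n ≤ m) :
    IsSphPoly d m (fun y => P y * Q.eval (ip x y)) := by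
  obtain ⟨p, hp, hPp⟩ := hP
  have hp' : p.totalDegree < n := by exact_mod_cast hp
  refine ⟨p * Polynomial.aeval (∑ i, MvPolynomial.C ((x : EuclideanSpace ℝ (Fin (d + 1))) i) *
    MvPolynomial.X i) Q, ?_, ?_⟩
  · have h1 := MvPolynomial.totalDegree_mul p (Polynomial.aeval
      (∑ i, MvPolynomial.C ((x : EuclideanSpace ℝ (Fin (d + 1))) i) * MvPolynomial.X i) Q)
    have h2 := SR_totalDegree_paeval _
      (SR_linform fun i => (x : EuclideanSpace ℝ (Fin (d + 1))) i) Q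
    have h3 : (p * Polynomial.aeval (∑ i, MvPolynomial.C
      ((x : EuclideanSpace ℝ (Fin (d + 1))) i) * MvPolynomial.X i) Q).totalDegree < m := by omega
    exact_mod_cast h3
  · intro y
    rw [map_mul, ← hPp]
    beta_reduce
    congr 1
    rw [Polynomial.eval_eq_sum_range, Polynomial.aeval_eq_sum_range, map_sum]
    refine Finset.sum_congr rfl fun i _ => ?_
    simp [ip, PiLp.inner_apply, MvPolynomial.smul_eval, mul_comm]

/-- The abstract form: any kernel `K_N · Q` with `Q(1) = 1` reproduces. -/
lemma SR_sigma (hd : 3 ≤ d) (n : ℕ) (hn : 0 < n)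
    (P : Sph d → ℝ) (hP : IsSphPoly d n P)
    (ν : SignedMeasure (Sph d)) (hν : IsQuadrature d ((2 * (d + 2) * n : ℕ) : ℝ) ν)
    (Q : Polynomial ℝ) (hQ : Q.natDegree ≤ (d + 1) * n) (hQ1 : Q.eval 1 = 1) (x : Sph d) :
    sInt ν (fun y => P y * (SRK d ((d + 2) * n) * Q).eval (ip x y)) = P x := by
  have h0 : 0 < (d + 2) * n := by positivity
  rw [hν _ (SR_isSphPoly P n _ hP x _ (by
    have h1 := SR_K_natDegree d ((d + 2) * n)
    have h2 := Polynomial.natDegree_mul_le (p := SRK d ((d + 2) * n)) (q := Q)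
    have : 2 * (d + 2) * n = (d + 2) * n + (d + 1) * n + n := by ring
    omega)), SR_reproduce hd P n hP x _ Q (by
      have : (d + 2) * n = (d + 1) * n + n := by ring
      omega), hQ1, mul_one]

end SRmain

/-- If `ν` is a quadrature measure of order `2(d+2)n` and `P ∈ Π_n^d`, then
`σ_{d;n,r}(ν,P) = P` and `σ̃_{d;n,r}(ν,P) = P`. -/
theorem sigmaOp_reproduces (d : ℕ) (hd : 3 ≤ d) (r : ℝ) (hr : 0 < r) (n : ℕ) (hn : 0 < n)
    (P : Sph d → ℝ) (hP : IsSphPoly d n P)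
    (ν : SignedMeasure (Sph d)) (hν : IsQuadrature d ((2 * (d + 2) * n : ℕ) : ℝ) ν) :
    (∀ x : Sph d, sigmaOp d n r ν P x = P x) ∧
      (∀ x : Sph d, sigmaTildeOp d n r ν P x = P x) := by
  obtain ⟨J, hJd, hJ⟩ := SR_jac_poly ((d : ℝ) / 2 + r) ((d : ℝ) / 2 - 2) (d * n)
  have hd' : (3 : ℝ) ≤ d := by exact_mod_cast hd
  have hJ1 : J.eval 1 ≠ 0 := by
    rw [← hJ]
    exact SR_jac_one_ne _ _ (by linarith) (by linarith) (by linarith) _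
  have hdn : (d + 1) * n = d * n + n := by ring
  constructor
  · intro x
    have h := SR_sigma hd n hn P hP ν hν
      (Polynomial.C (J.eval 1)⁻¹ * J *
        (Polynomial.C (1 / 2 : ℝ) * (1 + Polynomial.X)) ^ n) (by
        refine le_trans Polynomial.natDegree_mul_le ?_
        rw [hdn]
        refine add_le_add ((Polynomial.natDegree_C_mul_le _ _).trans hJd) ?_
        compute_degree) (by
        simp [hJ1]; norm_num) x
    rw [sigmaOp, ← h]
    congr 1
    ext y
    rw [Phi, PhiTilde, SR_sphK d hd, hJ, hJ]
    simp only [Polynomial.eval_mul, Polynomial.eval_C, Polynomial.eval_pow, Polynomial.eval_add,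
      Polynomial.eval_X, Polynomial.eval_one]
    rw [show 1 / 2 * (1 + ip x y) = (1 + ip x y) / 2 by ring]
    field_simp
  · intro x
    have h := SR_sigma hd n hn P hP ν hν (Polynomial.C (J.eval 1)⁻¹ * J)
      ((Polynomial.natDegree_C_mul_le _ _).trans (by omega)) (by simp [hJ1]) x
    rw [sigmaTildeOp, ← h]
    congr 1
    ext y
    rw [PhiTilde, SR_sphK d hd, hJ, hJ]
    simp only [Polynomial.eval_mul, Polynomial.eval_C]
    field_simp
end
end

section
/- For every r ≥ 0 there exists a constant C = C(r) > 0, independent of d, n, f and the measure, such that for all integers d ≥ 3 and n ≥ 2(d+1), every f ∈ C(S^d), and every ν ∈ MZQ(d; 2(d+2)n): E_{d;2(d+2)n}(f) ≤ ‖f − σ̃_{d;n,r}(ν,f)‖_∞ ≤ C · d^{1/6} · |||ν|||_{d;2(d+2)n} · E_{d;n}(f), and likewise E_{d;2(d+2)n}(f) ≤ ‖f − σ_{d;n,r}(ν,f)‖_∞ ≤ C · d^{1/6} · |||ν|||_{d;2(d+2)n} · E_{d;n}(f). -/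
noncomputable section

open MeasureTheory Real Set
open scoped RealInnerProductSpace

/-- Rising factorial. -/
def pc (x : ℝ) (k : ℕ) : ℝ := (ascPochhammer ℝ k).eval x

lemma pc_zero (x : ℝ) : pc x 0 = 1 := by simp [pc]

lemma pc_succ (x : ℝ) (k : ℕ) : pc x (k + 1) = pc x k * (x + k) := by
  simp [pc, ascPochhammer_succ_eval]

lemma pc_shift (x : ℝ) (k : ℕ) : x * pc (x + 1) k = pc x k * (x + k) := by
  rw [← pc_succ]
  simp [pc, ascPochhammer_succ_left, Polynomial.eval_comp]

lemma pc_pos {x : ℝ} (hx : 0 < x) (k : ℕ) : 0 < pc x k := ascPochhammer_pos k x hx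

lemma Gamma_add_nat {x : ℝ} (hx : 0 < x) (k : ℕ) :
    Real.Gamma (x + k) = pc x k * Real.Gamma x := by
  induction k with
  | zero => simp [pc_zero]
  | succ k ih =>
    have : x + ((k + 1 : ℕ) : ℝ) = (x + k) + 1 := by push_cast; ring
    rw [this, Real.Gamma_add_one (by positivity), ih, pc_succ]; ring

/-- Coefficients of the normalized Jacobi polynomial in the variable `u = (1-x)/2`. -/
def qc (α β : ℝ) (N k : ℕ) : ℝ :=
  (-1) ^ k * (N.choose k : ℝ) * (pc (N + α + β + 1) k / pc (α + 1) k)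

/-- Normalized Jacobi polynomial in the variable `u = (1-x)/2`. -/
def qJ (α β : ℝ) (N : ℕ) : Polynomial ℝ :=
  ∑ k ∈ Finset.range (N + 1), Polynomial.C (qc α β N k) * Polynomial.X ^ k

lemma qJ_coeff (α β : ℝ) (N k : ℕ) : (qJ α β N).coeff k = qc α β N k := by
  unfold qJ
  rw [Polynomial.finsetSum_coeff]
  simp only [Polynomial.coeff_C_mul_X_pow]
  rw [Finset.sum_ite_eq]
  split_ifs with h
  · rfl
  · rw [Finset.mem_range, not_lt] at h
    simp [qc, Nat.choose_eq_zero_of_lt (show N < k by omega)]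

lemma qJ_natDegree (α β : ℝ) (N : ℕ) : (qJ α β N).natDegree ≤ N := by
  rw [Polynomial.natDegree_le_iff_coeff_eq_zero]
  intro k hk
  rw [qJ_coeff]
  simp [qc, Nat.choose_eq_zero_of_lt hk]

lemma qJ_eval_zero (α β : ℝ) (N : ℕ) : (qJ α β N).eval 0 = 1 := by
  rw [← Polynomial.coeff_zero_eq_eval_zero, qJ_coeff]
  simp [qc, pc_zero]

/-- Closed form for the Christoffel sum. -/
def SJ (α β : ℝ) (N : ℕ) : ℝ :=
  Real.Gamma (N + α + β + 2) * Real.Gamma (N + α + 2) /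
    (Real.Gamma (α + 1) * Real.Gamma (α + 2) * (N.factorial : ℝ) * Real.Gamma (N + β + 1))


lemma SJ_pos {α β : ℝ} (hα : -1 < α) (hβ : -1 < β) (N : ℕ) : 0 < SJ α β N := by
  have hN : (0 : ℝ) ≤ N := Nat.cast_nonneg N
  unfold SJ
  have h1 := Real.Gamma_pos_of_pos (show 0 < N + α + β + 2 by linarith)
  have h2 := Real.Gamma_pos_of_pos (show 0 < N + α + 2 by linarith)
  have h3 := Real.Gamma_pos_of_pos (show 0 < α + 1 by linarith)
  have h4 := Real.Gamma_pos_of_pos (show 0 < α + 2 by linarith)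
  have h5 := Real.Gamma_pos_of_pos (show 0 < N + β + 1 by linarith)
  have h6 : (0 : ℝ) < N.factorial := by exact_mod_cast N.factorial_pos
  positivity

lemma SJ_succ {α β : ℝ} (hα : -1 < α) (hβ : -1 < β) (N : ℕ) : SJ α β (N + 1) * ((N + 1) * (N + 1 + β)) =
    SJ α β N * ((N + α + β + 2) * (N + α + 2)) := by
  have hN : (0 : ℝ) ≤ N := Nat.cast_nonneg N
  unfold SJ
  have h1 := Real.Gamma_pos_of_pos (show 0 < N + α + β + 2 by linarith)
  have h2 := Real.Gamma_pos_of_pos (show 0 < N + α + 2 by linarith)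
  have h3 := Real.Gamma_pos_of_pos (show 0 < α + 1 by linarith)
  have h4 := Real.Gamma_pos_of_pos (show 0 < α + 2 by linarith)
  have h5 := Real.Gamma_pos_of_pos (show 0 < N + β + 1 by linarith)
  have h6 : (0 : ℝ) < N.factorial := by exact_mod_cast N.factorial_pos
  have e1 : ((N + 1 : ℕ) : ℝ) + α + β + 2 = (N + α + β + 2) + 1 := by push_cast; ring
  have e2 : ((N + 1 : ℕ) : ℝ) + α + 2 = (N + α + 2) + 1 := by push_cast; ring
  have e3 : ((N + 1 : ℕ) : ℝ) + β + 1 = (N + β + 1) + 1 := by push_cast; ring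
  have h7 : 0 < (N:ℝ) + β + 1 := by linarith
  rw [e1, e2, e3, Real.Gamma_add_one (s := N + α + β + 2) (by linarith),
    Real.Gamma_add_one (s := N + α + 2) (by linarith),
    Real.Gamma_add_one (s := N + β + 1) (by linarith), Nat.factorial_succ]
  push_cast
  field_simp
  ring

lemma SJ_succ_sub {α β : ℝ} (hα : -1 < α) (hβ : -1 < β) (N : ℕ) : (SJ α β (N + 1) - SJ α β N) * ((N + 1) * (N + 1 + β)) =
    SJ α β N * ((α + 1) * (2 * N + α + β + 3)) := by
  have := SJ_succ hα hβ N
  linear_combination this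

lemma SJ_le_succ {α β : ℝ} (hα : -1 < α) (hβ : -1 < β) (N : ℕ) : SJ α β N ≤ SJ α β (N + 1) := by
  have hN : (0 : ℝ) ≤ N := Nat.cast_nonneg N
  have h := SJ_succ_sub hα hβ N
  have h0 := SJ_pos hα hβ N
  have h1 : 0 < ((N:ℝ) + 1) * (N + 1 + β) := mul_pos (by linarith) (by linarith)
  have h2 : 0 < (α + 1) * (2 * N + α + β + 3) := mul_pos (by linarith) (by linarith)
  by_contra hc
  push Not at hc
  nlinarith [mul_pos h0 h2]

lemma qc_rec {α β : ℝ} (hα : -1 < α) (hβ : -1 < β) (N k : ℕ) : SJ α β (N + 1) * qc (α + 1) β (N + 1) k =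
    SJ α β N * qc (α + 1) β N k + (SJ α β (N + 1) - SJ α β N) * qc α β (N + 1) k := by
  have hN : (0 : ℝ) ≤ N := Nat.cast_nonneg N
  have hk : (0 : ℝ) ≤ k := Nat.cast_nonneg k
  rcases lt_or_ge (N + 1) k with h | h
  · simp [qc, Nat.choose_eq_zero_of_lt h, Nat.choose_eq_zero_of_lt (show N < k by omega)]
  unfold qc
  set z : ℝ := N + α + β + 2 with hz
  have hz0 : 0 < z := by linarith
  have e1 : ((N + 1 : ℕ) : ℝ) + (α + 1) + β + 1 = z + 1 := by push_cast; ring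
  have e2 : ((N + 1 : ℕ) : ℝ) + α + β + 1 = z := by push_cast; ring
  have e3 : (N : ℝ) + (α + 1) + β + 1 = z := by rw [hz]; ring
  rw [e1, e2, e3]
  have p1 := pc_shift z k
  have p2 := pc_shift (α + 1) k
  have q0 := pc_pos hz0 k
  have q1 := pc_pos (show 0 < α + 1 by linarith) k
  have q2 := pc_pos (show 0 < α + 1 + 1 by linarith) k
  have hc : ((N + 1).choose k : ℝ) * (N + 1 - k) = (N + 1) * (N.choose k : ℝ) := by
    have h1 := Nat.choose_mul_succ_eq N k
    have h2 : ((N + 1 - k : ℕ) : ℝ) = N + 1 - k := by rw [Nat.cast_sub h]; push_cast; ring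
    rw [← h2, mul_comm ((N : ℝ) + 1)]
    exact_mod_cast h1.symm
  have hcc : (N.choose k : ℝ) = ((N + 1).choose k : ℝ) * (N + 1 - k) / (N + 1) := by
    field_simp; linarith
  have p1' : pc (z + 1) k = pc z k * (z + k) / z := by field_simp; linarith
  have p2' : pc (α + 1 + 1) k = pc (α + 1) k * (α + 1 + k) / (α + 1) := by
    have : α + 1 ≠ 0 := by linarith
    field_simp; linarith
  have hS : SJ α β (N + 1) = SJ α β N * (z * (N + α + 2)) / ((N + 1) * (N + 1 + β)) := by
    have h1 : 0 < ((N:ℝ) + 1) * (N + 1 + β) := mul_pos (by linarith) (by linarith)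
    rw [eq_div_iff h1.ne', SJ_succ hα hβ]
  have a1 : α + 1 ≠ 0 := by linarith
  have a2 : α + 1 + k ≠ 0 := by linarith
  have a3 : (N : ℝ) + 1 + β ≠ 0 := by linarith
  have a4 : (N : ℝ) + 1 ≠ 0 := by linarith
  rw [hcc, p1', p2', hS]
  field_simp
  rw [hz]
  ring

lemma qJ_rec {α β : ℝ} (hα : -1 < α) (hβ : -1 < β) (N : ℕ) : SJ α β (N + 1) • qJ (α + 1) β (N + 1) =
    SJ α β N • qJ (α + 1) β N + (SJ α β (N + 1) - SJ α β N) • qJ α β (N + 1) := by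
  ext k
  simp only [Polynomial.coeff_add, Polynomial.coeff_smul, smul_eq_mul, qJ_coeff]
  exact qc_rec hα hβ N k


/-- Integral against the Jacobi weight on `(0,1)`. -/
def wI (α β : ℝ) (f : ℝ → ℝ) : ℝ := ∫ u in Ioo (0 : ℝ) 1, f u * (u ^ α * (1 - u) ^ β)


lemma weight_integrable {α β : ℝ} (hα : -1 < α) (hβ : -1 < β) : IntegrableOn (fun u : ℝ => u ^ α * (1 - u) ^ β) (Ioo 0 1) := by
  have h := Complex.betaIntegral_convergent (u := ((α + 1 : ℝ) : ℂ)) (v := ((β + 1 : ℝ) : ℂ))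
    (by simp; linarith) (by simp; linarith)
  rw [intervalIntegrable_iff_integrableOn_Ioo_of_le (by simp)] at h
  have h2 := h.re
  refine Integrable.congr h2 ?_
  filter_upwards [ae_restrict_mem measurableSet_Ioo] with x hx
  have e1 : (x : ℂ) ^ (((α + 1 : ℝ) : ℂ) - 1) = ((x ^ α : ℝ) : ℂ) := by
    rw [Complex.ofReal_cpow hx.1.le]; push_cast; ring_nf
  have e2 : (1 - x : ℂ) ^ (((β + 1 : ℝ) : ℂ) - 1) = (((1 - x) ^ β : ℝ) : ℂ) := by
    rw [Complex.ofReal_cpow (by linarith [hx.2])]; push_cast; ring_nf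
  rw [e1, e2, ← Complex.ofReal_mul]
  simp

lemma weight_integral {α β : ℝ} (hα : -1 < α) (hβ : -1 < β) : ∫ u in Ioo (0:ℝ) 1, (u ^ α * (1 - u) ^ β) =
    Real.Gamma (α + 1) * Real.Gamma (β + 1) / Real.Gamma (α + β + 2) := by
  have h := ProbabilityTheory.beta_eq_betaIntegralReal (α + 1) (β + 1) (by linarith) (by linarith)
  rw [ProbabilityTheory.beta, show α + 1 + (β + 1) = α + β + 2 by ring] at h
  rw [h]
  rw [Complex.betaIntegral, intervalIntegral.integral_of_le (by norm_num),
      integral_Ioc_eq_integral_Ioo]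
  rw [← Complex.ofReal_re (∫ u in Ioo (0:ℝ) 1, (u ^ α * (1 - u) ^ β)), ← integral_complex_ofReal]
  congr 1
  refine setIntegral_congr_fun measurableSet_Ioo fun x hx ↦ ?_
  have e1 : (x : ℂ) ^ (((α + 1 : ℝ) : ℂ) - 1) = ((x ^ α : ℝ) : ℂ) := by
    rw [Complex.ofReal_cpow hx.1.le]; push_cast; ring_nf
  have e2 : (1 - x : ℂ) ^ (((β + 1 : ℝ) : ℂ) - 1) = (((1 - x) ^ β : ℝ) : ℂ) := by
    rw [Complex.ofReal_cpow (by linarith [hx.2])]; push_cast; ring_nf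
  rw [e1, e2, ← Complex.ofReal_mul]

lemma wI_integrable {α β : ℝ} (hα : -1 < α) (hβ : -1 < β) {f : ℝ → ℝ} (hf : Continuous f) :
    IntegrableOn (fun u : ℝ => f u * (u ^ α * (1 - u) ^ β)) (Ioo 0 1) := by
  obtain ⟨M, hM⟩ := (isCompact_Icc (a := (0:ℝ)) (b := 1)).exists_bound_of_continuousOn
    hf.continuousOn
  refine Integrable.bdd_mul (c := M) (weight_integrable hα hβ) hf.aestronglyMeasurable ?_
  filter_upwards [ae_restrict_mem measurableSet_Ioo] with x hx
  exact hM x ⟨hx.1.le, hx.2.le⟩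

lemma wI_add {α β : ℝ} (hα : -1 < α) (hβ : -1 < β) {f g : ℝ → ℝ} (hf : Continuous f) (hg : Continuous g) :
    wI α β (fun u => f u + g u) = wI α β f + wI α β g := by
  unfold wI
  rw [← integral_add (wI_integrable hα hβ hf) (wI_integrable hα hβ hg)]
  congr 1; ext u; ring

lemma wI_finset_sum {α β : ℝ} (hα : -1 < α) (hβ : -1 < β) {ι : Type*} (s : Finset ι) (f : ι → ℝ → ℝ) (hf : ∀ i ∈ s, Continuous (f i)) :
    wI α β (fun u => ∑ i ∈ s, f i u) = ∑ i ∈ s, wI α β (f i) := by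
  unfold wI
  rw [← integral_finsetSum s (fun i hi => wI_integrable hα hβ (hf i hi))]
  congr 1; ext u; rw [Finset.sum_mul]

lemma wI_mono {α β : ℝ} (hα : -1 < α) (hβ : -1 < β) {f g : ℝ → ℝ} (hf : Continuous f) (hg : Continuous g)
    (h : ∀ u ∈ Ioo (0:ℝ) 1, f u ≤ g u) : wI α β f ≤ wI α β g := by
  refine setIntegral_mono_on (wI_integrable hα hβ hf) (wI_integrable hα hβ hg) measurableSet_Ioo ?_
  intro u hu
  have h1 : 0 ≤ u ^ α := Real.rpow_nonneg hu.1.le _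
  have h2 : 0 ≤ (1 - u) ^ β := Real.rpow_nonneg (by linarith [hu.2]) _
  exact mul_le_mul_of_nonneg_right (h u hu) (mul_nonneg h1 h2)

lemma wI_pow {α β : ℝ} (hα : -1 < α) (hβ : -1 < β) (k : ℕ) : wI α β (fun u => u ^ k) =
    Real.Gamma (α + k + 1) * Real.Gamma (β + 1) / Real.Gamma (α + β + k + 2) := by
  have hk : (0 : ℝ) ≤ k := Nat.cast_nonneg k
  have := weight_integral (α := α + k) (β := β) (by linarith) hβ
  rw [show α + β + (k:ℝ) + 2 = α + k + β + 2 by ring, ← this]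
  unfold wI
  refine setIntegral_congr_fun measurableSet_Ioo fun u hu ↦ ?_
  simp only
  rw [Real.rpow_add hu.1, Real.rpow_natCast]; ring


lemma wI_const_mul (α β c : ℝ) (f : ℝ → ℝ) :
    wI α β (fun u => c * f u) = c * wI α β f := by
  unfold wI
  rw [← integral_const_mul]
  congr 1; ext u; ring

lemma wI_nonneg (α β : ℝ) {f : ℝ → ℝ} (h : ∀ u ∈ Ioo (0:ℝ) 1, 0 ≤ f u) : 0 ≤ wI α β f := by
  refine setIntegral_nonneg measurableSet_Ioo fun u hu => ?_
  have h1 : 0 ≤ u ^ α := Real.rpow_nonneg hu.1.le _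
  have h2 : 0 ≤ (1 - u) ^ β := Real.rpow_nonneg (by linarith [hu.2]) _
  exact mul_nonneg (h u hu) (mul_nonneg h1 h2)

lemma wI_congr (α β : ℝ) {f g : ℝ → ℝ} (h : ∀ u ∈ Ioo (0:ℝ) 1, f u = g u) :
    wI α β f = wI α β g := by
  refine setIntegral_congr_fun measurableSet_Ioo fun u hu ↦ ?_
  rw [h u hu]

/-- Shifting a power of `u` into the weight. -/
lemma wI_shift_left (α β : ℝ) (f : ℝ → ℝ) : wI (α + 1) β f = wI α β (fun u => u * f u) := by
  refine setIntegral_congr_fun measurableSet_Ioo fun u hu ↦ ?_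
  simp only
  rw [Real.rpow_add hu.1, Real.rpow_one]; ring

lemma wI_shift_right (α β : ℝ) (f : ℝ → ℝ) :
    wI α (β + 1) f = wI α β (fun u => (1 - u) * f u) := by
  refine setIntegral_congr_fun measurableSet_Ioo fun u hu ↦ ?_
  simp only
  rw [Real.rpow_add (by linarith [hu.2]), Real.rpow_one]; ring

lemma sum_choose_poly (N : ℕ) (P : Polynomial ℝ) (hP : P.natDegree < N) :
    ∑ k ∈ Finset.range (N + 1), (-1 : ℝ) ^ k * (N.choose k : ℝ) * P.eval (k : ℝ) = 0 := by
  have h := congrFun (Polynomial.fwdDiff_iter_eq_zero_of_degree_lt hP) 0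
  rw [fwdDiff_iter_eq_sum_shift] at h
  simp only [zero_add, nsmul_eq_mul, mul_one, Pi.zero_apply, zsmul_eq_mul] at h
  have h2 : (-1 : ℝ) ^ N * ∑ k ∈ Finset.range (N + 1),
      (-1 : ℝ) ^ k * (N.choose k : ℝ) * P.eval (k : ℝ) = 0 := by
    rw [← h, Finset.mul_sum]
    refine Finset.sum_congr rfl fun k hk => ?_
    have hk' : k ≤ N := by simpa [Nat.lt_succ_iff] using hk
    have e : (-1 : ℝ) ^ N * (-1) ^ k = (-1) ^ (N - k) := by
      obtain ⟨m, rfl⟩ := Nat.exists_eq_add_of_le hk'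
      rw [Nat.add_sub_cancel_left, pow_add, mul_assoc, mul_comm ((-1:ℝ) ^ m), ← mul_assoc,
        ← mul_pow]
      simp
    push_cast
    rw [← e]; ring
  have h3 : (-1 : ℝ) ^ N ≠ 0 := by positivity
  exact (mul_eq_zero.1 h2).resolve_left h3

lemma qJ_eval (α β : ℝ) (N : ℕ) (u : ℝ) : (qJ α β N).eval u =
    ∑ k ∈ Finset.range (N + 1), qc α β N k * u ^ k := by
  simp [qJ, Polynomial.eval_finsetSum]

lemma natDegree_ascPoch_comp (j : ℕ) (x : ℝ) :
    ((ascPochhammer ℝ j).comp (Polynomial.X + Polynomial.C x)).natDegree = j := by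
  rw [Polynomial.natDegree_comp, ascPochhammer_natDegree, Polynomial.natDegree_X_add_C, mul_one]


lemma qJ_orth_pow {α β : ℝ} (hα : -1 < α) (hβ : -1 < β) (N j : ℕ) (hj : j < N) :
    wI α β (fun u => (qJ α β N).eval u * u ^ j) = 0 := by
  have hj0 : (0 : ℝ) ≤ j := Nat.cast_nonneg j
  have hN1 : (1 : ℝ) ≤ N := by exact_mod_cast (show 1 ≤ N by omega)
  have e : (fun u => (qJ α β N).eval u * u ^ j) = fun u : ℝ =>
      ∑ k ∈ Finset.range (N + 1), qc α β N k * u ^ (k + j) := by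
    ext u; rw [qJ_eval, Finset.sum_mul]; refine Finset.sum_congr rfl fun k _ => ?_; ring
  rw [e, wI_finset_sum hα hβ _ _ (fun i _ => by fun_prop)]
  simp only [wI_const_mul, wI_pow hα hβ]
  set P : Polynomial ℝ := (ascPochhammer ℝ j).comp (Polynomial.X + Polynomial.C (α + 1)) *
    (ascPochhammer ℝ (N - 1 - j)).comp (Polynomial.X + Polynomial.C (α + β + 2 + j)) with hP
  have hdeg : P.natDegree < N := by
    refine lt_of_le_of_lt Polynomial.natDegree_mul_le ?_
    rw [natDegree_ascPoch_comp, natDegree_ascPoch_comp]; omega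
  have h0 := sum_choose_poly N P hdeg
  have hA : 0 < (N : ℝ) + α + β + 1 := by linarith
  have key : ∀ k ∈ Finset.range (N + 1), qc α β N k *
      (Real.Gamma (α + ((k + j : ℕ) : ℝ) + 1) * Real.Gamma (β + 1) /
        Real.Gamma (α + β + ((k + j : ℕ) : ℝ) + 2)) =
      Real.Gamma (β + 1) * Real.Gamma (α + 1) / Real.Gamma (N + α + β + 1) *
        ((-1 : ℝ) ^ k * (N.choose k : ℝ) * P.eval (k : ℝ)) := by
    intro k _
    have hk0 : (0 : ℝ) ≤ k := Nat.cast_nonneg k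
    have hPe : P.eval (k : ℝ) = pc (α + 1 + k) j * pc (α + β + 2 + j + k) (N - 1 - j) := by
      simp only [hP, Polynomial.eval_mul, Polynomial.eval_comp, Polynomial.eval_add,
        Polynomial.eval_X, Polynomial.eval_C, pc]
      rw [add_comm (k : ℝ), add_comm (k : ℝ)]
    have g1 : Real.Gamma (α + ((k + j : ℕ) : ℝ) + 1) =
        pc (α + 1 + k) j * (pc (α + 1) k * Real.Gamma (α + 1)) := by
      rw [← Gamma_add_nat (by linarith), ← Gamma_add_nat (by linarith)]
      push_cast; ring_nf
    have g2 : pc (N + α + β + 1) k * Real.Gamma (N + α + β + 1) =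
        pc (α + β + 2 + j + k) (N - 1 - j) * Real.Gamma (α + β + ((k + j : ℕ) : ℝ) + 2) := by
      have : (((N - 1 - j : ℕ)) : ℝ) = N - 1 - j := by
        rw [Nat.cast_sub (by omega), Nat.cast_sub (by omega)]; simp
      rw [← Gamma_add_nat hA, show α + β + ((k + j : ℕ) : ℝ) + 2 = α + β + 2 + j + k by
        push_cast; ring, ← Gamma_add_nat (by linarith), this]
      congr 1; ring
    rw [hPe, g1, qc]
    have p1 := pc_pos (show 0 < α + 1 by linarith) k
    have p2 := Real.Gamma_pos_of_pos hA
    have p3 := Real.Gamma_pos_of_pos (show 0 < α + β + ((k + j : ℕ) : ℝ) + 2 by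
      push_cast; linarith)
    field_simp
    linear_combination (N.choose k : ℝ) * pc (α + 1 + k) j * Real.Gamma (α + 1) *
      Real.Gamma (β + 1) * g2
  rw [Finset.sum_congr rfl key, ← Finset.mul_sum, h0, mul_zero]

lemma qJ_orth {α β : ℝ} (hα : -1 < α) (hβ : -1 < β) (N : ℕ) (h : Polynomial ℝ) (hh : h.natDegree < N) :
    wI α β (fun u => (qJ α β N).eval u * h.eval u) = 0 := by
  have e : (fun u => (qJ α β N).eval u * h.eval u) = fun u : ℝ =>
      ∑ k ∈ Finset.range N, h.coeff k * ((qJ α β N).eval u * u ^ k) := by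
    ext u; rw [Polynomial.eval_eq_sum_range' hh, Finset.mul_sum]
    refine Finset.sum_congr rfl fun k _ => ?_; ring
  rw [e, wI_finset_sum hα hβ _ _ (fun i _ => by fun_prop)]
  refine Finset.sum_eq_zero fun k hk => ?_
  rw [wI_const_mul, qJ_orth_pow hα hβ N k (by simpa using hk), mul_zero]

/-- `∫ q_N^{(α+1)} w_α = 1 / S_N`. -/
lemma SJ_mul_int {α β : ℝ} (hα : -1 < α) (hβ : -1 < β) (N : ℕ) :
    SJ α β N * wI α β (fun u => (qJ (α + 1) β N).eval u) = 1 := by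
  induction N with
  | zero =>
    have e : (fun u => (qJ (α + 1) β 0).eval u) = fun u : ℝ => u ^ 0 := by
      ext u; simp [qJ_eval, qc, pc_zero]
    rw [e, wI_pow hα hβ]
    have h1 := Real.Gamma_pos_of_pos (show 0 < α + β + 2 by linarith)
    have h3 := Real.Gamma_pos_of_pos (show 0 < α + 1 by linarith)
    have h4 := Real.Gamma_pos_of_pos (show 0 < α + 2 by linarith)
    have h5 := Real.Gamma_pos_of_pos (show 0 < β + 1 by linarith)
    simp only [SJ, Nat.cast_zero, zero_add, add_zero, Nat.factorial_zero, Nat.cast_one, mul_one]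
    field_simp
  | succ N ih =>
    rw [← wI_const_mul] at ih ⊢
    have h := qJ_rec hα hβ N
    have e : (fun u => SJ α β (N + 1) * (qJ (α + 1) β (N + 1)).eval u) = fun u : ℝ =>
        (SJ α β N * (qJ (α + 1) β N).eval u) +
          ((SJ α β (N + 1) - SJ α β N) * ((qJ α β (N + 1)).eval u * u ^ 0)) := by
      ext u
      have := congrArg (Polynomial.eval u) h
      simpa [Polynomial.eval_smul] using this
    rw [e, wI_add hα hβ (by fun_prop) (by fun_prop), wI_const_mul _ _ _ (fun u => _ * u ^ 0),
      qJ_orth_pow hα hβ (N + 1) 0 (by omega), ih]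
    ring

/-- Reproducing property at the endpoint. -/
lemma qJ_repr {α β : ℝ} (hα : -1 < α) (hβ : -1 < β) (N : ℕ) (h : Polynomial ℝ) (hh : h.natDegree ≤ N) :
    SJ α β N * wI α β (fun u => (qJ (α + 1) β N).eval u * h.eval u) = h.eval 0 := by
  have hd : h = Polynomial.X * h.divX + Polynomial.C (h.coeff 0) := by
    rw [Polynomial.X_mul_divX_add]
  have e : (fun u => (qJ (α + 1) β N).eval u * h.eval u) = fun u : ℝ =>
      (u * ((qJ (α + 1) β N).eval u * h.divX.eval u)) +
        h.coeff 0 * ((qJ (α + 1) β N).eval u) := by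
    ext u
    have hu : h.eval u = u * h.divX.eval u + h.coeff 0 := by
      conv_lhs => rw [hd]
      rw [Polynomial.eval_add, Polynomial.eval_mul, Polynomial.eval_X, Polynomial.eval_C]
    linear_combination (qJ (α + 1) β N).eval u * hu
  have h1 : wI α β (fun u => u * ((qJ (α + 1) β N).eval u * h.divX.eval u)) = 0 := by
    rcases Nat.eq_zero_or_pos N with h0 | h0
    · have : h.divX = 0 := by
        have : h.natDegree = 0 := by omega
        rw [Polynomial.divX_eq_zero_iff]
        exact Polynomial.eq_C_of_natDegree_eq_zero this
      simp [this, wI]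
    · rw [← wI_shift_left]
      refine qJ_orth (by linarith) hβ N _ ?_
      rw [Polynomial.natDegree_divX_eq_natDegree_tsub_one]; omega
  rw [e, wI_add hα hβ (by fun_prop) (by fun_prop), h1, wI_const_mul, zero_add, mul_left_comm,
    SJ_mul_int hα hβ, mul_one, Polynomial.coeff_zero_eq_eval_zero]

lemma qJ_sq {α β : ℝ} (hα : -1 < α) (hβ : -1 < β) (N : ℕ) :
    wI α β (fun u => ((qJ (α + 1) β N).eval u) ^ 2) = 1 / SJ α β N := by
  have h := qJ_repr hα hβ N (qJ (α + 1) β N) (qJ_natDegree _ _ _)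
  rw [qJ_eval_zero] at h
  have := SJ_pos hα hβ N
  field_simp
  simpa [sq, mul_comm] using h


lemma SJ_ratio_mono {α α' β : ℝ} (hα : -1 < α) (hβ : -1 < β) (h : α ≤ α') (N : ℕ) :
    SJ α' β N * SJ α β (N + 1) ≤ SJ α' β (N + 1) * SJ α β N := by
  have hN : (0 : ℝ) ≤ N := Nat.cast_nonneg N
  have h1 := SJ_succ hα hβ N
  have h2 := SJ_succ (show -1 < α' by linarith) hβ N
  have p1 := SJ_pos hα hβ N
  have p2 := SJ_pos (show -1 < α' by linarith) hβ N
  have hD : 0 < ((N:ℝ) + 1) * (N + 1 + β) := mul_pos (by linarith) (by linarith)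
  refine le_of_mul_le_mul_right ?_ hD
  calc _ = SJ α' β N * (SJ α β (N + 1) * (((N:ℝ) + 1) * (N + 1 + β))) := by ring
    _ = SJ α' β N * SJ α β N * ((N + α + β + 2) * (N + α + 2)) := by rw [h1]; ring
    _ ≤ SJ α' β N * SJ α β N * ((N + α' + β + 2) * (N + α' + 2)) := by
      have : 0 ≤ (N:ℝ) + α + 2 := by linarith
      have : 0 ≤ (N:ℝ) + α' + β + 2 := by linarith
      gcongr
    _ = (SJ α' β (N + 1) * (((N:ℝ) + 1) * (N + 1 + β))) * SJ α β N := by rw [h2]; ring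
    _ = _ := by ring

/-- The weights of the averaging formula. -/
def tJ (α β : ℝ) : ℕ → ℝ
  | 0 => SJ α β 0
  | j + 1 => SJ α β (j + 1) - SJ α β j

lemma tJ_nonneg {α β : ℝ} (hα : -1 < α) (hβ : -1 < β) (j : ℕ) : 0 ≤ tJ α β j := by
  cases j with
  | zero => exact (SJ_pos hα hβ 0).le
  | succ j => exact sub_nonneg.2 (SJ_le_succ hα hβ j)

lemma tJ_avg {α β : ℝ} (hα : -1 < α) (hβ : -1 < β) (N : ℕ) (u : ℝ) :
    SJ α β N * (qJ (α + 1) β N).eval u =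
      ∑ j ∈ Finset.range (N + 1), tJ α β j * (qJ α β j).eval u := by
  induction N with
  | zero => simp [tJ, qJ_eval, qc, pc_zero]
  | succ N ih =>
    rw [Finset.sum_range_succ, ← ih]
    have := congrArg (Polynomial.eval u) (qJ_rec hα hβ N)
    simpa [Polynomial.eval_smul, tJ] using this

lemma tJ_sum_le {α α' β : ℝ} (hα : -1 < α) (hβ : -1 < β) (h : α ≤ α') (N : ℕ) :
    ∑ j ∈ Finset.range (N + 1), tJ α' β j / √(SJ α β j) ≤ 2 * SJ α' β N / √(SJ α β N) := by
  have hα' : -1 < α' := by linarith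
  induction N with
  | zero =>
    simp only [zero_add, Finset.range_one, Finset.sum_singleton, tJ]
    have := SJ_pos hα' hβ 0
    gcongr; linarith
  | succ N ih =>
    rw [Finset.sum_range_succ]
    have p1 := SJ_pos hα hβ N
    have p2 := SJ_pos hα hβ (N + 1)
    have q1 := SJ_pos hα' hβ N
    have q2 := SJ_pos hα' hβ (N + 1)
    have s1 := Real.sqrt_pos.2 p1
    have s2 := Real.sqrt_pos.2 p2
    have hr := SJ_ratio_mono hα hβ h N
    have key : 2 * SJ α' β N / √(SJ α β N) ≤
        (SJ α' β (N + 1) + SJ α' β N) / √(SJ α β (N + 1)) := by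
      rw [div_le_div_iff₀ s1 s2]
      refine le_of_sq_le_sq ?_ (by positivity)
      rw [mul_pow (2 * SJ α' β N), mul_pow (SJ α' β (N + 1) + SJ α' β N), Real.sq_sqrt p1.le,
        Real.sq_sqrt p2.le]
      nlinarith [mul_le_mul_of_nonneg_left hr q1.le,
        mul_nonneg (sq_nonneg (SJ α' β (N + 1) - SJ α' β N)) p1.le]
    have e : 2 * SJ α' β (N + 1) / √(SJ α β (N + 1)) =
        (SJ α' β (N + 1) + SJ α' β N) / √(SJ α β (N + 1)) +
        (SJ α' β (N + 1) - SJ α' β N) / √(SJ α β (N + 1)) := by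
      rw [← add_div]; ring
    have ht : tJ α' β (N + 1) = SJ α' β (N + 1) - SJ α' β N := rfl
    rw [e, ht]
    linarith

/-- Each increment of the first parameter costs at most a factor 4 in the squared norm. -/
lemma qJ_chain {α β : ℝ} (hα : -1 < α) (hβ : -1 < β) (m : ℕ) : ∀ N : ℕ,
    wI α β (fun u => ((qJ (α + m + 1) β N).eval u) ^ 2) ≤ 4 ^ m / SJ α β N := by
  induction m with
  | zero => intro N; simpa using (qJ_sq hα hβ N).le
  | succ m ih =>
    intro N
    have hm : (0 : ℝ) ≤ m := Nat.cast_nonneg m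
    set α' : ℝ := α + m + 1 with hα'
    have h1 : -1 < α' := by linarith
    have e : α + ((m + 1 : ℕ) : ℝ) + 1 = α' + 1 := by push_cast; ring
    rw [e]
    set A : ℝ := ∑ j ∈ Finset.range (N + 1), tJ α' β j / √(SJ α β j) with hA
    have hA0 : 0 ≤ A := Finset.sum_nonneg fun j _ =>
      div_nonneg (tJ_nonneg h1 hβ j) (Real.sqrt_nonneg _)
    have hAle : A ≤ 2 * SJ α' β N / √(SJ α β N) := tJ_sum_le hα hβ (by linarith) N
    have hT := SJ_pos h1 hβ N
    have hS := SJ_pos hα hβ N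
    have hpt : ∀ u : ℝ, (SJ α' β N) ^ 2 * ((qJ (α' + 1) β N).eval u) ^ 2 ≤
        ∑ j ∈ Finset.range (N + 1), (A * (tJ α' β j * √(SJ α β j))) * ((qJ α' β j).eval u) ^ 2 := by
      intro u
      rw [← mul_pow, tJ_avg h1 hβ]
      have := Finset.sum_sq_le_sum_mul_sum_of_sq_le_mul (Finset.range (N + 1))
        (r := fun j => tJ α' β j * (qJ α' β j).eval u)
        (f := fun j => tJ α' β j / √(SJ α β j))
        (g := fun j => tJ α' β j * √(SJ α β j) * ((qJ α' β j).eval u) ^ 2)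
        (fun j _ => div_nonneg (tJ_nonneg h1 hβ j) (Real.sqrt_nonneg _))
        (fun j _ => mul_nonneg (mul_nonneg (tJ_nonneg h1 hβ j) (Real.sqrt_nonneg _)) (sq_nonneg _))
        (fun j _ => by
          have := Real.sqrt_pos.2 (SJ_pos hα hβ j)
          refine le_of_eq ?_
          field_simp)
      refine this.trans (le_of_eq ?_)
      rw [Finset.mul_sum]
      refine Finset.sum_congr rfl fun j _ => ?_
      ring
    have hIntg := wI_mono hα hβ (by fun_prop) (by fun_prop) (fun u _ => hpt u)
    rw [wI_finset_sum hα hβ _ _ (fun i _ => by fun_prop), wI_const_mul] at hIntg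
    simp only [wI_const_mul] at hIntg
    have hsum : ∑ j ∈ Finset.range (N + 1), (A * (tJ α' β j * √(SJ α β j))) *
        wI α β (fun u => ((qJ α' β j).eval u) ^ 2) ≤ 4 ^ m * A ^ 2 := by
      have : 4 ^ m * A ^ 2 = ∑ j ∈ Finset.range (N + 1),
          (A * (tJ α' β j * √(SJ α β j))) * (4 ^ m / SJ α β j) := by
        have e2 : 4 ^ m * A ^ 2 = (4 ^ m * A) * A := by ring
        rw [e2]
        conv_lhs => rw [hA]
        rw [← hA, Finset.mul_sum]
        refine Finset.sum_congr rfl fun j _ => ?_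
        have hj := SJ_pos hα hβ j
        have hs := Real.sqrt_pos.2 hj
        have hss := Real.sq_sqrt hj.le
        field_simp
        linear_combination (-A * tJ α' β j) * hss
      rw [this]
      refine Finset.sum_le_sum fun j _ => ?_
      exact mul_le_mul_of_nonneg_left (ih j)
        (mul_nonneg hA0 (mul_nonneg (tJ_nonneg h1 hβ j) (Real.sqrt_nonneg _)))
    have h3 : A ^ 2 ≤ 4 * (SJ α' β N) ^ 2 / SJ α β N := by
      calc A ^ 2 ≤ (2 * SJ α' β N / √(SJ α β N)) ^ 2 := by gcongr
        _ = _ := by rw [div_pow, mul_pow, Real.sq_sqrt hS.le]; norm_num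
    have h4 : (SJ α' β N) ^ 2 * wI α β (fun u => ((qJ (α' + 1) β N).eval u) ^ 2) ≤
        (SJ α' β N) ^ 2 * (4 ^ (m + 1) / SJ α β N) := by
      refine (hIntg.trans hsum).trans ?_
      calc 4 ^ m * A ^ 2 ≤ 4 ^ m * (4 * (SJ α' β N) ^ 2 / SJ α β N) := by gcongr
        _ = _ := by ring
    exact le_of_mul_le_mul_left h4 (by positivity)

lemma Gamma_interp_upper {x θ : ℝ} (hx : 0 < x) (h0 : 0 ≤ θ) (h1 : θ < 1) :
    Real.Gamma (x + 1 - θ) ≤ Real.Gamma (x + 1) ^ (1 - θ) * Real.Gamma x ^ θ := by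
  rcases h0.eq_or_lt with rfl | h0
  · simp
  · have := Real.Gamma_mul_add_mul_le_rpow_Gamma_mul_rpow_Gamma (s := x + 1) (t := x)
      (a := 1 - θ) (b := θ) (by linarith) hx (by linarith) h0 (by ring)
    rwa [show (1 - θ) * (x + 1) + θ * x = x + 1 - θ by ring] at this

lemma Gamma_interp_lower {x θ : ℝ} (hx : 0 < x) (h0 : 0 ≤ θ) (h1 : θ < 1)
    (h3 : x + 1 - θ ≤ 3 * x) :
    Real.Gamma (x + 1) ^ (1 - θ) * Real.Gamma x ^ θ ≤ 3 * Real.Gamma (x + 1 - θ) := by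
  have hy : 0 < x + 1 - θ := by linarith
  have g0 := Real.Gamma_pos_of_pos hx
  have g2 := Real.Gamma_pos_of_pos hy
  have g1 := Real.Gamma_pos_of_pos (show 0 < x + 1 by linarith)
  have hb : Real.Gamma (x + 1) ≤ Real.Gamma (x + 1 - θ) * (x + 1 - θ) ^ θ := by
    rcases h0.eq_or_lt with rfl | h0
    · simp
    · have := Real.Gamma_mul_add_mul_le_rpow_Gamma_mul_rpow_Gamma (s := x + 1 - θ)
        (t := x + 1 - θ + 1) (a := 1 - θ) (b := θ) (by linarith) (by linarith) (by linarith) h0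
        (by ring)
      rw [show (1 - θ) * (x + 1 - θ) + θ * (x + 1 - θ + 1) = x + 1 by ring,
        Real.Gamma_add_one (s := x + 1 - θ) hy.ne', Real.mul_rpow hy.le g2.le] at this
      refine this.trans (le_of_eq ?_)
      have : Real.Gamma (x + 1 - θ) ^ (1 - θ) * Real.Gamma (x + 1 - θ) ^ θ =
          Real.Gamma (x + 1 - θ) := by
        rw [← Real.rpow_add g2]; simp
      linear_combination (x + 1 - θ) ^ θ * this
  have e : Real.Gamma (x + 1) ^ (1 - θ) * Real.Gamma x ^ θ = Real.Gamma (x + 1) / x ^ θ := by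
    have : Real.Gamma x = Real.Gamma (x + 1) / x := by
      rw [Real.Gamma_add_one hx.ne']; field_simp
    rw [this, Real.div_rpow g1.le hx.le, ← mul_div_assoc, ← Real.rpow_add g1]; simp
  have hxt : 0 < x ^ θ := Real.rpow_pos_of_pos hx _
  rw [e, div_le_iff₀ hxt]
  refine hb.trans ?_
  have h4 : (x + 1 - θ) ^ θ ≤ (3 * x) ^ θ := Real.rpow_le_rpow hy.le h3 h0
  rw [Real.mul_rpow (by norm_num) hx.le] at h4
  have h5 : (3:ℝ) ^ θ ≤ 3 := by
    calc (3:ℝ) ^ θ ≤ 3 ^ (1:ℝ) := Real.rpow_le_rpow_of_exponent_le (by norm_num) h1.le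
      _ = 3 := by simp
  calc Real.Gamma (x + 1 - θ) * (x + 1 - θ) ^ θ ≤ Real.Gamma (x + 1 - θ) * (3 ^ θ * x ^ θ) := by
        gcongr
    _ ≤ Real.Gamma (x + 1 - θ) * (3 * x ^ θ) := by gcongr
    _ = _ := by ring

lemma SJ_interp {b β θ : ℝ} (hb : 0 < b) (hβ : -1 < β) (h0 : 0 ≤ θ) (h1 : θ < 1)
    (h3 : b + 1 - θ ≤ 3 * b) (N : ℕ) :
    SJ (b - θ) β N ≤ 9 * (SJ b β N ^ (1 - θ) * SJ (b - 1) β N ^ θ) := by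
  have hN : (0 : ℝ) ≤ N := Nat.cast_nonneg N
  have key : ∀ A1 A0 B1 B0 C1 C0 D1 D0 F A B C D : ℝ, 0 < A1 → 0 < A0 → 0 < B1 → 0 < B0 →
      0 < C1 → 0 < C0 → 0 < D1 → 0 < D0 → 0 < F → 0 < A → 0 < B → 0 < C → 0 < D →
      A ≤ A1 ^ (1 - θ) * A0 ^ θ → B ≤ B1 ^ (1 - θ) * B0 ^ θ →
      C1 ^ (1 - θ) * C0 ^ θ ≤ 3 * C → D1 ^ (1 - θ) * D0 ^ θ ≤ 3 * D →
      A * B / (C * D * F) ≤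
        9 * ((A1 * B1 / (C1 * D1 * F)) ^ (1 - θ) * (A0 * B0 / (C0 * D0 * F)) ^ θ) := by
    intro A1 A0 B1 B0 C1 C0 D1 D0 F A B C D a1 a0 b1 b0 c1 c0 d1 d0 f a b c d hA hB hC hD
    rw [Real.div_rpow (by positivity) (by positivity), Real.div_rpow (by positivity) (by positivity),
      Real.mul_rpow a1.le b1.le, Real.mul_rpow a0.le b0.le, Real.mul_rpow (by positivity) f.le,
      Real.mul_rpow (by positivity) f.le, Real.mul_rpow c1.le d1.le, Real.mul_rpow c0.le d0.le]
    have hF : F ^ (1 - θ) * F ^ θ = F := by rw [← Real.rpow_add f]; simp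
    have e : 9 * (A1 ^ (1 - θ) * B1 ^ (1 - θ) / (C1 ^ (1 - θ) * D1 ^ (1 - θ) * F ^ (1 - θ)) *
        (A0 ^ θ * B0 ^ θ / (C0 ^ θ * D0 ^ θ * F ^ θ))) =
        9 * ((A1 ^ (1 - θ) * A0 ^ θ) * (B1 ^ (1 - θ) * B0 ^ θ) /
          ((C1 ^ (1 - θ) * C0 ^ θ) * (D1 ^ (1 - θ) * D0 ^ θ) * F)) := by
      rw [div_mul_div_comm]
      conv_rhs => rw [← hF]
      congr 1
      congr 1 <;> ring
    rw [e]
    calc A * B / (C * D * F) = 9 * (A * B / ((3 * C) * (3 * D) * F)) := by field_simp; norm_num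
      _ ≤ _ := by gcongr
  have G : ∀ x : ℝ, 0 < x → 0 < Real.Gamma x := fun x hx => Real.Gamma_pos_of_pos hx
  have hf : (0:ℝ) < N.factorial := by exact_mod_cast N.factorial_pos
  have r1 := Gamma_interp_upper (x := N + b + β + 1) (by linarith) h0 h1
  have r2 := Gamma_interp_upper (x := N + b + 1) (by linarith) h0 h1
  have r3 := Gamma_interp_lower (x := b) hb h0 h1 h3
  have r4 := Gamma_interp_lower (x := b + 1) (by linarith) h0 h1 (by linarith)
  have := key (Real.Gamma (N + b + β + 1 + 1)) (Real.Gamma (N + b + β + 1))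
    (Real.Gamma (N + b + 1 + 1)) (Real.Gamma (N + b + 1))
    (Real.Gamma (b + 1)) (Real.Gamma b) (Real.Gamma (b + 1 + 1)) (Real.Gamma (b + 1))
    (N.factorial * Real.Gamma (N + β + 1)) (Real.Gamma (N + b + β + 1 + 1 - θ))
    (Real.Gamma (N + b + 1 + 1 - θ)) (Real.Gamma (b + 1 - θ)) (Real.Gamma (b + 1 + 1 - θ))
    (G _ (by linarith)) (G _ (by linarith)) (G _ (by linarith)) (G _ (by linarith))
    (G _ (by linarith)) (G _ (by linarith)) (G _ (by linarith)) (G _ (by linarith))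
    (mul_pos hf (G _ (by linarith)))
    (G _ (by linarith)) (G _ (by linarith)) (G _ (by linarith)) (G _ (by linarith)) r1 r2 r3 r4
  unfold SJ
  convert this using 2 <;> ring_nf

/-- The key estimate of the `L²` norm with interpolation. -/
lemma qJ_norm_bound {b β θ : ℝ} (hb : 0 < b) (hβ : -1 < β) (h0 : 0 ≤ θ) (h1 : θ < 1)
    (h3 : b + 1 - θ ≤ 3 * b) (m N : ℕ) :
    wI (b - θ) β (fun u => ((qJ (b + m + 1) β N).eval u) ^ 2) ≤
      9 * 4 ^ (m + 1) / SJ (b - θ) β N := by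
  set q : ℝ → ℝ := fun u => ((qJ (b + m + 1) β N).eval u) ^ 2 with hq
  have hqc : Continuous q := by rw [hq]; fun_prop
  have hS1 := SJ_pos (show -1 < b by linarith) hβ N
  have hS0 := SJ_pos (show -1 < b - 1 by linarith) hβ N
  have hS := SJ_pos (show -1 < b - θ by linarith) hβ N
  set M1 : ℝ := 4 ^ (m + 1) / SJ b β N with hM1
  set M0 : ℝ := 4 ^ (m + 1) / SJ (b - 1) β N with hM0
  have pM1 : 0 < M1 := by positivity
  have pM0 : 0 < M0 := by positivity
  have c1 : wI b β q ≤ M1 := by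
    refine (qJ_chain (by linarith) hβ m N).trans ?_
    rw [hM1]; gcongr
    · norm_num
    · omega
  have c0 : wI (b - 1) β q ≤ M0 := by
    have := qJ_chain (show -1 < b - 1 by linarith) hβ (m + 1) N
    rwa [show b - 1 + ((m + 1 : ℕ) : ℝ) + 1 = b + m + 1 by push_cast; ring] at this
  have hpt : ∀ u ∈ Ioo (0:ℝ) 1, q u * (u ^ (b - θ) * (1 - u) ^ β) ≤
      M1 ^ (1 - θ) * M0 ^ θ * ((1 - θ) / M1 * (q u * (u ^ b * (1 - u) ^ β)) +
        θ / M0 * (q u * (u ^ (b - 1) * (1 - u) ^ β))) := by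
    intro u hu
    have hq0 : 0 ≤ q u := sq_nonneg _
    have hw : 0 ≤ (1 - u) ^ β := Real.rpow_nonneg (by linarith [hu.2]) _
    have hu1 : 0 < u ^ b := Real.rpow_pos_of_pos hu.1 _
    have hu0 : 0 < u ^ (b - 1) := Real.rpow_pos_of_pos hu.1 _
    have am := Real.geom_mean_le_arith_mean2_weighted (w₁ := 1 - θ) (w₂ := θ)
      (p₁ := u ^ b / M1) (p₂ := u ^ (b - 1) / M0) (by linarith) h0 (by positivity) (by positivity)
      (by ring)
    have e : u ^ (b - θ) = M1 ^ (1 - θ) * M0 ^ θ *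
        ((u ^ b / M1) ^ (1 - θ) * (u ^ (b - 1) / M0) ^ θ) := by
      rw [Real.div_rpow hu1.le pM1.le, Real.div_rpow hu0.le pM0.le, ← Real.rpow_mul hu.1.le,
        ← Real.rpow_mul hu.1.le]
      have p1 := Real.rpow_pos_of_pos pM1 (1 - θ)
      have p0 := Real.rpow_pos_of_pos pM0 θ
      field_simp
      rw [← Real.rpow_add hu.1]; ring_nf
    rw [e]
    calc q u * (M1 ^ (1 - θ) * M0 ^ θ * ((u ^ b / M1) ^ (1 - θ) * (u ^ (b - 1) / M0) ^ θ) *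
          (1 - u) ^ β)
        ≤ q u * (M1 ^ (1 - θ) * M0 ^ θ * ((1 - θ) * (u ^ b / M1) + θ * (u ^ (b - 1) / M0)) *
          (1 - u) ^ β) := by gcongr
      _ = _ := by ring
  have i1 := wI_integrable (show -1 < b by linarith) hβ hqc
  have i0 := wI_integrable (show -1 < b - 1 by linarith) hβ hqc
  have iθ := wI_integrable (show -1 < b - θ by linarith) hβ hqc
  have hIntg : wI (b - θ) β q ≤ M1 ^ (1 - θ) * M0 ^ θ * ((1 - θ) / M1 * wI b β q +
      θ / M0 * wI (b - 1) β q) := by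
    unfold wI
    rw [← integral_const_mul, ← integral_const_mul, ← integral_add (i1.const_mul _)
      (i0.const_mul _), ← integral_const_mul]
    exact setIntegral_mono_on iθ (((i1.const_mul _).add (i0.const_mul _)).const_mul _)
      measurableSet_Ioo hpt
  have h5 : (1 - θ) / M1 * wI b β q + θ / M0 * wI (b - 1) β q ≤ 1 := by
    calc _ ≤ (1 - θ) / M1 * M1 + θ / M0 * M0 := by
          have : 0 ≤ 1 - θ := by linarith
          gcongr
      _ = 1 := by field_simp; ring
  refine hIntg.trans ?_
  have p1 := Real.rpow_pos_of_pos pM1 (1 - θ)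
  have p0 := Real.rpow_pos_of_pos pM0 θ
  refine (mul_le_of_le_one_right (by positivity) h5).trans ?_
  have hi := SJ_interp hb hβ h0 h1 h3 N
  rw [hM1, hM0, Real.div_rpow (by positivity) hS1.le, Real.div_rpow (by positivity) hS0.le,
    div_mul_div_comm, ← Real.rpow_add (by positivity)]
  rw [show 1 - θ + θ = 1 by ring, Real.rpow_one]
  have s1 := Real.rpow_pos_of_pos hS1 (1 - θ)
  have s0 := Real.rpow_pos_of_pos hS0 θ
  rw [div_le_div_iff₀ (by positivity) hS]
  have : (0:ℝ) < 4 ^ (m + 1) := by positivity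
  nlinarith

lemma jacobiP_one (α β : ℝ) (n : ℕ) : jacobiP α β n 1 =
    Real.sqrt ((2 * (n : ℝ) + α + β + 1) / 2 ^ (α + β + 1) *
      (Real.Gamma ((n : ℝ) + α + β + 1) * (n.factorial : ℝ) /
        (Real.Gamma ((n : ℝ) + α + 1) * Real.Gamma ((n : ℝ) + β + 1)))) *
    (Real.Gamma (α + n + 1) / ((n.factorial : ℝ) * Real.Gamma (α + β + n + 1))) *
    (Real.Gamma (α + β + n + 1) / Real.Gamma (α + 1)) := by
  unfold jacobiP
  congr 1
  rw [Finset.sum_eq_single 0]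
  · simp
  · intro b _ hb; simp [hb]
  · simp

lemma jacobiP_eq {α β : ℝ} (hα : -1 < α) (hab : 0 < α + β + 1) (n : ℕ) (x : ℝ) :
    jacobiP α β n x = jacobiP α β n 1 * (qJ α β n).eval ((1 - x) / 2) := by
  have hn : (0 : ℝ) ≤ n := Nat.cast_nonneg n
  rw [jacobiP_one]
  unfold jacobiP
  rw [mul_assoc _ (_ / Real.Gamma (α + 1))]
  congr 1
  rw [qJ_eval, Finset.mul_sum]
  refine Finset.sum_congr rfl fun m _ => ?_
  unfold qc
  have h1 : Real.Gamma (α + β + n + m + 1) = pc (n + α + β + 1) m * Real.Gamma (α + β + n + 1) := by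
    rw [show α + β + n + m + 1 = (n + α + β + 1) + (m : ℝ) by ring, Gamma_add_nat (by linarith)]
    ring_nf
  have h2 : Real.Gamma (α + m + 1) = pc (α + 1) m * Real.Gamma (α + 1) := by
    rw [show α + m + 1 = (α + 1) + (m : ℝ) by ring, Gamma_add_nat (by linarith)]
  have h3 : ((x - 1) / 2) ^ m = (-1) ^ m * ((1 - x) / 2) ^ m := by
    rw [← mul_pow]; ring
  rw [h1, h2, h3]
  have p1 := pc_pos (show 0 < α + 1 by linarith) m
  have p2 := Real.Gamma_pos_of_pos (show 0 < α + 1 by linarith)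
  field_simp

lemma jacobiP_one_sq {α β : ℝ} (hα : -1 < α) (hβ : -1 < β) (hab : 0 < α + β + 1) (n : ℕ) :
    (jacobiP α β n 1) ^ 2 = tJ α β n / 2 ^ (α + β + 1) := by
  have hn : (0 : ℝ) ≤ n := Nat.cast_nonneg n
  have G : ∀ x : ℝ, 0 < x → 0 < Real.Gamma x := fun x hx => Real.Gamma_pos_of_pos hx
  have g1 := G (n + α + β + 1) (by linarith)
  have g2 := G (n + α + 1) (by linarith)
  have g3 := G (n + β + 1) (by linarith)
  have g4 := G (α + 1) (by linarith)
  have hf : (0 : ℝ) < n.factorial := by exact_mod_cast n.factorial_pos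
  have h2 : (0:ℝ) < 2 ^ (α + β + 1) := by positivity
  have hs : 0 < 2 * (n:ℝ) + α + β + 1 := by linarith
  have W : tJ α β n = (2 * n + α + β + 1) * Real.Gamma (n + α + β + 1) * Real.Gamma (n + α + 1) /
      (n.factorial * Real.Gamma (n + β + 1) * Real.Gamma (α + 1) ^ 2) := by
    cases n with
    | zero =>
      simp only [tJ, SJ]
      rw [show ((0:ℕ):ℝ) + α + β + 2 = (α + β + 1) + 1 by push_cast; ring,
        Real.Gamma_add_one (s := α + β + 1) (by linarith)]
      have := G (α + 2) (by linarith)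
      have e : ((0:ℕ):ℝ) = 0 := by simp
      rw [e] at *
      simp only [zero_add, mul_zero, Nat.factorial_zero, Nat.cast_one] at *
      field_simp
    | succ N =>
      have hN : (0 : ℝ) ≤ N := Nat.cast_nonneg N
      have h := SJ_succ_sub hα hβ N
      have hne : ((N:ℝ) + 1) * (N + 1 + β) ≠ 0 := (mul_pos (by linarith) (by linarith)).ne'
      have h' : tJ α β (N + 1) = SJ α β N * ((α + 1) * (2 * N + α + β + 3)) /
          (((N:ℝ) + 1) * (N + 1 + β)) := by
        rw [eq_div_iff hne, ← h]; rfl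
      rw [h', SJ, show α + 2 = (α + 1) + 1 by ring, Real.Gamma_add_one (s := α + 1) (by linarith),
        show ((N + 1 : ℕ) : ℝ) + α + β + 1 = N + α + β + 2 by push_cast; ring,
        show ((N + 1 : ℕ) : ℝ) + α + 1 = N + α + 2 by push_cast; ring,
        show ((N + 1 : ℕ) : ℝ) + β + 1 = (N + β + 1) + 1 by push_cast; ring,
        Real.Gamma_add_one (s := N + β + 1) (by linarith), Nat.factorial_succ]
      have k1 := G (N + β + 1) (by linarith)
      have k2 : (0 : ℝ) < N.factorial := by exact_mod_cast N.factorial_pos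
      have k3 : α + 1 ≠ 0 := by linarith
      have k4 : (N:ℝ) + 1 + β ≠ 0 := by linarith
      have k5 : (N:ℝ) + β + 1 ≠ 0 := by linarith
      push_cast
      field_simp
      ring
  rw [W, jacobiP_one, mul_pow, mul_pow, Real.sq_sqrt (by positivity)]
  rw [show α + β + n + 1 = n + α + β + 1 by ring, show α + n + 1 = n + α + 1 by ring]
  field_simp

lemma tJ_pos {α β : ℝ} (hα : -1 < α) (hβ : -1 < β) (j : ℕ) : 0 < tJ α β j := by
  cases j with
  | zero => exact SJ_pos hα hβ 0
  | succ N =>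
    have hN : (0 : ℝ) ≤ N := Nat.cast_nonneg N
    have h := SJ_succ_sub hα hβ N
    have h1 : 0 < ((N:ℝ) + 1) * (N + 1 + β) := mul_pos (by linarith) (by linarith)
    have h2 : 0 < SJ α β N * ((α + 1) * (2 * N + α + β + 3)) :=
      mul_pos (SJ_pos hα hβ N) (mul_pos (by linarith) (by linarith))
    rw [← h] at h2
    exact pos_of_mul_pos_left h2 h1.le

lemma jacobiP_one_ne {α β : ℝ} (hα : -1 < α) (hβ : -1 < β) (hab : 0 < α + β + 1) (n : ℕ) :
    jacobiP α β n 1 ≠ 0 := by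
  intro h
  have h1 := jacobiP_one_sq hα hβ hab n
  have := tJ_pos hα hβ n
  have h2 : 0 < tJ α β n / 2 ^ (α + β + 1) := by positivity
  rw [← h1, h] at h2
  simp at h2

lemma jacobiK_eq {α β : ℝ} (hα : -1 < α) (hβ : -1 < β) (hab : 0 < α + β + 1) (N : ℕ) (x : ℝ) :
    jacobiK α β (N + 1) x =
      SJ α β N * (qJ (α + 1) β N).eval ((1 - x) / 2) / 2 ^ (α + β + 1) := by
  rw [tJ_avg hα hβ, Finset.sum_div]
  unfold jacobiK
  refine Finset.sum_congr rfl fun j _ => ?_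
  rw [jacobiP_eq hα hab j x, ← mul_assoc, ← sq, jacobiP_one_sq hα hβ hab]
  ring

/-- Normalizing constant of the zonal weight. -/
def cS (d : ℕ) : ℝ := Real.Gamma d / Real.Gamma ((d : ℝ) / 2) ^ 2

lemma cS_pos {d : ℕ} (hd : 1 ≤ d) : 0 < cS d := by
  have : (1:ℝ) ≤ d := by exact_mod_cast hd
  have h1 := Real.Gamma_pos_of_pos (show (0:ℝ) < d by linarith)
  have h2 := Real.Gamma_pos_of_pos (show (0:ℝ) < d / 2 by linarith)
  unfold cS; positivity

lemma sphK_eq {d : ℕ} (hd : 3 ≤ d) (N : ℕ) (x : ℝ) :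
    sphK d (N + 1) x = SJ ((d : ℝ) / 2 - 1) ((d : ℝ) / 2 - 1) N / cS d *
      (qJ ((d : ℝ) / 2) ((d : ℝ) / 2 - 1) N).eval ((1 - x) / 2) := by
  have hd' : (3:ℝ) ≤ d := by exact_mod_cast hd
  unfold sphK
  rw [jacobiK_eq (by linarith) (by linarith) (by linarith)]
  rw [show (d:ℝ) / 2 - 1 + 1 = d / 2 by ring]
  have key : omegaS d / omegaS (d - 1) / 2 ^ ((d : ℝ) / 2 - 1 + ((d : ℝ) / 2 - 1) + 1) =
      1 / cS d := by
    unfold omegaS cS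
    have e : ((d - 1 : ℕ) : ℝ) + 1 = d := by
      rw [Nat.cast_sub (by omega)]; push_cast; ring
    rw [e]
    have dup := Real.Gamma_mul_Gamma_add_half ((d:ℝ) / 2)
    rw [show 2 * ((d:ℝ) / 2) = d by ring, show (d:ℝ) / 2 + 1 / 2 = (d + 1) / 2 by ring] at dup
    have g1 := Real.Gamma_pos_of_pos (show (0:ℝ) < d by linarith)
    have g2 := Real.Gamma_pos_of_pos (show (0:ℝ) < d / 2 by linarith)
    have g3 := Real.Gamma_pos_of_pos (show (0:ℝ) < (d + 1) / 2 by linarith)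
    have e2 : Real.pi ^ (((d:ℝ) + 1) / 2) = Real.pi ^ ((d:ℝ) / 2) * √Real.pi := by
      rw [Real.sqrt_eq_rpow, ← Real.rpow_add Real.pi_pos]; ring_nf
    have e3 : (2:ℝ) ^ ((d : ℝ) / 2 - 1 + ((d : ℝ) / 2 - 1) + 1) = 1 / 2 ^ (1 - (d:ℝ)) := by
      rw [one_div, ← Real.rpow_neg (by norm_num)]; ring_nf
    rw [e2, e3]
    have hp : 0 < Real.pi ^ ((d:ℝ) / 2) := Real.rpow_pos_of_pos Real.pi_pos _
    have h2 : (0:ℝ) < 2 ^ (1 - (d:ℝ)) := by positivity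
    field_simp
    linear_combination -dup
  calc _ = (omegaS d / omegaS (d - 1) / 2 ^ ((d : ℝ) / 2 - 1 + ((d : ℝ) / 2 - 1) + 1)) *
      (SJ ((d : ℝ) / 2 - 1) ((d : ℝ) / 2 - 1) N *
        (qJ ((d : ℝ) / 2) ((d : ℝ) / 2 - 1) N).eval ((1 - x) / 2)) := by ring
    _ = _ := by rw [key]; ring

lemma jacobi_quot_eq {d : ℕ} (hd : 3 ≤ d) {r : ℝ} (hr : 0 ≤ r) (N : ℕ) (x : ℝ) :
    jacobiP ((d : ℝ) / 2 + r) ((d : ℝ) / 2 - 2) N x / jacobiP ((d : ℝ) / 2 + r) ((d : ℝ) / 2 - 2) N 1 =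
      (qJ ((d : ℝ) / 2 + r) ((d : ℝ) / 2 - 2) N).eval ((1 - x) / 2) := by
  have hd' : (3:ℝ) ≤ d := by exact_mod_cast hd
  have h := jacobiP_one_ne (α := (d : ℝ) / 2 + r) (β := (d : ℝ) / 2 - 2) (by linarith) (by linarith)
    (by linarith) N
  rw [jacobiP_eq (by linarith) (by linarith) N x, mul_div_cancel_left₀ _ h]

lemma pc_ratio {M N : ℝ} (hN : 0 < N) (h : N ≤ M) (k : ℕ) :
    pc M k ≤ (M / N) ^ k * pc N k := by
  have hM : 0 < M := by linarith
  induction k with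
  | zero => simp [pc_zero]
  | succ k ih =>
    have hk : (0:ℝ) ≤ k := Nat.cast_nonneg k
    rw [pc_succ, pc_succ, pow_succ]
    have h1 : M + k ≤ M / N * (N + k) := by
      have : 1 ≤ M / N := by rw [le_div_iff₀ hN]; linarith
      have e : M / N * (N + k) = M + M / N * k := by field_simp
      rw [e]; nlinarith
    have := pc_pos hN k
    have := pc_pos hM k
    calc pc M k * (M + k) ≤ ((M / N) ^ k * pc N k) * (M / N * (N + k)) := by gcongr
      _ = _ := by ring

lemma SJ_compare {d n : ℕ} (hd : 3 ≤ d) (hn : 0 < n) :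
    SJ ((d : ℝ) / 2 - 1) ((d : ℝ) / 2 - 1) ((d + 2) * n - 1) ≤
      Real.exp 2 * SJ ((d : ℝ) / 2 - 1) ((d : ℝ) / 2 - 2) (d * n) := by
  have hd' : (3:ℝ) ≤ d := by exact_mod_cast hd
  have hn' : (1:ℝ) ≤ n := by exact_mod_cast hn
  set a : ℝ := (d:ℝ) / 2 - 1 with ha
  have ha0 : 0 < a := by linarith
  obtain ⟨M', hM'⟩ : ∃ M', (d + 2) * n = M' + 1 :=
    ⟨(d + 2) * n - 1, (Nat.succ_pred_eq_of_pos (by positivity)).symm⟩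
  obtain ⟨k, rfl⟩ : ∃ k, d = k + 2 := ⟨d - 2, by omega⟩
  set M : ℝ := (M' : ℝ) + 1 with hM
  have hMc : M = ((k + 2 : ℕ) + 2 : ℝ) * n := by
    have := congrArg (Nat.cast (R := ℝ)) hM'
    push_cast at this ⊢
    linarith
  set N : ℝ := ((k + 2 : ℕ) : ℝ) * n with hN
  have hN0 : 0 < N := by positivity
  have hNM : N ≤ M := by rw [hMc, hN]; nlinarith
  have G : ∀ x : ℝ, 0 < x → 0 < Real.Gamma x := fun x hx => Real.Gamma_pos_of_pos hx
  rw [hM', Nat.add_sub_cancel]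
  have e1 : SJ a a M' = (M + a) * pc M (k + 1) / (Real.Gamma (a + 1) * Real.Gamma (a + 2)) := by
    unfold SJ
    rw [show (M' : ℝ) + a + a + 2 = M + ((k + 1 : ℕ) : ℝ) by rw [ha, hM]; push_cast; ring,
      Gamma_add_nat (by linarith), show (M' : ℝ) + a + 2 = (M' + a + 1) + 1 by ring,
      Real.Gamma_add_one (s := (M' : ℝ) + a + 1) (by positivity), hM, Real.Gamma_nat_eq_factorial]
    have g1 := G (a + 1) (by linarith)
    have g2 := G (a + 2) (by linarith)
    have g3 := G (M' + a + 1) (by positivity)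
    have k2 : (0 : ℝ) < M'.factorial := by exact_mod_cast M'.factorial_pos
    field_simp
    ring
  have e2 : SJ a ((((k + 2 : ℕ)) : ℝ) / 2 - 2) ((k + 2) * n) =
      (N + a) * ((N + a + 1) / N) * pc N (k + 1) / (Real.Gamma (a + 1) * Real.Gamma (a + 2)) := by
    unfold SJ
    have hc : (((k + 2) * n : ℕ) : ℝ) = N := by rw [hN]; push_cast; ring
    have hfac : (((k + 2) * n).factorial : ℝ) = N * Real.Gamma N := by
      rw [← Real.Gamma_nat_eq_factorial, hc, Real.Gamma_add_one hN0.ne']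
    rw [hfac, hc]
    rw [show N + a + (((k + 2 : ℕ) : ℝ) / 2 - 2) + 2 = N + ((k + 1 : ℕ) : ℝ) by
        rw [ha]; push_cast; ring, Gamma_add_nat hN0,
      show N + (((k + 2 : ℕ) : ℝ) / 2 - 2) + 1 = N + a by rw [ha]; ring,
      show N + a + 2 = (N + a + 1) + 1 by ring,
      Real.Gamma_add_one (s := N + a + 1) (by positivity),
      Real.Gamma_add_one (s := N + a) (by positivity)]
    have g1 := G (a + 1) (by linarith)
    have g2 := G (a + 2) (by linarith)
    have g3 := G (N + a) (by positivity)
    have g4 := G N hN0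
    field_simp
  rw [e1, e2, ← mul_div_assoc]
  have g1 := G (a + 1) (by linarith)
  have g2 := G (a + 2) (by linarith)
  refine div_le_div_of_nonneg_right ?_ (by positivity)
  have p1 := pc_pos hN0 (k + 1)
  have p2 := pc_pos (show 0 < M by linarith) (k + 1)
  have hr : 1 ≤ M / N := by rw [le_div_iff₀ hN0]; linarith
  have h1 : M + a ≤ M / N * (N + a) := by
    have e : M / N * (N + a) = M + M / N * a := by field_simp
    rw [e]; nlinarith
  have h2 : 1 ≤ (N + a + 1) / N := by rw [le_div_iff₀ hN0]; linarith
  have h3 : (M / N) ^ (k + 2) ≤ Real.exp 2 := by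
    have : M / N = 1 + 2 / ((k + 2 : ℕ) : ℝ) := by
      rw [hMc, hN]; field_simp
    rw [this]
    calc (1 + 2 / ((k + 2 : ℕ) : ℝ)) ^ (k + 2) ≤ (Real.exp (2 / ((k + 2 : ℕ) : ℝ))) ^ (k + 2) := by
          gcongr
          linarith [Real.add_one_le_exp (2 / ((k + 2 : ℕ) : ℝ))]
      _ = Real.exp 2 := by
        rw [← Real.exp_nat_mul]; congr 1; field_simp
  calc (M + a) * pc M (k + 1) ≤ (M / N * (N + a)) * ((M / N) ^ (k + 1) * pc N (k + 1)) := by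
        have := pc_ratio hN0 hNM (k + 1)
        gcongr
    _ = (M / N) ^ (k + 2) * ((N + a) * 1 * pc N (k + 1)) := by ring
    _ ≤ Real.exp 2 * ((N + a) * ((N + a + 1) / N) * pc N (k + 1)) := by gcongr

/-- Polar coordinates for functions which split on each ray. -/
lemma polar_split {d : ℕ} (H : EuclideanSpace ℝ (Fin (d + 1)) → ℝ)
    (g : EuclideanSpace ℝ (Fin (d + 1)) → ℝ) (G : ℝ → ℝ)
    (hH : ∀ y : EuclideanSpace ℝ (Fin (d + 1)), ‖y‖ = 1 → ∀ r : ℝ, 0 < r →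
      H (r • y) = g y * G r) :
    ∫ v, H v = (∫ y : Sph d, g y ∂(volume : Measure (EuclideanSpace ℝ (Fin (d + 1)))).toSphere) *
      ∫ r in Ioi (0:ℝ), r ^ d * G r := by
  set μ : Measure (EuclideanSpace ℝ (Fin (d + 1))) := volume with hμ
  have hdim : Module.finrank ℝ (EuclideanSpace ℝ (Fin (d + 1))) - 1 = d := by simp
  calc ∫ v, H v ∂μ = ∫ x : ({(0)}ᶜ : Set (EuclideanSpace ℝ (Fin (d + 1)))), H x.1 ∂(μ.comap (↑)) := by
        rw [integral_subtype_comap (measurableSet_singleton _).compl fun x ↦ H x,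
          restrict_compl_singleton]
    _ = ∫ z, g z.1 * G z.2 ∂μ.toSphere.prod (.volumeIoiPow (Module.finrank ℝ (EuclideanSpace ℝ (Fin (d + 1))) - 1)) := by
      rw [← μ.measurePreserving_homeomorphUnitSphereProd.integral_comp
        (Homeomorph.measurableEmbedding _)]
      congr 1
      ext x
      have hx : (0:ℝ) < ‖x.1‖ := norm_pos_iff.2 x.2
      simp only [homeomorphUnitSphereProd_apply_fst_coe, homeomorphUnitSphereProd_apply_snd_coe]
      rw [← hH _ _ _ hx]
      · rw [smul_smul, mul_inv_cancel₀ hx.ne', one_smul]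
      · rw [norm_smul, norm_inv, norm_norm, inv_mul_cancel₀ hx.ne']
    _ = (∫ y, g y ∂μ.toSphere) * ∫ r : Ioi (0:ℝ), G r ∂(.volumeIoiPow (Module.finrank ℝ (EuclideanSpace ℝ (Fin (d + 1))) - 1)) :=
      integral_prod_mul (fun y : Sph d => g y) (fun r : Ioi (0:ℝ) => G r)
    _ = _ := by
      rw [hdim]
      congr 1
      simp only [Measure.volumeIoiPow, ENNReal.ofReal]
      rw [integral_withDensity_eq_integral_smul,
        integral_subtype_comap measurableSet_Ioi fun a ↦ Real.toNNReal (a ^ d) • G a,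
        setIntegral_congr_fun measurableSet_Ioi fun x hx ↦ ?_]
      · rw [NNReal.smul_def, Real.coe_toNNReal _ (pow_nonneg (le_of_lt hx) _)]; rfl
      · exact (measurable_subtype_coe.pow_const _).real_toNNReal

lemma radial_int (m : ℕ) : ∫ r in Ioi (0:ℝ), r ^ m * Real.exp (-r ^ 2) =
    Real.Gamma (((m:ℝ) + 1) / 2) / 2 := by
  have h := integral_rpow_mul_exp_neg_rpow (p := 2) (q := m) (by norm_num)
    (by have : (0:ℝ) ≤ m := Nat.cast_nonneg m; linarith)
  simp only [Real.rpow_natCast, Real.rpow_two] at h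
  rw [h]; ring

lemma sph_rotate {d : ℕ} (g : EuclideanSpace ℝ (Fin (d + 1)) → ℝ)
    (L : EuclideanSpace ℝ (Fin (d + 1)) ≃ₗᵢ[ℝ] EuclideanSpace ℝ (Fin (d + 1))) :
    ∫ y : Sph d, g (L y) ∂(sphMeasure d) = ∫ y : Sph d, g y ∂(sphMeasure d) := by
  unfold sphMeasure
  rw [integral_smul_measure, integral_smul_measure]
  congr 1
  set H : EuclideanSpace ℝ (Fin (d + 1)) → ℝ := fun v => g (‖v‖⁻¹ • v) * Real.exp (-‖v‖ ^ 2) with hH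
  have h1 := polar_split H g (fun r => Real.exp (-r ^ 2)) (by
    intro y hy r hr
    simp only [hH, norm_smul, hy, mul_one, Real.norm_eq_abs, abs_of_pos hr]
    rw [smul_smul, inv_mul_cancel₀ hr.ne', one_smul])
  have h2 := polar_split (fun v => H (L v)) (fun v => g (L v)) (fun r => Real.exp (-r ^ 2)) (by
    intro y hy r hr
    simp only [hH, map_smul, norm_smul, hy, mul_one, Real.norm_eq_abs, abs_of_pos hr,
      LinearIsometryEquiv.norm_map]
    rw [smul_smul, inv_mul_cancel₀ hr.ne', one_smul])
  have h3 : ∫ v, H (L v) = ∫ v, H v :=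
    L.measurePreserving.integral_comp L.toHomeomorph.measurableEmbedding H
  rw [h1, h2, radial_int] at h3
  have : 0 < Real.Gamma (((d:ℝ) + 1) / 2) := Real.Gamma_pos_of_pos (by positivity)
  exact mul_right_cancel₀ (by positivity) h3

/-- One-dimensional Gaussian moments. -/
def gM (k : ℕ) : ℝ := ∫ t : ℝ, t ^ k * Real.exp (-t ^ 2)

lemma gM_odd (k : ℕ) (hk : Odd k) : gM k = 0 := by
  unfold gM
  have h := integral_neg_eq_self (fun t : ℝ => t ^ k * Real.exp (-t ^ 2)) volume
  simp only [hk.neg_pow, even_two.neg_pow, neg_mul, integral_neg] at h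
  linarith

lemma gM_even (i : ℕ) : gM (2 * i) = Real.Gamma ((i:ℝ) + 1 / 2) := by
  unfold gM
  have h := integral_comp_abs (f := fun t : ℝ => t ^ (2 * i) * Real.exp (-t ^ 2))
  simp only [(even_two_mul i).pow_abs, sq_abs] at h
  rw [h, radial_int]
  push_cast
  rw [show (2 * (i:ℝ) + 1) / 2 = i + 1 / 2 by ring]; ring

lemma sph_moment_aux {d : ℕ} (k : Fin (d + 1) → ℕ) :
    (∫ y : Sph d, ∏ i, (y : EuclideanSpace ℝ (Fin (d + 1))) i ^ k i
      ∂(volume : Measure (EuclideanSpace ℝ (Fin (d + 1)))).toSphere) *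
      (Real.Gamma (((d:ℝ) + 1 + ∑ i, (k i : ℝ)) / 2) / 2) = ∏ i, gM (k i) := by
  have h := polar_split (d := d) (fun v => ∏ i, (v i ^ k i * Real.exp (-(v i) ^ 2)))
    (fun v => ∏ i, v i ^ k i) (fun r => r ^ (∑ i, k i) * Real.exp (-r ^ 2)) (by
    intro y hy r hr
    rw [Finset.prod_mul_distrib, ← Real.exp_sum]
    simp only [PiLp.smul_apply, smul_eq_mul, mul_pow, Finset.prod_mul_distrib,
      Finset.prod_pow_eq_pow_sum]
    have hs : ∑ i, (y i) ^ 2 = 1 := by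
      have := EuclideanSpace.norm_sq_eq y
      rw [hy] at this
      simpa using this.symm
    have : ∑ i, -(r ^ 2 * (y i) ^ 2) = -r ^ 2 := by
      rw [Finset.sum_neg_distrib, ← Finset.mul_sum, hs, mul_one]
    rw [this]; ring)
  have e1 : ∫ v : EuclideanSpace ℝ (Fin (d + 1)), ∏ i, (v i ^ k i * Real.exp (-(v i) ^ 2)) =
      ∏ i, gM (k i) := by
    rw [← (PiLp.volume_preserving_toLp (Fin (d + 1))).integral_comp
      (MeasurableEquiv.toLp 2 (Fin (d + 1) → ℝ)).measurableEmbedding]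
    exact integral_fintype_prod_volume_eq_prod (fun i (t : ℝ) => t ^ k i * Real.exp (-t ^ 2))
  rw [← e1, h]
  congr 1
  have e2 : (fun r : ℝ => r ^ d * (r ^ (∑ i, k i) * Real.exp (-r ^ 2))) =
      fun r => r ^ (d + ∑ i, k i) * Real.exp (-r ^ 2) := by
    ext r; rw [pow_add]; ring
  rw [e2, radial_int]
  push_cast
  congr 3
  ring

instance sphMeasure_prob (d : ℕ) : IsProbabilityMeasure (sphMeasure d) := by
  constructor
  unfold sphMeasure
  simp only [Measure.smul_apply, smul_eq_mul]
  refine ENNReal.inv_mul_cancel ?_ (measure_ne_top _ _)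
  rw [Ne, Measure.measure_univ_eq_zero]
  exact Measure.toSphere_ne_zero _

lemma gM_zero : gM 0 = √Real.pi := by
  have := gM_even 0
  simp at this
  rw [this, ← one_div, Real.Gamma_one_half_eq]

lemma sph_moment {d : ℕ} (k : Fin (d + 1) → ℕ) :
    (∫ y : Sph d, ∏ i, (y : EuclideanSpace ℝ (Fin (d + 1))) i ^ k i ∂(sphMeasure d)) =
      Real.Gamma (((d:ℝ) + 1) / 2) / Real.Gamma (((d:ℝ) + 1 + ∑ i, (k i : ℝ)) / 2) *
        ∏ i, (gM (k i) / √Real.pi) := by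
  have h0 := sph_moment_aux (d := d) (fun _ => 0)
  have hk := sph_moment_aux k
  set c : ℝ := (((volume : Measure (EuclideanSpace ℝ (Fin (d + 1)))).toSphere Set.univ)⁻¹).toReal
    with hc
  have hIntg : ∀ f : Sph d → ℝ, ∫ y, f y ∂(sphMeasure d) =
      c * ∫ y, f y ∂((volume : Measure (EuclideanSpace ℝ (Fin (d + 1)))).toSphere) := by
    intro f
    unfold sphMeasure
    rw [integral_smul_measure, smul_eq_mul]
  have h1 := hIntg (fun _ => 1)
  rw [integral_const, probReal_univ] at h1
  simp only [pow_zero, Finset.prod_const_one, gM_zero, Nat.cast_zero, Finset.sum_const_zero,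
    add_zero, Finset.prod_const] at h0
  rw [hIntg, Finset.prod_div_distrib, Finset.prod_const]
  have g1 : 0 < Real.Gamma (((d:ℝ) + 1) / 2) := Real.Gamma_pos_of_pos (by positivity)
  have g2 : 0 < Real.Gamma (((d:ℝ) + 1 + ∑ i, (k i : ℝ)) / 2) :=
    Real.Gamma_pos_of_pos (by positivity)
  have hp : 0 < √Real.pi ^ (Finset.univ : Finset (Fin (d + 1))).card :=
    pow_pos (Real.sqrt_pos.2 Real.pi_pos) _
  rw [← hk, ← h0]
  rw [← h0] at hp
  set I0 := ∫ y : Sph d, (1:ℝ) ∂((volume : Measure (EuclideanSpace ℝ (Fin (d + 1)))).toSphere)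
  have hI0 : I0 ≠ 0 := by rintro h; rw [h] at hp; simp at hp
  have hcI : c * I0 = 1 := by rw [← h1]; simp
  have hc' : c = 1 / I0 := by field_simp; linarith
  rw [hc']
  field_simp

lemma wI_odd (γ : ℝ) {f : ℝ → ℝ} (hf : ∀ u, f (1 - u) = -f u) : wI γ γ f = 0 := by
  have h : wI γ γ f = -wI γ γ f := by
    unfold wI
    rw [← integral_Ioc_eq_integral_Ioo, ← intervalIntegral.integral_of_le (by norm_num)]
    have := intervalIntegral.integral_comp_sub_left (a := 0) (b := 1)
      (fun u => f u * (u ^ γ * (1 - u) ^ γ)) 1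
    simp only [sub_self, sub_zero] at this
    conv_lhs => rw [← this]
    rw [← intervalIntegral.integral_neg]
    congr 1; ext u
    rw [hf, sub_sub_cancel]; ring
  linarith

lemma wI_shift_both (γ : ℝ) (s : ℕ) (f : ℝ → ℝ) :
    wI γ γ (fun u => f u * (u * (1 - u)) ^ s) = wI (γ + s) (γ + s) f := by
  refine setIntegral_congr_fun measurableSet_Ioo fun u hu ↦ ?_
  have h1 : 0 < 1 - u := by linarith [hu.2]
  simp only
  rw [Real.rpow_add_natCast hu.1.ne', Real.rpow_add_natCast h1.ne', mul_pow]; ring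

lemma wI_even_pow (i : ℕ) : ∀ γ : ℝ, -1 < γ → 2 * 4 ^ γ * wI γ γ (fun u => (1 - 2 * u) ^ (2 * i)) =
    Real.Gamma (i + 1 / 2) * Real.Gamma (γ + 1) / Real.Gamma (γ + i + 3 / 2) := by
  induction i with
  | zero =>
    intro γ hγ
    have h := wI_pow hγ hγ 0
    simp only [pow_zero, Nat.cast_zero, add_zero, mul_zero, zero_add] at h ⊢
    rw [h]
    have dup := Real.Gamma_mul_Gamma_add_half (γ + 1)
    rw [Real.Gamma_one_half_eq, show γ + γ + 2 = 2 * (γ + 1) by ring]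
    rw [show γ + 1 + 1 / 2 = γ + 3 / 2 by ring] at dup
    have g1 := Real.Gamma_pos_of_pos (show 0 < γ + 1 by linarith)
    have g2 := Real.Gamma_pos_of_pos (show 0 < γ + 3 / 2 by linarith)
    have g3 := Real.Gamma_pos_of_pos (show 0 < 2 * (γ + 1) by linarith)
    have e : (2:ℝ) ^ (1 - 2 * (γ + 1)) * (2 * 4 ^ γ) = 1 := by
      rw [show (4:ℝ) = 2 ^ (2:ℝ) by norm_num, ← Real.rpow_mul (by norm_num)]
      have e1 : (2:ℝ) ^ (1 - 2 * (γ + 1)) * 2 ^ (1:ℝ) * 2 ^ (2 * γ) = 1 := by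
        rw [← Real.rpow_add (by norm_num), ← Real.rpow_add (by norm_num)]
        ring_nf; simp
      rw [Real.rpow_one] at e1
      linarith
    rw [mul_div_assoc', div_eq_div_iff g3.ne' g2.ne']
    linear_combination (2 * 4 ^ γ * Real.Gamma (γ + 1)) * dup +
      Real.Gamma (γ + 1) * Real.Gamma (2 * (γ + 1)) * √Real.pi * e
  | succ i ih =>
    intro γ hγ
    have h0 := ih γ hγ
    have h1 := ih (γ + 1) (by linarith)
    have hs := wI_shift_both γ 1 (fun u => (1 - 2 * u) ^ (2 * i))
    simp only [pow_one, Nat.cast_one] at hs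
    have hi : (0:ℝ) ≤ i := Nat.cast_nonneg i
    have e : wI γ γ (fun u => (1 - 2 * u) ^ (2 * (i + 1))) =
        wI γ γ (fun u => (1 - 2 * u) ^ (2 * i)) -
          4 * wI (γ + 1) (γ + 1) (fun u => (1 - 2 * u) ^ (2 * i)) := by
      rw [← hs, sub_eq_add_neg, ← neg_mul, ← wI_const_mul, ← wI_add hγ hγ (by fun_prop) (by fun_prop)]
      refine wI_congr _ _ fun u _ => ?_
      ring
    rw [e]
    have e4 : (4:ℝ) ^ (γ + 1) = 4 ^ γ * 4 := by rw [Real.rpow_add (by norm_num)]; simp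
    rw [e4] at h1
    rw [show γ + 1 + (i:ℝ) + 3 / 2 = (γ + i + 3 / 2) + 1 by ring,
      Real.Gamma_add_one (s := γ + i + 3 / 2) (by linarith),
      Real.Gamma_add_one (s := γ + 1) (by linarith)] at h1
    push_cast
    rw [show γ + ((i:ℝ) + 1) + 3 / 2 = (γ + i + 3 / 2) + 1 by ring,
      Real.Gamma_add_one (s := γ + i + 3 / 2) (by linarith),
      show (i:ℝ) + 1 + 1 / 2 = (i + 1 / 2) + 1 by ring,
      Real.Gamma_add_one (s := (i:ℝ) + 1 / 2) (by linarith)]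
    have g2 := Real.Gamma_pos_of_pos (show 0 < γ + i + 3 / 2 by linarith)
    have hz : γ + i + 3 / 2 ≠ 0 := by linarith
    calc _ = 2 * 4 ^ γ * wI γ γ (fun u => (1 - 2 * u) ^ (2 * i)) -
          2 * (4 ^ γ * 4) * wI (γ + 1) (γ + 1) (fun u => (1 - 2 * u) ^ (2 * i)) := by ring
      _ = _ := by
        rw [h0, h1]
        rw [div_sub_div _ _ g2.ne' (mul_ne_zero hz g2.ne'), div_eq_div_iff
          (mul_ne_zero g2.ne' (mul_ne_zero hz g2.ne')) (mul_ne_zero hz g2.ne')]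
        ring

lemma cS_alt {d : ℕ} (hd : 3 ≤ d) : Real.Gamma (((d:ℝ) + 1) / 2) * (2 * 4 ^ ((d:ℝ) / 2 - 1)) =
    √Real.pi * cS d * Real.Gamma ((d:ℝ) / 2) := by
  have hd' : (3:ℝ) ≤ d := by exact_mod_cast hd
  unfold cS
  have dup := Real.Gamma_mul_Gamma_add_half ((d:ℝ) / 2)
  rw [show 2 * ((d:ℝ) / 2) = d by ring, show (d:ℝ) / 2 + 1 / 2 = (d + 1) / 2 by ring] at dup
  have g2 := Real.Gamma_pos_of_pos (show (0:ℝ) < d / 2 by linarith)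
  have e : (2:ℝ) ^ (1 - (d:ℝ)) * (2 * 4 ^ ((d:ℝ) / 2 - 1)) = 1 := by
    rw [show (4:ℝ) = 2 ^ (2:ℝ) by norm_num, ← Real.rpow_mul (by norm_num)]
    have e1 : (2:ℝ) ^ (1 - (d:ℝ)) * 2 ^ (1:ℝ) * 2 ^ (2 * ((d:ℝ) / 2 - 1)) = 1 := by
      rw [← Real.rpow_add (by norm_num), ← Real.rpow_add (by norm_num)]
      ring_nf; simp
    rw [Real.rpow_one] at e1
    linarith
  have e3 : √Real.pi * (Real.Gamma d / Real.Gamma ((d:ℝ) / 2) ^ 2) * Real.Gamma ((d:ℝ) / 2) =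
      √Real.pi * Real.Gamma d / Real.Gamma ((d:ℝ) / 2) := by
    generalize Real.Gamma ((d:ℝ) / 2) = G at *
    field_simp
  rw [e3, eq_div_iff g2.ne']
  linear_combination (2 * 4 ^ ((d:ℝ) / 2 - 1)) * dup + Real.Gamma d * √Real.pi * e

lemma zonal_monomial {d : ℕ} (hd : 3 ≤ d) (k : Fin (d + 1) → ℕ) :
    ∃ h : Polynomial ℝ, h.natDegree ≤ ∑ i, k i ∧
      h.eval 1 = ∏ i, (Pi.single (M := fun _ => ℝ) (0 : Fin (d + 1)) 1) i ^ k i ∧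
      ∀ l : ℕ, ∫ y : Sph d, (y : EuclideanSpace ℝ (Fin (d + 1))) 0 ^ l *
          ∏ i, (y : EuclideanSpace ℝ (Fin (d + 1))) i ^ k i ∂(sphMeasure d) =
        cS d * wI ((d:ℝ) / 2 - 1) ((d:ℝ) / 2 - 1) (fun u => (1 - 2 * u) ^ l * h.eval (1 - 2 * u)) := by
  have hd' : (3:ℝ) ≤ d := by exact_mod_cast hd
  set P : ℝ := ∏ i : Fin d, (gM (k i.succ) / √Real.pi) with hP
  set s : ℕ := ∑ i : Fin d, k i.succ with hs
  have hspi : 0 < √Real.pi := Real.sqrt_pos.2 Real.pi_pos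
  have hmom : ∀ l : ℕ, ∫ y : Sph d, (y : EuclideanSpace ℝ (Fin (d + 1))) 0 ^ l *
          ∏ i, (y : EuclideanSpace ℝ (Fin (d + 1))) i ^ k i ∂(sphMeasure d) =
      Real.Gamma (((d:ℝ) + 1) / 2) / Real.Gamma (((d:ℝ) + 1 + (l + k 0 + s : ℕ)) / 2) *
        (gM (l + k 0) / √Real.pi * P) := by
    intro l
    have := sph_moment (d := d) (Fin.cons (l + k 0) (fun i => k i.succ))
    simp only [Fin.prod_univ_succ, Fin.sum_univ_succ, Fin.cons_zero, Fin.cons_succ] at this ⊢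
    rw [← hP] at this
    rw [hs]
    push_cast at this ⊢
    rw [← this]
    congr 1; ext y; rw [pow_add]; ring
  have hsum : ∑ i, k i = k 0 + s := Fin.sum_univ_succ _
  have heval : ∏ i, (Pi.single (M := fun _ => ℝ) (0 : Fin (d + 1)) 1) i ^ k i = (0:ℝ) ^ s := by
    rw [Fin.prod_univ_succ]
    simp [Fin.succ_ne_zero, Finset.prod_pow_eq_pow_sum, hs]
  rw [heval, hsum]
  by_cases hodd : ∃ i : Fin d, Odd (k i.succ)
  · obtain ⟨i, hi⟩ := hodd
    have hP0 : P = 0 := Finset.prod_eq_zero (Finset.mem_univ i) (by rw [gM_odd _ hi, zero_div])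
    refine ⟨0, by simp, ?_, fun l => ?_⟩
    · have : s ≠ 0 := by
        intro h0
        have := (Finset.sum_eq_zero_iff.1 h0) i (Finset.mem_univ i)
        rw [this] at hi; simp at hi
      simp [this]
    · rw [hmom, hP0]
      have := wI_const_mul ((d:ℝ) / 2 - 1) ((d:ℝ) / 2 - 1) 0 (fun _ => 0)
      simp only [zero_mul] at this
      simp [this]
  · push Not at hodd
    have hev : Even s := by
      refine Finset.even_sum _ fun i _ => ?_
      simpa using hodd i
    obtain ⟨s', hs'⟩ := hev
    have hs'' : s = 2 * s' := by omega
    have gA := Real.Gamma_pos_of_pos (show (0:ℝ) < d / 2 + s' by positivity)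
    have hcS := cS_pos (show 1 ≤ d by omega)
    set κ : ℝ := Real.Gamma (((d:ℝ) + 1) / 2) * P * (2 * 4 ^ ((d:ℝ) / 2 - 1)) /
      (√Real.pi * cS d * Real.Gamma ((d:ℝ) / 2 + s')) with hκ
    refine ⟨Polynomial.C κ * (Polynomial.X ^ k 0 * (1 - Polynomial.X ^ 2) ^ s'), ?_, ?_, fun l => ?_⟩
    · refine (Polynomial.natDegree_C_mul_le _ _).trans ?_
      refine Polynomial.natDegree_mul_le.trans ?_
      have h1 : ((1 - Polynomial.X ^ 2 : Polynomial ℝ) ^ s').natDegree ≤ s' * 2 := by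
        refine Polynomial.natDegree_pow_le.trans (Nat.mul_le_mul_left _ ?_)
        refine (Polynomial.natDegree_sub_le _ _).trans ?_
        simp
      rw [Polynomial.natDegree_X_pow]; omega
    · rcases Nat.eq_zero_or_pos s' with h0 | h0
      · have hs0 : s = 0 := by omega
        have hP1 : P = 1 := by
          refine Finset.prod_eq_one fun i _ => ?_
          have := (Finset.sum_eq_zero_iff.1 (hs ▸ hs0)) i (Finset.mem_univ i)
          rw [this, gM_zero, div_self hspi.ne']
        have hκ1 : κ = 1 := by
          rw [hκ, hP1, h0, mul_one, cS_alt hd]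
          simp only [Nat.cast_zero, add_zero]
          rw [h0] at gA
          simp only [Nat.cast_zero, add_zero] at gA
          exact div_self (by positivity)
        simp [hκ1, h0, hs0]
      · have : s ≠ 0 := by omega
        simp [this, h0.ne']
    · rw [hmom]
      have e : wI ((d:ℝ) / 2 - 1) ((d:ℝ) / 2 - 1) (fun u => (1 - 2 * u) ^ l *
          (Polynomial.C κ * (Polynomial.X ^ k 0 * (1 - Polynomial.X ^ 2) ^ s')).eval (1 - 2 * u)) =
          κ * 4 ^ s' * wI ((d:ℝ) / 2 - 1 + s') ((d:ℝ) / 2 - 1 + s')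
            (fun u => (1 - 2 * u) ^ (l + k 0)) := by
        rw [← wI_shift_both, ← wI_const_mul]
        refine wI_congr _ _ fun u _ => ?_
        simp only [Polynomial.eval_mul, Polynomial.eval_C, Polynomial.eval_pow, Polynomial.eval_X,
          Polynomial.eval_sub, Polynomial.eval_one]
        rw [show 1 - (1 - 2 * u) ^ 2 = 4 * (u * (1 - u)) by ring, mul_pow, pow_add]; ring
      rw [e]
      rcases Nat.even_or_odd' (l + k 0) with ⟨i, hi | hi⟩
      · rw [hi, gM_even]
        have hV := wI_even_pow i ((d:ℝ) / 2 - 1 + s')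
          (by have : (0:ℝ) ≤ s' := Nat.cast_nonneg _; linarith)
        rw [Real.rpow_add (by norm_num), Real.rpow_natCast,
          show (d:ℝ) / 2 - 1 + s' + 1 = d / 2 + s' by ring,
          show (d:ℝ) / 2 - 1 + s' + i + 3 / 2 = ((d:ℝ) + 1 + (2 * i + s : ℕ)) / 2 by
            rw [hs'']; push_cast; ring] at hV
        set V := wI ((d:ℝ) / 2 - 1 + s') ((d:ℝ) / 2 - 1 + s') (fun u => (1 - 2 * u) ^ (2 * i))
        have gB := Real.Gamma_pos_of_pos (show (0:ℝ) < ((d:ℝ) + 1 + (2 * i + s : ℕ)) / 2 by positivity)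
        calc _ = Real.Gamma (((d:ℝ) + 1) / 2) * P / (√Real.pi * Real.Gamma ((d:ℝ) / 2 + s')) *
              (Real.Gamma (i + 1 / 2) * Real.Gamma ((d:ℝ) / 2 + s') /
                Real.Gamma (((d:ℝ) + 1 + (2 * i + s : ℕ)) / 2)) := by field_simp
          _ = _ := by rw [← hV, hκ]; field_simp
      · have ho : Odd (l + k 0) := ⟨i, hi⟩
        rw [gM_odd _ ho, wI_odd]
        · simp
        · intro u
          rw [show 1 - 2 * (1 - u) = -(1 - 2 * u) by ring, ho.neg_pow]

lemma sph_integrable {d : ℕ} (ρ : Measure (Sph d)) [IsFiniteMeasure ρ] {f : Sph d → ℝ}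
    (hf : Continuous f) : Integrable f ρ :=
  hf.integrable_of_hasCompactSupport (HasCompactSupport.of_compactSpace f)

lemma sph_eval_continuous {d : ℕ} (p : MvPolynomial (Fin (d + 1)) ℝ) :
    Continuous (fun y : Sph d =>
      MvPolynomial.eval (fun i => (y : EuclideanSpace ℝ (Fin (d + 1))) i) p) := by
  refine (MvPolynomial.continuous_eval p).comp ?_
  fun_prop

lemma sph_coord_continuous {d : ℕ} (i : Fin (d + 1)) :
    Continuous (fun y : Sph d => (y : EuclideanSpace ℝ (Fin (d + 1))) i) := by
  fun_prop

lemma ip_continuous {d : ℕ} (x : Sph d) : Continuous (fun y : Sph d => ip x y) := by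
  unfold ip; fun_prop

lemma ip_self {d : ℕ} (x : Sph d) : ip x x = 1 := by
  unfold ip
  rw [real_inner_self_eq_norm_sq]
  have : ‖(x : EuclideanSpace ℝ (Fin (d + 1)))‖ = 1 := by simpa using x.2
  rw [this]; norm_num

lemma ip_abs_le {d : ℕ} (x y : Sph d) : |ip x y| ≤ 1 := by
  unfold ip
  have hx : ‖(x : EuclideanSpace ℝ (Fin (d + 1)))‖ = 1 := by simpa using x.2
  have hy : ‖(y : EuclideanSpace ℝ (Fin (d + 1)))‖ = 1 := by simpa using y.2
  have := abs_real_inner_le_norm (x : EuclideanSpace ℝ (Fin (d + 1))) y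
  rwa [hx, hy, mul_one] at this

lemma ip_eq_sum {d : ℕ} (x y : Sph d) : ip x y =
    ∑ i, (x : EuclideanSpace ℝ (Fin (d + 1))) i * (y : EuclideanSpace ℝ (Fin (d + 1))) i := by
  unfold ip
  rw [PiLp.inner_apply]
  refine Finset.sum_congr rfl fun i _ => ?_
  simp [mul_comm]

lemma zonal_poly0 {d : ℕ} (hd : 3 ≤ d) (p : MvPolynomial (Fin (d + 1)) ℝ) :
    ∃ h : Polynomial ℝ, h.natDegree ≤ p.totalDegree ∧
      h.eval 1 = MvPolynomial.eval (Pi.single (M := fun _ => ℝ) (0 : Fin (d + 1)) 1) p ∧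
      ∀ F : Polynomial ℝ, ∫ y : Sph d, F.eval ((y : EuclideanSpace ℝ (Fin (d + 1))) 0) *
          MvPolynomial.eval (fun i => (y : EuclideanSpace ℝ (Fin (d + 1))) i) p ∂(sphMeasure d) =
        cS d * wI ((d:ℝ) / 2 - 1) ((d:ℝ) / 2 - 1)
          (fun u => F.eval (1 - 2 * u) * h.eval (1 - 2 * u)) := by
  have hd' : (3:ℝ) ≤ d := by exact_mod_cast hd
  choose hk hdeg hone hIntg using fun k : Fin (d + 1) →₀ ℕ => zonal_monomial hd (fun i => k i)
  refine ⟨∑ k ∈ p.support, Polynomial.C (p.coeff k) * hk k, ?_, ?_, fun F => ?_⟩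
  · refine Polynomial.natDegree_sum_le_of_forall_le _ _ fun k hkp => ?_
    refine (Polynomial.natDegree_C_mul_le _ _).trans ((hdeg k).trans ?_)
    have := MvPolynomial.le_totalDegree hkp
    rwa [Finsupp.sum_fintype _ _ (by simp)] at this
  · rw [MvPolynomial.eval_eq', Polynomial.eval_finsetSum]
    refine Finset.sum_congr rfl fun k _ => ?_
    rw [Polynomial.eval_mul, Polynomial.eval_C, hone]
  · have e1 : ∀ y : Sph d, F.eval ((y : EuclideanSpace ℝ (Fin (d + 1))) 0) *
          MvPolynomial.eval (fun i => (y : EuclideanSpace ℝ (Fin (d + 1))) i) p =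
        ∑ l ∈ Finset.range (F.natDegree + 1), ∑ k ∈ p.support, (F.coeff l * p.coeff k) *
          ((y : EuclideanSpace ℝ (Fin (d + 1))) 0 ^ l *
            ∏ i, (y : EuclideanSpace ℝ (Fin (d + 1))) i ^ k i) := by
      intro y
      rw [Polynomial.eval_eq_sum_range, MvPolynomial.eval_eq', Finset.sum_mul_sum]
      refine Finset.sum_congr rfl fun l _ => Finset.sum_congr rfl fun k _ => ?_
      ring
    have e2 : ∀ u : ℝ, F.eval (1 - 2 * u) *
        (∑ k ∈ p.support, Polynomial.C (p.coeff k) * hk k).eval (1 - 2 * u) =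
        ∑ l ∈ Finset.range (F.natDegree + 1), ∑ k ∈ p.support, (F.coeff l * p.coeff k) *
          ((1 - 2 * u) ^ l * (hk k).eval (1 - 2 * u)) := by
      intro u
      rw [Polynomial.eval_eq_sum_range, Polynomial.eval_finsetSum, Finset.sum_mul_sum]
      refine Finset.sum_congr rfl fun l _ => Finset.sum_congr rfl fun k _ => ?_
      rw [Polynomial.eval_mul, Polynomial.eval_C]
      ring
    simp only [e1, e2]
    have hc : ∀ l (k : Fin (d + 1) →₀ ℕ), Continuous (fun y : Sph d => (F.coeff l * p.coeff k) *
          ((y : EuclideanSpace ℝ (Fin (d + 1))) 0 ^ l *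
            ∏ i, (y : EuclideanSpace ℝ (Fin (d + 1))) i ^ k i)) := by
      intro l k; fun_prop
    rw [integral_finsetSum _ (fun l _ => integrable_finsetSum _ fun k _ =>
      sph_integrable _ (hc l k)),
      wI_finset_sum (by linarith) (by linarith) _ _ (fun l _ => by fun_prop), Finset.mul_sum]
    refine Finset.sum_congr rfl fun l _ => ?_
    rw [integral_finsetSum _ (fun k _ => sph_integrable _ (hc l k)),
      wI_finset_sum (by linarith) (by linarith) _ _ (fun l _ => by fun_prop), Finset.mul_sum]
    refine Finset.sum_congr rfl fun k _ => ?_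
    rw [integral_const_mul, hIntg, wI_const_mul]
    ring

lemma zonal_poly {d : ℕ} (hd : 3 ≤ d) (x : Sph d) (p : MvPolynomial (Fin (d + 1)) ℝ) :
    ∃ h : Polynomial ℝ, h.natDegree ≤ p.totalDegree ∧
      h.eval 1 = MvPolynomial.eval (fun i => (x : EuclideanSpace ℝ (Fin (d + 1))) i) p ∧
      ∀ F : Polynomial ℝ, ∫ y : Sph d, F.eval (ip x y) *
          MvPolynomial.eval (fun i => (y : EuclideanSpace ℝ (Fin (d + 1))) i) p ∂(sphMeasure d) =
        cS d * wI ((d:ℝ) / 2 - 1) ((d:ℝ) / 2 - 1)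
          (fun u => F.eval (1 - 2 * u) * h.eval (1 - 2 * u)) := by
  have hx : ‖(x : EuclideanSpace ℝ (Fin (d + 1)))‖ = 1 := by simpa using x.2
  obtain ⟨b, hb⟩ := Orthonormal.exists_orthonormalBasis_extension_of_card_eq
    (𝕜 := ℝ) (E := EuclideanSpace ℝ (Fin (d + 1))) (ι := Fin (d + 1)) (by simp)
    (v := fun _ => (x : EuclideanSpace ℝ (Fin (d + 1)))) (s := {0}) (by
      constructor
      · intro i; simpa using hx
      · intro i j hij; exact absurd (Subsingleton.elim i j) hij)
  have hb0 : b 0 = x := hb 0 (by simp)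
  set L := b.repr with hL
  set A : Matrix (Fin (d + 1)) (Fin (d + 1)) ℝ := Matrix.of fun i j => (b j) i with hA
  set p' : MvPolynomial (Fin (d + 1)) ℝ := ∑ k ∈ p.support, MvPolynomial.C (p.coeff k) *
    ∏ i, (A.toMvPolynomial i) ^ k i with hp'
  have hdeg : p'.totalDegree ≤ p.totalDegree := by
    refine MvPolynomial.totalDegree_finsetSum_le fun k hkp => ?_
    refine (MvPolynomial.totalDegree_mul _ _).trans ?_
    rw [MvPolynomial.totalDegree_C, zero_add]
    refine (MvPolynomial.totalDegree_finsetProd _ _).trans ?_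
    have := MvPolynomial.le_totalDegree hkp
    rw [Finsupp.sum_fintype _ _ (by simp)] at this
    refine le_trans (Finset.sum_le_sum fun i _ => ?_) this
    refine (MvPolynomial.totalDegree_pow _ _).trans ?_
    calc k i * (A.toMvPolynomial i).totalDegree ≤ k i * 1 :=
          Nat.mul_le_mul_left _ (A.toMvPolynomial_totalDegree_le i)
      _ = k i := mul_one _
  have heval : ∀ z : EuclideanSpace ℝ (Fin (d + 1)), MvPolynomial.eval (fun i => z i) p' =
      MvPolynomial.eval (fun i => (L.symm z) i) p := by
    intro z
    rw [MvPolynomial.eval_eq' (fun i => (L.symm z) i) p, hp', map_sum]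
    refine Finset.sum_congr rfl fun k _ => ?_
    simp only [map_mul, MvPolynomial.eval_C, map_prod, map_pow]
    congr 1
    refine Finset.prod_congr rfl fun i _ => ?_
    congr 1
    rw [Matrix.toMvPolynomial_eval_eq_apply, hL, ← OrthonormalBasis.sum_repr_symm]
    simp [Matrix.mulVec, dotProduct, hA, mul_comm]
  obtain ⟨h, h1, h2, h3⟩ := zonal_poly0 hd p'
  refine ⟨h, h1.trans hdeg, ?_, fun F => ?_⟩
  · rw [h2]
    have := heval (L (x : EuclideanSpace ℝ (Fin (d + 1))))
    rw [LinearIsometryEquiv.symm_apply_apply] at this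
    rw [← this]
    congr 1
    have e : L (x : EuclideanSpace ℝ (Fin (d + 1))) = EuclideanSpace.single 0 1 := by
      rw [← hb0, hL, OrthonormalBasis.repr_self]
    rw [e]
    have : (Pi.single (M := fun _ => ℝ) (0 : Fin (d + 1)) 1) =
      (fun i => (EuclideanSpace.single (0 : Fin (d + 1)) (1:ℝ)) i) := by
      ext i; simp [Pi.single_apply]
    rw [this]
  · rw [← h3 F]
    rw [← sph_rotate (fun v => F.eval (v 0) * MvPolynomial.eval (fun i => v i) p') L]
    congr 1; ext y
    rw [heval, LinearIsometryEquiv.symm_apply_apply, hL, OrthonormalBasis.repr_apply_apply, hb0]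
    rfl

/-- A zonal polynomial is a polynomial in the second variable. -/
lemma zonal_mv {d : ℕ} (x : Sph d) (F : Polynomial ℝ) :
    ∃ q : MvPolynomial (Fin (d + 1)) ℝ, q.totalDegree ≤ F.natDegree ∧ ∀ y : Sph d,
      MvPolynomial.eval (fun i => (y : EuclideanSpace ℝ (Fin (d + 1))) i) q = F.eval (ip x y) := by
  set ℓ : MvPolynomial (Fin (d + 1)) ℝ := ∑ i,
    MvPolynomial.C ((x : EuclideanSpace ℝ (Fin (d + 1))) i) * MvPolynomial.X i with hℓ
  have hdl : ℓ.totalDegree ≤ 1 := by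
    refine MvPolynomial.totalDegree_finsetSum_le fun i _ => ?_
    refine (MvPolynomial.totalDegree_mul _ _).trans ?_
    simp
  refine ⟨∑ l ∈ Finset.range (F.natDegree + 1), MvPolynomial.C (F.coeff l) * ℓ ^ l, ?_, ?_⟩
  · refine MvPolynomial.totalDegree_finsetSum_le fun l hl => ?_
    refine (MvPolynomial.totalDegree_mul _ _).trans ?_
    rw [MvPolynomial.totalDegree_C, zero_add]
    refine (MvPolynomial.totalDegree_pow _ _).trans ?_
    rw [Finset.mem_range] at hl
    calc l * ℓ.totalDegree ≤ l * 1 := Nat.mul_le_mul_left _ hdl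
      _ ≤ _ := by omega
  · intro y
    rw [Polynomial.eval_eq_sum_range, map_sum]
    refine Finset.sum_congr rfl fun l _ => ?_
    rw [map_mul, MvPolynomial.eval_C, map_pow, hℓ, map_sum, ip_eq_sum]
    simp

/-- Integrating a zonal polynomial gives a polynomial in the first variable. -/
lemma zonal_int_mv {d : ℕ} (ρ : Measure (Sph d)) [IsFiniteMeasure ρ] {f : Sph d → ℝ}
    (hf : Continuous f) (F : Polynomial ℝ) :
    ∃ q : MvPolynomial (Fin (d + 1)) ℝ, q.totalDegree ≤ F.natDegree ∧ ∀ x : Sph d,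
      ∫ y, f y * F.eval (ip x y) ∂ρ =
        MvPolynomial.eval (fun i => (x : EuclideanSpace ℝ (Fin (d + 1))) i) q := by
  refine ⟨∑ l ∈ Finset.range (F.natDegree + 1), ∑ s : Fin l → Fin (d + 1),
    MvPolynomial.C (F.coeff l * ∫ y, f y * ∏ j, (y : EuclideanSpace ℝ (Fin (d + 1))) (s j) ∂ρ) *
      ∏ j, MvPolynomial.X (s j), ?_, fun x => ?_⟩
  · refine MvPolynomial.totalDegree_finsetSum_le fun l hl => ?_
    refine MvPolynomial.totalDegree_finsetSum_le fun s _ => ?_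
    refine (MvPolynomial.totalDegree_mul _ _).trans ?_
    rw [MvPolynomial.totalDegree_C, zero_add]
    refine (MvPolynomial.totalDegree_finsetProd _ _).trans ?_
    rw [Finset.mem_range] at hl
    simp
    omega
  · have e : ∀ y : Sph d, f y * F.eval (ip x y) = ∑ l ∈ Finset.range (F.natDegree + 1),
        ∑ s : Fin l → Fin (d + 1), (F.coeff l * ∏ j, (x : EuclideanSpace ℝ (Fin (d + 1))) (s j)) *
          (f y * ∏ j, (y : EuclideanSpace ℝ (Fin (d + 1))) (s j)) := by
      intro y
      rw [Polynomial.eval_eq_sum_range, Finset.mul_sum]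
      refine Finset.sum_congr rfl fun l _ => ?_
      rw [ip_eq_sum, Fintype.sum_pow, Finset.mul_sum, Finset.mul_sum]
      refine Finset.sum_congr rfl fun s _ => ?_
      rw [Finset.prod_mul_distrib]; ring
    simp only [e]
    have hc : ∀ l (s : Fin l → Fin (d + 1)), Continuous (fun y : Sph d =>
        (F.coeff l * ∏ j, (x : EuclideanSpace ℝ (Fin (d + 1))) (s j)) *
          (f y * ∏ j, (y : EuclideanSpace ℝ (Fin (d + 1))) (s j))) := by
      intro l s; fun_prop
    rw [integral_finsetSum _ (fun l _ => integrable_finsetSum _ fun s _ =>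
      sph_integrable _ (hc l s)), map_sum]
    refine Finset.sum_congr rfl fun l _ => ?_
    rw [integral_finsetSum _ (fun s _ => sph_integrable _ (hc l s)), map_sum]
    refine Finset.sum_congr rfl fun s _ => ?_
    rw [integral_const_mul]
    simp
    ring

lemma zonal_int {d : ℕ} (hd : 3 ≤ d) (x : Sph d) (F : Polynomial ℝ) :
    ∫ y : Sph d, F.eval (ip x y) ∂(sphMeasure d) =
      cS d * wI ((d:ℝ) / 2 - 1) ((d:ℝ) / 2 - 1) (fun u => F.eval (1 - 2 * u)) := by
  obtain ⟨h, h1, h2, h3⟩ := zonal_poly hd x 1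
  have e : h = 1 := by
    rw [MvPolynomial.totalDegree_one, Nat.le_zero] at h1
    rw [Polynomial.eq_C_of_natDegree_eq_zero h1] at h2 ⊢
    simp at h2
    rw [h2]; simp
  have := h3 F
  rw [e] at this
  simpa using this

/-- The kernel `sphK` as a polynomial. -/
def KP (d N : ℕ) : Polynomial ℝ :=
  Polynomial.C (SJ ((d : ℝ) / 2 - 1) ((d : ℝ) / 2 - 1) N / cS d) *
    (qJ ((d : ℝ) / 2) ((d : ℝ) / 2 - 1) N).comp (Polynomial.C (1 / 2) * (1 - Polynomial.X))

lemma natDegree_comp_half (q : Polynomial ℝ) {N : ℕ} (hq : q.natDegree ≤ N) :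
    (q.comp (Polynomial.C (1 / 2) * (1 - Polynomial.X))).natDegree ≤ N := by
  refine Polynomial.natDegree_comp_le.trans ?_
  have : (Polynomial.C (1 / 2 : ℝ) * (1 - Polynomial.X)).natDegree ≤ 1 := by
    refine (Polynomial.natDegree_C_mul_le _ _).trans ((Polynomial.natDegree_sub_le _ _).trans ?_)
    simp
  calc _ ≤ q.natDegree * 1 := Nat.mul_le_mul_left _ this
    _ ≤ N := by omega

lemma eval_comp_half (q : Polynomial ℝ) (t : ℝ) :
    (q.comp (Polynomial.C (1 / 2) * (1 - Polynomial.X))).eval t = q.eval ((1 - t) / 2) := by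
  rw [Polynomial.eval_comp]
  congr 1
  simp
  ring

lemma KP_eval {d : ℕ} (hd : 3 ≤ d) (N : ℕ) (t : ℝ) : (KP d N).eval t = sphK d (N + 1) t := by
  rw [sphK_eq hd, KP, Polynomial.eval_mul, Polynomial.eval_C, eval_comp_half]

lemma KP_natDegree (d N : ℕ) : (KP d N).natDegree ≤ N :=
  (Polynomial.natDegree_C_mul_le _ _).trans (natDegree_comp_half _ (qJ_natDegree _ _ _))

lemma KP_eval_u (d N : ℕ) (u : ℝ) : (KP d N).eval (1 - 2 * u) =
    SJ ((d : ℝ) / 2 - 1) ((d : ℝ) / 2 - 1) N / cS d *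
      (qJ ((d : ℝ) / 2 - 1 + 1) ((d : ℝ) / 2 - 1) N).eval u := by
  rw [KP, Polynomial.eval_mul, Polynomial.eval_C, eval_comp_half]
  rw [show (1 - (1 - 2 * u)) / 2 = u by ring, show (d:ℝ) / 2 - 1 + 1 = d / 2 by ring]

lemma KP_reproduce {d : ℕ} (hd : 3 ≤ d) (N : ℕ) (x : Sph d) (p : MvPolynomial (Fin (d + 1)) ℝ)
    (hp : p.totalDegree ≤ N) :
    ∫ y : Sph d, (KP d N).eval (ip x y) *
        MvPolynomial.eval (fun i => (y : EuclideanSpace ℝ (Fin (d + 1))) i) p ∂(sphMeasure d) =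
      MvPolynomial.eval (fun i => (x : EuclideanSpace ℝ (Fin (d + 1))) i) p := by
  have hd' : (3:ℝ) ≤ d := by exact_mod_cast hd
  obtain ⟨h, h1, h2, h3⟩ := zonal_poly hd x p
  rw [h3, ← h2]
  have hr := qJ_repr (α := (d:ℝ) / 2 - 1) (β := (d:ℝ) / 2 - 1) (by linarith) (by linarith) N
    (h.comp (1 - Polynomial.C 2 * Polynomial.X)) (by
      refine Polynomial.natDegree_comp_le.trans ?_
      have : (1 - Polynomial.C (2:ℝ) * Polynomial.X).natDegree ≤ 1 := by
        refine (Polynomial.natDegree_sub_le _ _).trans ?_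
        rw [Polynomial.natDegree_one]
        exact max_le (by simp) ((Polynomial.natDegree_C_mul_le _ _).trans (by simp))
      calc _ ≤ h.natDegree * 1 := Nat.mul_le_mul_left _ this
        _ ≤ N := by omega)
  have e : ∀ u : ℝ, (h.comp (1 - Polynomial.C 2 * Polynomial.X)).eval u = h.eval (1 - 2 * u) := by
    intro u; rw [Polynomial.eval_comp]; simp
  simp only [e] at hr
  rw [mul_zero, sub_zero] at hr
  rw [← hr]
  have hc := cS_pos (show 1 ≤ d by omega)
  simp only [KP_eval_u]
  have e2 : (fun u => SJ ((d : ℝ) / 2 - 1) ((d : ℝ) / 2 - 1) N / cS d *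
      (qJ ((d : ℝ) / 2 - 1 + 1) ((d : ℝ) / 2 - 1) N).eval u * h.eval (1 - 2 * u)) =
      fun u => SJ ((d : ℝ) / 2 - 1) ((d : ℝ) / 2 - 1) N / cS d *
      ((qJ ((d : ℝ) / 2 - 1 + 1) ((d : ℝ) / 2 - 1) N).eval u * h.eval (1 - 2 * u)) := by
    ext u; ring
  rw [e2, wI_const_mul, ← mul_assoc, mul_div_cancel₀ _ hc.ne']

lemma KP_sq {d : ℕ} (hd : 3 ≤ d) (N : ℕ) (x : Sph d) :
    ∫ y : Sph d, ((KP d N).eval (ip x y)) ^ 2 ∂(sphMeasure d) =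
      SJ ((d : ℝ) / 2 - 1) ((d : ℝ) / 2 - 1) N / cS d := by
  have hd' : (3:ℝ) ≤ d := by exact_mod_cast hd
  have h := zonal_int hd x ((KP d N) ^ 2)
  simp only [Polynomial.eval_pow] at h
  rw [h]
  have hc := cS_pos (show 1 ≤ d by omega)
  simp only [KP_eval_u, mul_pow]
  rw [wI_const_mul, qJ_sq (by linarith) (by linarith)]
  have := SJ_pos (α := (d:ℝ) / 2 - 1) (β := (d:ℝ) / 2 - 1) (by linarith) (by linarith) N
  generalize SJ ((d : ℝ) / 2 - 1) ((d : ℝ) / 2 - 1) N = S at *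
  field_simp

/-- The Jacobi quotient as a polynomial. -/
def QP (d n : ℕ) (r : ℝ) : Polynomial ℝ :=
  (qJ ((d : ℝ) / 2 + r) ((d : ℝ) / 2 - 2) (d * n)).comp (Polynomial.C (1 / 2) * (1 - Polynomial.X))

lemma QP_natDegree (d n : ℕ) (r : ℝ) : (QP d n r).natDegree ≤ d * n :=
  natDegree_comp_half _ (qJ_natDegree _ _ _)

lemma QP_one (d n : ℕ) (r : ℝ) : (QP d n r).eval 1 = 1 := by
  rw [QP, eval_comp_half]
  simp [qJ_eval_zero]

lemma PhiTilde_eq {d n : ℕ} (hd : 3 ≤ d) (hn : 0 < n) {r : ℝ} (hr : 0 ≤ r) (t : ℝ) :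
    PhiTilde d n r t = (KP d ((d + 2) * n - 1)).eval t * (QP d n r).eval t := by
  have : (d + 2) * n = (d + 2) * n - 1 + 1 := (Nat.succ_pred_eq_of_pos (by positivity)).symm
  rw [PhiTilde, jacobi_quot_eq hd hr, QP, eval_comp_half, KP_eval hd, ← this]

lemma QP_sq {d n : ℕ} (hd : 3 ≤ d) {r : ℝ} (hr : 0 ≤ r) (x : Sph d) :
    ∫ y : Sph d, ((QP d n r).eval (ip x y)) ^ 2 ∂(sphMeasure d) ≤
      cS d * (9 * 4 ^ (⌊r⌋₊ + 1) / SJ ((d : ℝ) / 2 - 1) ((d : ℝ) / 2 - 2) (d * n)) := by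
  have hd' : (3:ℝ) ≤ d := by exact_mod_cast hd
  have h := zonal_int hd x ((QP d n r) ^ 2)
  simp only [Polynomial.eval_pow] at h
  rw [h]
  have hc := cS_pos (show 1 ≤ d by omega)
  refine mul_le_mul_of_nonneg_left ?_ hc.le
  have e : ∀ u : ℝ, (QP d n r).eval (1 - 2 * u) =
      (qJ ((d : ℝ) / 2 + r) ((d : ℝ) / 2 - 2) (d * n)).eval u := by
    intro u
    rw [QP, eval_comp_half, show (1 - (1 - 2 * u)) / 2 = u by ring]
  simp only [e]
  set θ : ℝ := r - ⌊r⌋₊ with hθ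
  have h0 : 0 ≤ θ := sub_nonneg.2 (Nat.floor_le hr)
  have h1 : θ < 1 := by have := Nat.lt_floor_add_one r; linarith
  have hb := qJ_norm_bound (b := (d:ℝ) / 2 - 1 + θ) (β := (d:ℝ) / 2 - 2) (θ := θ) (by linarith)
    (by linarith) h0 h1 (by linarith) ⌊r⌋₊ (d * n)
  rw [show (d:ℝ) / 2 - 1 + θ - θ = d / 2 - 1 by ring,
    show (d:ℝ) / 2 - 1 + θ + ⌊r⌋₊ + 1 = d / 2 + r by rw [hθ]; ring] at hb
  refine le_trans ?_ hb
  have e2 : (d:ℝ) / 2 - 1 = (d / 2 - 2) + 1 := by ring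
  conv_lhs => enter [2]; rw [e2]
  rw [wI_shift_right]
  refine wI_mono (by linarith) (by linarith) (by fun_prop) (by fun_prop) fun u hu => ?_
  have := sq_nonneg ((qJ ((d : ℝ) / 2 + r) ((d : ℝ) / 2 - 2) (d * n)).eval u)
  nlinarith [hu.1]

lemma totalVar_integral {d : ℕ} (ν : SignedMeasure (Sph d)) {g : Sph d → ℝ} (hg : Continuous g) :
    ∫ y, g y ∂ν.totalVariation = (∫ y, g y ∂ν.toJordanDecomposition.posPart) +
      ∫ y, g y ∂ν.toJordanDecomposition.negPart := by
  rw [SignedMeasure.totalVariation]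
  exact integral_add_measure (sph_integrable _ hg) (sph_integrable _ hg)

lemma sInt_abs_le {d : ℕ} (ν : SignedMeasure (Sph d)) {g : Sph d → ℝ} (hg : Continuous g) :
    |sInt ν g| ≤ ∫ y, |g y| ∂ν.totalVariation := by
  rw [totalVar_integral ν (g := fun y => |g y|) (continuous_abs.comp hg), sInt]
  refine (abs_sub _ _).trans ?_
  exact add_le_add (abs_integral_le_integral_abs) (abs_integral_le_integral_abs)

lemma sInt_sub {d : ℕ} (ν : SignedMeasure (Sph d)) {g h : Sph d → ℝ} (hg : Continuous g)
    (hh : Continuous h) : sInt ν (fun y => g y - h y) = sInt ν g - sInt ν h := by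
  unfold sInt
  rw [integral_sub (sph_integrable _ hg) (sph_integrable _ hh),
    integral_sub (sph_integrable _ hg) (sph_integrable _ hh)]
  ring

lemma totalVar_finite {d : ℕ} (ν : SignedMeasure (Sph d)) : IsFiniteMeasure ν.totalVariation := by
  unfold SignedMeasure.totalVariation; infer_instance

/-- The MZ constant of a quadrature measure is at least one. -/
lemma mz_one_le {d : ℕ} {m : ℝ} (hm : 0 < m) {ν : SignedMeasure (Sph d)} {c : ℝ}
    (hq : IsQuadrature d m ν) (hmz : IsMZ d m ν c) : 1 ≤ c := by
  have h1 := hq (fun _ => 1) ⟨1, by simpa using hm, by simp⟩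
  have h2 := hmz (fun _ => 1) ⟨1, by simpa using hm, by simp⟩
  have h3 := sInt_abs_le ν (g := fun _ => (1:ℝ)) continuous_const
  rw [h1] at h3
  simp only [one_pow, abs_one] at h2 h3
  have h4 : ∫ _ : Sph d, (1:ℝ) ∂sphMeasure d = 1 := by simp
  rw [h4] at h2 h3
  rw [abs_one] at h3
  linarith

section generic

variable {d n : ℕ} {r : ℝ} {R : Polynomial ℝ}

/-- The kernel polynomial. -/
def FP (d n : ℕ) (r : ℝ) (R : Polynomial ℝ) : Polynomial ℝ :=
  KP d ((d + 2) * n - 1) * (QP d n r * R)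

/-- The kernel operator with an extra polynomial factor. -/
def opR (d n : ℕ) (r : ℝ) (R : Polynomial ℝ) (ν : SignedMeasure (Sph d)) (f : Sph d → ℝ)
    (x : Sph d) : ℝ :=
  sInt ν (fun y => f y * (FP d n r R).eval (ip x y))

lemma FP_cont (F : Polynomial ℝ) (x : Sph d) : Continuous (fun y : Sph d => F.eval (ip x y)) :=
  F.continuous.comp (ip_continuous x)

lemma opR_reproduce (hd : 3 ≤ d) (hn : 0 < n) (hR : R.natDegree ≤ n)
    (hR1 : R.eval 1 = 1) {ν : SignedMeasure (Sph d)}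
    (hq : IsQuadrature d ((2 * (d + 2) * n : ℕ) : ℝ) ν)
    {g : Sph d → ℝ} (hg : IsSphPoly d n g) (x : Sph d) : opR d n r R ν g x = g x := by
  obtain ⟨p, hp, hpg⟩ := hg
  have hp' : p.totalDegree < n := by exact_mod_cast hp
  obtain ⟨q, hqd, hqe⟩ := zonal_mv x (QP d n r * R)
  obtain ⟨k, hkd, hke⟩ := zonal_mv x (KP d ((d + 2) * n - 1))
  have h1 : (QP d n r * R).natDegree ≤ d * n + n :=
    Polynomial.natDegree_mul_le.trans (add_le_add (QP_natDegree _ _ _) hR)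
  have h2 := KP_natDegree d ((d + 2) * n - 1)
  have h3 : (q * p).totalDegree ≤ (d + 2) * n - 1 := by
    refine (MvPolynomial.totalDegree_mul _ _).trans ?_
    have : (d + 2) * n = d * n + n + n := by ring
    omega
  have h4 : (k * (q * p)).totalDegree < 2 * (d + 2) * n := by
    refine (MvPolynomial.totalDegree_mul _ _).trans_lt ?_
    have e : 2 * (d + 2) * n = 2 * ((d + 2) * n) := by ring
    have : 0 < (d + 2) * n := by positivity
    omega
  have e : ∀ y : Sph d, g y * (FP d n r R).eval (ip x y) = (KP d ((d + 2) * n - 1)).eval (ip x y) *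
      MvPolynomial.eval (fun i => (y : EuclideanSpace ℝ (Fin (d + 1))) i) (q * p) := by
    intro y
    rw [FP, Polynomial.eval_mul, map_mul, hqe, hpg]; ring
  rw [opR, hq _ ⟨k * (q * p), by exact_mod_cast h4, fun y => by rw [e, map_mul _ k, hke]⟩]
  simp only [e]
  rw [KP_reproduce hd _ x _ h3, map_mul, hqe, hpg, ip_self, Polynomial.eval_mul, QP_one, hR1]
  ring

lemma opR_poly (hd : 3 ≤ d) (hn : 0 < n) (hR : R.natDegree ≤ n) (ν : SignedMeasure (Sph d))
    {f : Sph d → ℝ} (hf : Continuous f) :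
    IsSphPoly d ((2 * (d + 2) * n : ℕ) : ℝ) (opR d n r R ν f) := by
  obtain ⟨q1, h1, e1⟩ := zonal_int_mv ν.toJordanDecomposition.posPart hf (FP d n r R)
  obtain ⟨q2, h2, e2⟩ := zonal_int_mv ν.toJordanDecomposition.negPart hf (FP d n r R)
  refine ⟨q1 - q2, ?_, fun x => ?_⟩
  · have h3 : (FP d n r R).natDegree ≤ ((d + 2) * n - 1) + (d * n + n) :=
      Polynomial.natDegree_mul_le.trans (add_le_add (KP_natDegree _ _)
        (Polynomial.natDegree_mul_le.trans (add_le_add (QP_natDegree _ _ _) hR)))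
    have h4 := MvPolynomial.totalDegree_sub q1 q2
    have e : 2 * (d + 2) * n = 2 * (d * n) + 4 * n := by ring
    have e' : (d + 2) * n = d * n + 2 * n := by ring
    have : (q1 - q2).totalDegree < 2 * (d + 2) * n := by omega
    exact_mod_cast this
  · rw [opR, sInt, e1, e2, map_sub]

/-- The constant. -/
def CC (r : ℝ) : ℝ := 3 * 2 ^ (⌊r⌋₊ + 1) * Real.exp 1

lemma CC_pos (r : ℝ) : 0 < CC r := by unfold CC; positivity

lemma CC_sq (r : ℝ) : CC r ^ 2 = 9 * 4 ^ (⌊r⌋₊ + 1) * Real.exp 2 := by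
  unfold CC
  rw [mul_pow, mul_pow, ← pow_mul, mul_comm (⌊r⌋₊ + 1) 2, pow_mul, ← Real.exp_nat_mul]
  norm_num

lemma FP_bound (hd : 3 ≤ d) (hn : 0 < n) (hr : 0 ≤ r)
    (hRb : ∀ t, |t| ≤ 1 → |R.eval t| ≤ 1) {ν : SignedMeasure (Sph d)} {c : ℝ} (hc : 0 ≤ c)
    (hmz : IsMZ d ((2 * (d + 2) * n : ℕ) : ℝ) ν c) (x : Sph d) :
    ∫ y, |(FP d n r R).eval (ip x y)| ∂ν.totalVariation ≤ c * CC r := by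
  have := totalVar_finite ν
  have hd' : (3:ℝ) ≤ d := by exact_mod_cast hd
  set S := SJ ((d : ℝ) / 2 - 1) ((d : ℝ) / 2 - 1) ((d + 2) * n - 1) with hS
  set T := SJ ((d : ℝ) / 2 - 1) ((d : ℝ) / 2 - 2) (d * n) with hT
  have hSp : 0 < S := SJ_pos (by linarith) (by linarith) _
  have hTp : 0 < T := SJ_pos (by linarith) (by linarith) _
  have hST : S ≤ Real.exp 2 * T := SJ_compare hd hn
  have hcS := cS_pos (show 1 ≤ d by omega)
  have hC := CC_pos r
  set K := fun y : Sph d => (KP d ((d + 2) * n - 1)).eval (ip x y) with hK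
  set Q := fun y : Sph d => (QP d n r).eval (ip x y) with hQ
  have hKc : Continuous K := FP_cont _ x
  have hQc : Continuous Q := FP_cont _ x
  have hdn : ((2 * (d + 2) * n : ℕ) : ℝ) / 2 = (((d + 2) * n : ℕ) : ℝ) := by push_cast; ring
  have hpos : 0 < (d + 2) * n := by positivity
  have bK : ∫ y, K y ^ 2 ∂ν.totalVariation ≤ c * (S / cS d) := by
    obtain ⟨k, hkd, hke⟩ := zonal_mv x (KP d ((d + 2) * n - 1))
    have h2 := KP_natDegree d ((d + 2) * n - 1)
    have := hmz K ⟨k, by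
      rw [hdn]
      have : k.totalDegree < (d + 2) * n := by omega
      exact_mod_cast this, fun y => (hke y).symm⟩
    rwa [KP_sq hd] at this
  have bQ : ∫ y, Q y ^ 2 ∂ν.totalVariation ≤ c * (cS d * (9 * 4 ^ (⌊r⌋₊ + 1) / T)) := by
    obtain ⟨k, hkd, hke⟩ := zonal_mv x (QP d n r)
    have h2 := QP_natDegree d n r
    have := hmz Q ⟨k, by
      rw [hdn]
      have e' : (d + 2) * n = d * n + 2 * n := by ring
      have : k.totalDegree < (d + 2) * n := by omega
      exact_mod_cast this, fun y => (hke y).symm⟩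
    exact this.trans (mul_le_mul_of_nonneg_left (QP_sq hd hr x) hc)
  set t := cS d * CC r / S with ht
  have htp : 0 < t := by positivity
  have hpt : ∀ y, |(FP d n r R).eval (ip x y)| ≤ t / 2 * K y ^ 2 + 1 / (2 * t) * Q y ^ 2 := by
    intro y
    rw [FP, Polynomial.eval_mul, Polynomial.eval_mul, abs_mul, abs_mul]
    have h1 := hRb _ (ip_abs_le x y)
    have h2 : |K y| * |Q y| ≤ t / 2 * K y ^ 2 + 1 / (2 * t) * Q y ^ 2 := by
      have h3 := sq_nonneg (t * |K y| - |Q y|)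
      rw [← sq_abs (K y), ← sq_abs (Q y)]
      have : t / 2 * |K y| ^ 2 + 1 / (2 * t) * |Q y| ^ 2 - |K y| * |Q y| =
        (t * |K y| - |Q y|) ^ 2 / (2 * t) := by field_simp; ring
      have : 0 ≤ (t * |K y| - |Q y|) ^ 2 / (2 * t) := by positivity
      linarith
    refine le_trans ?_ h2
    refine mul_le_mul_of_nonneg_left ?_ (abs_nonneg _)
    exact mul_le_of_le_one_right (abs_nonneg _) h1
  calc ∫ y, |(FP d n r R).eval (ip x y)| ∂ν.totalVariation
      ≤ ∫ y, (t / 2 * K y ^ 2 + 1 / (2 * t) * Q y ^ 2) ∂ν.totalVariation :=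
        integral_mono (sph_integrable _ (continuous_abs.comp (FP_cont _ x)))
          (sph_integrable _ (by fun_prop)) hpt
    _ = t / 2 * ∫ y, K y ^ 2 ∂ν.totalVariation + 1 / (2 * t) * ∫ y, Q y ^ 2 ∂ν.totalVariation := by
        rw [integral_add (sph_integrable _ (by fun_prop)) (sph_integrable _ (by fun_prop)),
          integral_const_mul, integral_const_mul]
    _ ≤ t / 2 * (c * (S / cS d)) + 1 / (2 * t) * (c * (cS d * (9 * 4 ^ (⌊r⌋₊ + 1) / T))) := by
        gcongr
    _ ≤ c * CC r := by
        have e1 : t / 2 * (c * (S / cS d)) = c * CC r / 2 := by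
          rw [ht]; field_simp
        have e2 : 1 / (2 * t) * (c * (cS d * (9 * 4 ^ (⌊r⌋₊ + 1) / T))) =
            c / 2 * (S * (9 * 4 ^ (⌊r⌋₊ + 1)) / (CC r * T)) := by
          rw [ht]; field_simp
        have e3 : S * (9 * 4 ^ (⌊r⌋₊ + 1)) / (CC r * T) ≤ CC r := by
          rw [div_le_iff₀ (by positivity)]
          have : CC r * (CC r * T) = (Real.exp 2 * T) * (9 * 4 ^ (⌊r⌋₊ + 1)) := by
            rw [← mul_assoc, ← sq, CC_sq]; ring
          rw [this]
          exact mul_le_mul_of_nonneg_right hST (by positivity)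
        rw [e1, e2]
        nlinarith [mul_le_mul_of_nonneg_left e3 (show 0 ≤ c / 2 by linarith)]

lemma IsSphPoly.cont {m : ℝ} {g : Sph d → ℝ} (hg : IsSphPoly d m g) : Continuous g := by
  obtain ⟨p, -, h⟩ := hg
  rw [funext h]
  exact sph_eval_continuous p

lemma supNorm_bdd {g : Sph d → ℝ} (hg : Continuous g) (y : Sph d) : |g y| ≤ supNorm g := by
  refine le_csSup ?_ ⟨y, rfl⟩
  exact (isCompact_range (continuous_abs.comp hg)).bddAbove

lemma opR_main (hd : 3 ≤ d) (hn : 0 < n) (hr : 0 ≤ r) (hR : R.natDegree ≤ n)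
    (hR1 : R.eval 1 = 1)
    (hRb : ∀ t, |t| ≤ 1 → |R.eval t| ≤ 1) {ν : SignedMeasure (Sph d)} {c : ℝ}
    {f : Sph d → ℝ} (hf : Continuous f)
    (hq : IsQuadrature d ((2 * (d + 2) * n : ℕ) : ℝ) ν)
    (hmz : IsMZ d ((2 * (d + 2) * n : ℕ) : ℝ) ν c) :
    bestApprox d ((2 * (d + 2) * n : ℕ) : ℝ) f ≤ supNorm (fun y => f y - opR d n r R ν f y) ∧
      supNorm (fun y => f y - opR d n r R ν f y) ≤
        (1 + CC r) * (d : ℝ) ^ ((1 : ℝ)/6) * c * bestApprox d (n : ℝ) f := by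
  have hpos : (0:ℝ) < ((2 * (d + 2) * n : ℕ) : ℝ) := by
    have : 0 < 2 * (d + 2) * n := by positivity
    exact_mod_cast this
  have hc1 := mz_one_le hpos hq hmz
  have hC := CC_pos r
  have hd1 : (1:ℝ) ≤ (d : ℝ) ^ ((1 : ℝ)/6) :=
    Real.one_le_rpow (by exact_mod_cast (by omega : 1 ≤ d)) (by norm_num)
  have hpoly : IsSphPoly d ((2 * (d + 2) * n : ℕ) : ℝ) (opR d n r R ν f) := opR_poly hd hn hR ν hf
  obtain ⟨y0⟩ : Nonempty (Sph d) :=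
    (NormedSpace.sphere_nonempty (E := EuclideanSpace ℝ (Fin (d + 1)))).2 zero_le_one |>.to_subtype
  constructor
  · refine csInf_le ⟨0, ?_⟩ ⟨_, hpoly, fun y => supNorm_bdd (hf.sub hpoly.cont) y⟩
    rintro t ⟨g, -, h⟩
    exact (abs_nonneg _).trans (h y0)
  · have hM : 0 < (1 + CC r) * (d : ℝ) ^ ((1 : ℝ)/6) * c := by positivity
    rw [← div_le_iff₀' hM]
    refine le_csInf ⟨supNorm f, fun _ => 0, ⟨0, by simpa using hn, by simp⟩, fun y => by
      simpa using supNorm_bdd hf y⟩ ?_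
    rintro t ⟨g, hg, h⟩
    have ht : 0 ≤ t := (abs_nonneg _).trans (h y0)
    rw [div_le_iff₀' hM]
    refine Real.sSup_le ?_ (by positivity)
    rintro _ ⟨x, rfl⟩
    have hgc := hg.cont
    have hF : Continuous (fun y : Sph d => (FP d n r R).eval (ip x y)) := FP_cont _ x
    have e : f x - opR d n r R ν f x = (f x - g x) -
        sInt ν (fun y => (f y - g y) * (FP d n r R).eval (ip x y)) := by
      have h1 := opR_reproduce (r := r) hd hn hR hR1 hq hg x
      have h2 : sInt ν (fun y => (f y - g y) * (FP d n r R).eval (ip x y)) =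
          sInt ν (fun y => f y * (FP d n r R).eval (ip x y)) -
            sInt ν (fun y => g y * (FP d n r R).eval (ip x y)) := by
        simp only [sub_mul]
        exact sInt_sub ν (hf.mul hF) (hgc.mul hF)
      rw [h2]
      have h3 : sInt ν (fun y => g y * (FP d n r R).eval (ip x y)) = g x := h1
      rw [h3, opR]; ring
    have hb : |sInt ν (fun y => (f y - g y) * (FP d n r R).eval (ip x y))| ≤ t * (c * CC r) := by
      have := totalVar_finite ν
      refine (sInt_abs_le ν ((hf.sub hgc).mul hF)).trans ?_
      calc _ ≤ ∫ y, t * |(FP d n r R).eval (ip x y)| ∂ν.totalVariation := by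
            refine integral_mono (sph_integrable _ (continuous_abs.comp ((hf.sub hgc).mul hF)))
              (sph_integrable _ (continuous_const.mul (continuous_abs.comp hF))) fun y => ?_
            change |(f y - g y) * (FP d n r R).eval (ip x y)| ≤ t * |(FP d n r R).eval (ip x y)|
            rw [abs_mul]
            exact mul_le_mul_of_nonneg_right (h y) (abs_nonneg _)
        _ = t * ∫ y, |(FP d n r R).eval (ip x y)| ∂ν.totalVariation := integral_const_mul _ _
        _ ≤ _ := mul_le_mul_of_nonneg_left (FP_bound hd hn hr hRb (by linarith) hmz x) ht
    simp only
    rw [e]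
    refine (abs_sub _ _).trans ((add_le_add (h x) hb).trans ?_)
    calc t + t * (c * CC r) ≤ c * t + t * (c * CC r) := by nlinarith
      _ = 1 * ((1 + CC r) * c * t) := by ring
      _ ≤ (d : ℝ) ^ ((1 : ℝ)/6) * ((1 + CC r) * c * t) :=
          mul_le_mul_of_nonneg_right hd1 (by positivity)
      _ = _ := by ring

end generic

lemma sigmaTilde_eq {d n : ℕ} (hd : 3 ≤ d) (hn : 0 < n) {r : ℝ} (hr : 0 ≤ r)
    (ν : SignedMeasure (Sph d)) (f : Sph d → ℝ) (x : Sph d) :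
    sigmaTildeOp d n r ν f x = opR d n r 1 ν f x := by
  simp only [sigmaTildeOp, opR, PhiTilde_eq hd hn hr, FP, Polynomial.eval_mul, mul_one]

lemma sigma_eq {d n : ℕ} (hd : 3 ≤ d) (hn : 0 < n) {r : ℝ} (hr : 0 ≤ r)
    (ν : SignedMeasure (Sph d)) (f : Sph d → ℝ) (x : Sph d) :
    sigmaOp d n r ν f x =
      opR d n r ((Polynomial.C (1 / 2) * (1 + Polynomial.X)) ^ n) ν f x := by
  unfold sigmaOp opR
  congr 1; ext y
  rw [Phi, PhiTilde_eq hd hn hr, FP, Polynomial.eval_mul, Polynomial.eval_mul, Polynomial.eval_pow,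
    Polynomial.eval_mul, Polynomial.eval_C, Polynomial.eval_add, Polynomial.eval_one,
    Polynomial.eval_X, mul_assoc, show (1 / 2 : ℝ) * (1 + ip x y) = (1 + ip x y) / 2 by ring]

/-- Near-best approximation by `σ̃_{d;n,r}(ν,·)` and `σ_{d;n,r}(ν,·)` for
Marcinkiewicz–Zygmund quadrature measures, with constant depending on `r` only. -/
theorem sigmaOp_near_best :
    ∀ r : ℝ, 0 ≤ r → ∃ C : ℝ, 0 < C ∧
      ∀ (d n : ℕ) (f : Sph d → ℝ) (ν : SignedMeasure (Sph d)) (c : ℝ),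
        3 ≤ d → 2 * (d + 1) ≤ n → Continuous f →
        IsQuadrature d ((2 * (d + 2) * n : ℕ) : ℝ) ν →
        IsMZ d ((2 * (d + 2) * n : ℕ) : ℝ) ν c →
        (bestApprox d ((2 * (d + 2) * n : ℕ) : ℝ) f ≤
            supNorm (fun y => f y - sigmaTildeOp d n r ν f y) ∧
          supNorm (fun y => f y - sigmaTildeOp d n r ν f y) ≤
            C * (d : ℝ) ^ ((1 : ℝ)/6) * c * bestApprox d (n : ℝ) f) ∧
        (bestApprox d ((2 * (d + 2) * n : ℕ) : ℝ) f ≤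
            supNorm (fun y => f y - sigmaOp d n r ν f y) ∧
          supNorm (fun y => f y - sigmaOp d n r ν f y) ≤
            C * (d : ℝ) ^ ((1 : ℝ)/6) * c * bestApprox d (n : ℝ) f) := by
  intro r hr
  refine ⟨1 + CC r, by have := CC_pos r; linarith, ?_⟩
  intro d n f ν c hd hn hf hq hmz
  have hn0 : 0 < n := by omega
  simp only [sigmaTilde_eq hd hn0 hr, sigma_eq hd hn0 hr]
  refine ⟨opR_main hd hn0 hr (by simp) (by simp) (by simp) hf hq hmz,
    opR_main hd hn0 hr ?_ ?_ ?_ hf hq hmz⟩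
  · refine Polynomial.natDegree_pow_le.trans ?_
    have : (Polynomial.C (1 / 2 : ℝ) * (1 + Polynomial.X)).natDegree ≤ 1 := by
      refine (Polynomial.natDegree_C_mul_le _ _).trans ((Polynomial.natDegree_add_le _ _).trans ?_)
      simp
    calc _ ≤ n * 1 := Nat.mul_le_mul_left _ this
      _ = n := mul_one n
  · simp only [Polynomial.eval_pow, Polynomial.eval_mul, Polynomial.eval_C, Polynomial.eval_add,
      Polynomial.eval_one, Polynomial.eval_X]
    norm_num
  · intro t ht
    simp only [Polynomial.eval_pow, Polynomial.eval_mul, Polynomial.eval_C, Polynomial.eval_add,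
      Polynomial.eval_one, Polynomial.eval_X]
    rw [abs_pow]
    refine pow_le_one₀ (abs_nonneg _) ?_
    rw [abs_le] at ht ⊢
    constructor <;> linarith [ht.1, ht.2]

end
end
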